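/- (Exact multiplicity.) Let g ∈ C¹([0,∞),[0,∞)) satisfy (g₊), (g_s), (g₀) and (g_∞). Let h ∈ L¹([a,b]) satisfy condition (h*) with m positivity intervals, and suppose in addition that for every i ∈ {1,…,m}: h⁺ ∈ BV(I_i⁺), h⁺(t) = h⁺(σ_i + τ_i − t) for a.e. t ∈ [σ_i, τ_i], and h⁺ is non-decreasing on [σ_i, ζ_i], where ζ_i := (σ_i + τ_i)/2. Then there exists μ** > 0 such that for every μ > μ** the Dirichlet problem (D_μ): u'' + (h⁺(t) − μ h⁻(t)) g(u) = 0, u(a) = 0 = u(b), has exactly 2^m − 1 positive solutions, and each of these solutions is non-degenerate. -/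

import Mathlib

open Set MeasureTheory Filter Topology

/-- Carathéodory solution of `u'' + F(t, u) = 0` on `[a,b]`. -/
def IsCaraSol (a b : ℝ) (F : ℝ → ℝ → ℝ) (u u' : ℝ → ℝ) : Prop :=
  (∀ t ∈ Set.Icc a b, HasDerivAt u (u' t) t) ∧
  IntervalIntegrable (fun s => F s (u s)) MeasureTheory.volume a b ∧
  ∀ t ∈ Set.Icc a b, u' t = u' a - ∫ s in a..t, F s (u s)

/-- The positive part `h⁺ = |h|/2 + h/2` of a weight function. -/
noncomputable def posW (h : ℝ → ℝ) : ℝ → ℝ := fun t => |h t| / 2 + h t / 2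

/-- The negative part `h⁻ = |h|/2 - h/2` of a weight function. -/
noncomputable def negW (h : ℝ → ℝ) : ℝ → ℝ := fun t => |h t| / 2 - h t / 2

/-- A positive solution `u` of `(D_μ)` is non-degenerate: the only Carathéodory
solution of the linearized Dirichlet problem
`w'' + (h⁺ - μ h⁻) g'(u) w = 0`, `w(a) = 0 = w(b)`, is `w ≡ 0`. -/
def NonDegenerate (a b : ℝ) (h : ℝ → ℝ) (μ : ℝ) (g u : ℝ → ℝ) : Prop :=
  ∀ w w₁ : ℝ → ℝ,
    IsCaraSol a b (fun s x => (posW h s - μ * negW h s) * deriv g (u s) * x) w w₁ →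
    w a = 0 → w b = 0 → ∀ t ∈ Set.Icc a b, w t = 0



theorem wexp {α β : ℝ} {k : ℝ → ℝ} (hk : IntervalIntegrable k volume α β)
    (hk0 : ∀ t, 0 ≤ k t) {t : ℝ} (ht : t ∈ Icc α β) :
    2 * ∫ s in α..t, k s * Real.exp (2 * ∫ r in α..s, k r) ≤ Real.exp (2 * ∫ r in α..t, k r) := by
  have hkt : IntervalIntegrable k volume α t := hk.mono_set (by
    rw [uIcc_of_le ht.1, uIcc_of_le (ht.1.trans ht.2)]; exact Icc_subset_Icc le_rfl ht.2)
  set F : ℝ → ℝ := fun s => Real.exp (2 * ∫ r in α..s, k r) with hF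
  have hmono : MonotoneOn F (uIcc α t) := by
    intro x hx y hy hxy
    rw [uIcc_of_le ht.1] at hx hy
    simp only [hF]
    gcongr
    have h1 : IntervalIntegrable k volume α x := hkt.mono_set (by
      rw [uIcc_of_le hx.1, uIcc_of_le ht.1]; exact Icc_subset_Icc le_rfl hx.2)
    have h2 : IntervalIntegrable k volume x y := hkt.mono_set (by
      rw [uIcc_of_le hxy, uIcc_of_le ht.1]; exact Icc_subset_Icc hx.1 hy.2)
    rw [← intervalIntegral.integral_add_adjacent_intervals h1 h2]
    have := intervalIntegral.integral_nonneg (μ := volume) (f := k) hxy (fun u _ => hk0 u)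
    linarith
  have h := hmono.intervalIntegral_deriv_mem_uIcc
  have hFa : F α = 1 := by simp [hF]
  have hFt : F α ≤ F t := hmono left_mem_uIcc right_mem_uIcc ht.1
  rw [uIcc_of_le (by linarith)] at h
  have e : ∫ x in α..t, deriv F x = 2 * ∫ s in α..t, k s * F s := by
    rw [← intervalIntegral.integral_const_mul]
    apply intervalIntegral.integral_congr_ae
    filter_upwards [hkt.ae_hasDerivAt_integral] with x hx hx'
    have := ((hx (uIoc_subset_uIcc hx') α left_mem_uIcc).const_mul 2).exp
    simp only [hF]
    rw [this.deriv]; ring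
  rw [← e]
  linarith [h.2]

theorem ii_sub {f : ℝ → ℝ} {α β x y : ℝ} (hf : IntervalIntegrable f volume α β)
    (hx : x ∈ Icc α β) (hy : y ∈ Icc α β) : IntervalIntegrable f volume x y := by
  apply hf.mono_set
  rw [uIcc_of_le (hx.1.trans hx.2)]
  exact uIcc_subset_Icc hx hy

theorem ii_add {f : ℝ → ℝ} {α β x y : ℝ} (hf : IntervalIntegrable f volume α β)
    (hx : x ∈ Icc α β) (hy : y ∈ Icc α β) :
    (∫ s in α..x, f s) + ∫ s in x..y, f s = ∫ s in α..y, f s :=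
  intervalIntegral.integral_add_adjacent_intervals
    (ii_sub hf (left_mem_Icc.2 (hx.1.trans hx.2)) hx) (ii_sub hf hx hy)

/-- Gronwall inequality with integrable kernel. -/
theorem gron {α β : ℝ} {k z : ℝ → ℝ} (hk : IntervalIntegrable k volume α β)
    (hk0 : ∀ t, 0 ≤ k t) (hz : ContinuousOn z (Icc α β)) {A : ℝ} (hA : 0 ≤ A)
    (h : ∀ t ∈ Icc α β, z t ≤ A + ∫ s in α..t, k s * z s) :
    ∀ t ∈ Icc α β, z t ≤ 2 * A * Real.exp (2 * ∫ s in α..t, k s) := by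
  rcases lt_or_ge β α with hlt | hαβ
  · intro t ht; exact absurd (ht.1.trans ht.2) (not_le.2 hlt)
  set E : ℝ → ℝ := fun t => Real.exp (2 * ∫ s in α..t, k s) with hE
  have hEc : ContinuousOn E (Icc α β) := by
    have := intervalIntegral.continuousOn_primitive_interval' hk left_mem_uIcc
    rw [uIcc_of_le hαβ] at this
    exact Real.continuous_exp.comp_continuousOn (continuousOn_const.mul this)
  have hEp : ∀ t, 0 < E t := fun t => Real.exp_pos _
  obtain ⟨t0, ht0, hmax⟩ := isCompact_Icc.exists_isMaxOn (nonempty_Icc.2 hαβ)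
    (hz.div hEc (fun t _ => (hEp t).ne'))
  set N := z t0 / E t0 with hN
  have hle : ∀ t ∈ Icc α β, z t ≤ N * E t := fun t ht => by
    have : z t / E t ≤ z t0 / E t0 := hmax ht
    exact (div_le_iff₀ (hEp t)).1 this
  have hE1 : 1 ≤ E t0 := by
    simp only [hE]
    apply Real.one_le_exp
    have := intervalIntegral.integral_nonneg (μ := volume) (f := k) ht0.1 (fun u _ => hk0 u)
    linarith
  have hNA : N ≤ 2 * A := by
    by_contra hcon
    push Not at hcon
    have hN0 : 0 < N := by linarith
    have h1 := h t0 ht0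
    have ht0i := ii_sub hk (left_mem_Icc.2 hαβ) ht0
    have hsub : uIcc α t0 ⊆ Icc α β := uIcc_subset_Icc (left_mem_Icc.2 hαβ) ht0
    have h2 : ∫ s in α..t0, k s * z s ≤ ∫ s in α..t0, N * (k s * E s) := by
      apply intervalIntegral.integral_mono_on ht0.1
      · exact ht0i.mul_continuousOn (hz.mono hsub)
      · exact (ht0i.mul_continuousOn (hEc.mono hsub)).const_mul N
      · intro s hs
        have := mul_le_mul_of_nonneg_left (hle s ⟨hs.1, hs.2.trans ht0.2⟩) (hk0 s)
        linarith
    rw [intervalIntegral.integral_const_mul] at h2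
    have h3 := wexp hk hk0 ht0
    have h4 : N * (2 * ∫ s in α..t0, k s * E s) ≤ N * E t0 := mul_le_mul_of_nonneg_left h3 hN0.le
    have h5 : z t0 = N * E t0 := by rw [hN]; field_simp [(hEp t0).ne']
    have h6 : 2 * A * 1 < N * E t0 := by nlinarith
    linarith
  intro t ht
  exact (hle t ht).trans (mul_le_mul_of_nonneg_right hNA (hEp t).le)

theorem prod_parts {α β : ℝ} {f g F G : ℝ → ℝ} (hαβ : α ≤ β)
    (hf : IntervalIntegrable f volume α β) (hg : IntervalIntegrable g volume α β)
    (hF : ∀ t ∈ Icc α β, F t = F α + ∫ s in α..t, f s)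
    (hG : ∀ t ∈ Icc α β, G t = G α + ∫ s in α..t, g s) :
    ∫ s in α..β, (f s * G s + F s * g s) = F β * G β - F α * G α := by
  have hac : ∀ {f : ℝ → ℝ} (c : ℝ), IntervalIntegrable f volume α β →
      AbsolutelyContinuousOnInterval (fun t => c + ∫ s in α..t, f s) α β := by
    intro f c hf
    exact (contDiffOn_const (c := c) (n := 1)).absolutelyContinuousOnInterval.add
      (hf.absolutelyContinuousOnInterval_intervalIntegral left_mem_uIcc)
  have h := (hac (F α) hf).integral_deriv_mul_eq_sub (hac (G α) hg)
  rw [← hF β (right_mem_Icc.2 hαβ), ← hG β (right_mem_Icc.2 hαβ)] at h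
  simp only [intervalIntegral.integral_same, add_zero] at h
  rw [← h]
  apply intervalIntegral.integral_congr_ae
  filter_upwards [hf.ae_hasDerivAt_integral, hg.ae_hasDerivAt_integral] with x hx1 hx2 hx
  have hx' := uIoc_subset_uIcc hx
  rw [((hx1 hx' α left_mem_uIcc).const_add (F α)).deriv,
    ((hx2 hx' α left_mem_uIcc).const_add (G α)).deriv]
  rw [uIcc_of_le hαβ] at hx'
  rw [hF x hx', hG x hx']

theorem telescope_mono {α β C : ℝ} (hαβ : α ≤ β) {F h : ℝ → ℝ}
    (H : ∀ s ∈ Icc α β, ∀ t ∈ Icc α β, s ≤ t → -(C * (t - s) * (h s - h t)) ≤ F t - F s) :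
    F α ≤ F β := by
  have key : ∀ n : ℕ, 0 < n → -(C * ((β - α) / n) * (h α - h β)) ≤ F β - F α := by
    intro n hn
    have hn' : (0:ℝ) < n := by exact_mod_cast hn
    set p : ℕ → ℝ := fun j => α + j * ((β - α) / n) with hp
    have hd : 0 ≤ (β - α) / n := div_nonneg (by linarith) hn'.le
    have hpm : ∀ j ≤ n, p j ∈ Icc α β := by
      intro j hj
      have hj' : (j:ℝ) ≤ n := by exact_mod_cast hj
      constructor
      · simp only [hp]; nlinarith [mul_nonneg (Nat.cast_nonneg (α := ℝ) j) hd]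
      · simp only [hp]
        have : (j:ℝ) * ((β - α) / n) ≤ n * ((β - α) / n) := mul_le_mul_of_nonneg_right hj' hd
        have e : (n:ℝ) * ((β - α) / n) = β - α := by field_simp
        linarith
    have ind : ∀ j ≤ n, -(C * ((β - α) / n) * (h (p 0) - h (p j))) ≤ F (p j) - F (p 0) := by
      intro j
      induction j with
      | zero => intro _; simp
      | succ j ih =>
        intro hj
        have h1 := ih (by omega)
        have e : p (j+1) - p j = (β - α) / n := by simp only [hp]; push_cast; ring
        have h2 := H (p j) (hpm j (by omega)) (p (j+1)) (hpm _ hj) (by linarith)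
        rw [e] at h2
        nlinarith
    have := ind n le_rfl
    have e0 : p 0 = α := by simp [hp]
    have en : p n = β := by simp only [hp]; field_simp; ring
    rwa [e0, en] at this
  have lim : Tendsto (fun n : ℕ => -(C * ((β - α) / n) * (h α - h β))) atTop (𝓝 (-(C * 0 * (h α - h β)))) := by
    have := tendsto_const_div_atTop_nhds_zero_nat (β - α)
    exact ((this.const_mul C).mul_const _).neg
  have := le_of_tendsto lim (b := F β - F α) (by
    filter_upwards [eventually_gt_atTop 0] with n hn using key n hn)
  simp at this
  exact this

/-- Weighted integral of a derivative against an antitone weight. -/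
theorem anti_int {α β : ℝ} (hαβ : α ≤ β) {h k k' : ℝ → ℝ} (hh : AntitoneOn h (Icc α β))
    (hk : ∀ t ∈ Icc α β, HasDerivWithinAt k (k' t) (Icc α β) t)
    (hk' : ContinuousOn k' (Icc α β)) (hk0 : ∀ t ∈ Icc α β, 0 ≤ k t)
    (ha : k α = 0) (hb : k β = 0) : 0 ≤ ∫ t in α..β, h t * k' t := by
  have hint : IntervalIntegrable h volume α β := AntitoneOn.intervalIntegrable (by rwa [uIcc_of_le hαβ])
  have hk'u : ContinuousOn k' (uIcc α β) := by rwa [uIcc_of_le hαβ]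
  have hhk := hint.mul_continuousOn hk'u
  obtain ⟨C, hC⟩ := isCompact_Icc.exists_bound_of_continuousOn hk'
  have hkc : ContinuousOn k (Icc α β) := fun t ht => (hk t ht).continuousWithinAt
  have main := telescope_mono (C := C) hαβ (h := h)
    (F := fun t => (∫ s in α..t, h s * k' s) - h t * k t) (by
    intro s hs t ht hst
    have hsub : Icc s t ⊆ Icc α β := Icc_subset_Icc hs.1 ht.2
    have e1 := ii_add hhk hs ht
    have e2 : ∫ r in s..t, k' r = k t - k s := by
      apply intervalIntegral.integral_eq_sub_of_hasDerivAt_of_le hst (hkc.mono hsub)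
      · intro x hx
        exact (hk x (hsub (Ioo_subset_Icc_self hx))).hasDerivAt
          (Icc_mem_nhds (hs.1.trans_lt hx.1) (hx.2.trans_le ht.2))
      · exact (ii_sub hk'u.intervalIntegrable hs ht)
    have e3 : -(C * (t - s) * (h s - h t)) ≤ ∫ r in s..t, (h r - h t) * k' r := by
      have : ∫ r in s..t, (-(C * (h s - h t)) : ℝ) ≤ ∫ r in s..t, (h r - h t) * k' r := by
        apply intervalIntegral.integral_mono_on hst (by simp)
        · exact ((ii_sub hint hs ht).sub (by simp)).mul_continuousOn
            (hk'.mono (uIcc_subset_Icc hs ht))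
        · intro r hr
          have b1 := abs_le.1 (hC r (hsub hr))
          have b2 := hh (hsub hr) ht hr.2
          have b3 := hh hs (hsub hr) hr.1
          nlinarith [mul_nonneg (sub_nonneg.2 b2) (by linarith [b1.1] : 0 ≤ C + k' r),
            mul_nonneg (sub_nonneg.2 b3) (by linarith [b1.1, b1.2] : 0 ≤ C)]
      rw [intervalIntegral.integral_const, smul_eq_mul] at this
      linarith
    have e4 : ∫ r in s..t, (h r - h t) * k' r = (∫ r in s..t, h r * k' r) - h t * (k t - k s) := by
      rw [← e2, ← intervalIntegral.integral_const_mul, ← intervalIntegral.integral_sub]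
      · congr 1; ext r; ring
      · exact ii_sub hhk hs ht
      · exact (ii_sub hk'u.intervalIntegrable hs ht).const_mul _
    have e5 := mul_nonneg (sub_nonneg.2 (hh hs ht hst)) (hk0 s hs)
    rw [e4] at e3
    nlinarith)
  simp [ha, hb] at main
  exact main

theorem mono_int {α β : ℝ} (hαβ : α ≤ β) {h k k' : ℝ → ℝ} (hh : MonotoneOn h (Icc α β))
    (hk : ∀ t ∈ Icc α β, HasDerivWithinAt k (k' t) (Icc α β) t)
    (hk' : ContinuousOn k' (Icc α β)) (hk0 : ∀ t ∈ Icc α β, 0 ≤ k t)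
    (ha : k α = 0) (hb : k β = 0) : ∫ t in α..β, h t * k' t ≤ 0 := by
  have := anti_int hαβ (h := fun t => - h t) (fun x hx y hy hxy => neg_le_neg (hh hx hy hxy)) hk hk' hk0 ha hb
  simp only [neg_mul, intervalIntegral.integral_neg] at this
  linarith


/-- `u'' = f` on `[α,β]` with `u' = v`, in integrated form. -/
structure Sol (α β : ℝ) (f u v : ℝ → ℝ) : Prop where
  le : α ≤ β
  int : IntervalIntegrable f volume α β
  eu : ∀ t ∈ Icc α β, u t = u α + ∫ s in α..t, v s
  ev : ∀ t ∈ Icc α β, v t = v α + ∫ s in α..t, f s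

namespace Sol
variable {α β : ℝ} {f u v f₂ u₂ v₂ : ℝ → ℝ}

theorem cv (S : Sol α β f u v) : ContinuousOn v (Icc α β) := by
  have := intervalIntegral.continuousOn_primitive_interval' S.int left_mem_uIcc
  rw [uIcc_of_le S.le] at this
  exact (continuousOn_const.add this).congr S.ev

theorem cv' (S : Sol α β f u v) : IntervalIntegrable v volume α β :=
  (by rw [uIcc_of_le S.le]; exact S.cv : ContinuousOn v (uIcc α β)).intervalIntegrable

theorem cu (S : Sol α β f u v) : ContinuousOn u (Icc α β) := by
  have := intervalIntegral.continuousOn_primitive_interval' S.cv' left_mem_uIcc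
  rw [uIcc_of_le S.le] at this
  exact (continuousOn_const.add this).congr S.eu

theorem dv (S : Sol α β f u v) {x y : ℝ} (hx : x ∈ Icc α β) (hy : y ∈ Icc α β) :
    v y = v x + ∫ s in x..y, f s := by
  rw [S.ev x hx, S.ev y hy, ← ii_add S.int hx hy]; ring

theorem du (S : Sol α β f u v) {x y : ℝ} (hx : x ∈ Icc α β) (hy : y ∈ Icc α β) :
    u y = u x + ∫ s in x..y, v s := by
  rw [S.eu x hx, S.eu y hy, ← ii_add S.cv' hx hy]; ring

theorem deriv (S : Sol α β f u v) {t : ℝ} (ht : t ∈ Icc α β) :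
    HasDerivWithinAt u (v t) (Icc α β) t := by
  haveI : Fact (t ∈ Icc α β) := ⟨ht⟩
  have h := intervalIntegral.integral_hasDerivWithinAt_right (s := Icc α β) (t := Icc α β)
    (ii_sub S.cv' (left_mem_Icc.2 S.le) ht)
    (S.cv.stronglyMeasurableAtFilter_nhdsWithin measurableSet_Icc t) (S.cv t ht)
  exact (h.const_add (u α)).congr S.eu (S.eu t ht)

theorem sub (S : Sol α β f u v) {x y : ℝ} (hx : α ≤ x) (hxy : x ≤ y) (hy : y ≤ β) :
    Sol x y f u v := by
  have hx' : x ∈ Icc α β := ⟨hx, hxy.trans hy⟩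
  have hy' : y ∈ Icc α β := ⟨hx.trans hxy, hy⟩
  have hs : ∀ t ∈ Icc x y, t ∈ Icc α β := fun t ht => ⟨hx.trans ht.1, ht.2.trans hy⟩
  exact ⟨hxy, ii_sub S.int hx' hy', fun t ht => S.du hx' (hs t ht), fun t ht => S.dv hx' (hs t ht)⟩

theorem congr (S : Sol α β f u v) (h : ∀ᵐ t, t ∈ Icc α β → f t = f₂ t) : Sol α β f₂ u v := by
  refine ⟨S.le, ?_, S.eu, ?_⟩
  · apply S.int.congr_ae
    rw [EventuallyEq, ae_restrict_iff' measurableSet_uIoc]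
    filter_upwards [h] with t ht ht'
    rw [uIoc_of_le S.le] at ht'
    exact ht (Ioc_subset_Icc_self ht')
  · intro t ht
    rw [S.ev t ht]
    congr 1
    apply intervalIntegral.integral_congr_ae
    filter_upwards [h] with s hs hs'
    rw [uIoc_of_le ht.1] at hs'
    exact hs ⟨hs'.1.le, hs'.2.trans ht.2⟩

theorem lin (S : Sol α β f u v) (S₂ : Sol α β f₂ u₂ v₂) (c d : ℝ) :
    Sol α β (fun t => c * f t + d * f₂ t) (fun t => c * u t + d * u₂ t)
      (fun t => c * v t + d * v₂ t) := by
  have key : ∀ {p p₂ : ℝ → ℝ}, IntervalIntegrable p volume α β → IntervalIntegrable p₂ volume α β →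
      ∀ t ∈ Icc α β, ∫ s in α..t, (c * p s + d * p₂ s) =
        c * (∫ s in α..t, p s) + d * ∫ s in α..t, p₂ s := by
    intro p p₂ hp hp₂ t ht
    rw [intervalIntegral.integral_add, intervalIntegral.integral_const_mul,
      intervalIntegral.integral_const_mul]
    · exact (ii_sub hp (left_mem_Icc.2 S.le) ht).const_mul c
    · exact (ii_sub hp₂ (left_mem_Icc.2 S.le) ht).const_mul d
  refine ⟨S.le, (S.int.const_mul c).add (S₂.int.const_mul d), fun t ht => ?_, fun t ht => ?_⟩
  · rw [key S.cv' S₂.cv' t ht, S.eu t ht, S₂.eu t ht]; ring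
  · rw [key S.int S₂.int t ht, S.ev t ht, S₂.ev t ht]; ring

theorem smul (S : Sol α β f u v) (c : ℝ) :
    Sol α β (fun t => c * f t) (fun t => c * u t) (fun t => c * v t) := by
  simpa using S.lin S c 0

theorem refl (S : Sol α β f u v) (c : ℝ) :
    Sol (c - β) (c - α) (fun t => f (c - t)) (fun t => u (c - t)) (fun t => - v (c - t)) := by
  have hm : ∀ t ∈ Icc (c - β) (c - α), c - t ∈ Icc α β :=
    fun t ht => ⟨by linarith [ht.2], by linarith [ht.1]⟩
  refine ⟨by linarith [S.le], ?_, fun t ht => ?_, fun t ht => ?_⟩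
  · have := S.int.comp_sub_left c
    exact this.symm
  · rw [intervalIntegral.integral_neg, intervalIntegral.integral_comp_sub_left (fun s => v s)]
    simp only [sub_sub_cancel]
    rw [S.du (right_mem_Icc.2 S.le) (hm t ht), intervalIntegral.integral_symm]
  · rw [intervalIntegral.integral_comp_sub_left (fun s => f s)]
    simp only [sub_sub_cancel]
    rw [S.dv (right_mem_Icc.2 S.le) (hm t ht), intervalIntegral.integral_symm]
    ring

theorem ub (S : Sol α β f u v) {x y m : ℝ} (hx : α ≤ x) (hxy : x ≤ y) (hy : y ≤ β)
    (h : ∀ t ∈ Icc x y, v t ≤ m) : u y ≤ u x + m * (y - x) := by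
  have S' := S.sub hx hxy hy
  rw [S'.eu y (right_mem_Icc.2 hxy)]
  have := intervalIntegral.integral_mono_on hxy S'.cv' (intervalIntegrable_const (c := m)) h
  rw [intervalIntegral.integral_const, smul_eq_mul] at this
  linarith

theorem lb (S : Sol α β f u v) {x y m : ℝ} (hx : α ≤ x) (hxy : x ≤ y) (hy : y ≤ β)
    (h : ∀ t ∈ Icc x y, m ≤ v t) : u x + m * (y - x) ≤ u y := by
  have S' := S.sub hx hxy hy
  rw [S'.eu y (right_mem_Icc.2 hxy)]
  have := intervalIntegral.integral_mono_on hxy (intervalIntegrable_const (c := m)) S'.cv' h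
  rw [intervalIntegral.integral_const, smul_eq_mul] at this
  linarith

theorem vmono (S : Sol α β f u v) (h : ∀ᵐ t, t ∈ Icc α β → 0 ≤ f t) : MonotoneOn v (Icc α β) := by
  intro x hx y hy hxy
  rw [S.dv hx hy]
  have : 0 ≤ ∫ s in x..y, f s := by
    apply intervalIntegral.integral_nonneg_of_ae_restrict hxy
    rw [EventuallyLE, ae_restrict_iff' measurableSet_Icc]
    filter_upwards [h] with t ht ht'
    exact ht ⟨hx.1.trans ht'.1, ht'.2.trans hy.2⟩
  linarith

theorem vanti (S : Sol α β f u v) (h : ∀ᵐ t, t ∈ Icc α β → f t ≤ 0) : AntitoneOn v (Icc α β) := by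
  have := (S.smul (-1)).vmono (by filter_upwards [h] with t ht ht'; linarith [ht ht'])
  intro x hx y hy hxy
  have := this hx hy hxy
  simp only at this
  linarith

/-- convex functions lie below the max of the endpoint values -/
theorem le_max (S : Sol α β f u v) (h : ∀ᵐ t, t ∈ Icc α β → 0 ≤ f t) {t : ℝ} (ht : t ∈ Icc α β) :
    u t ≤ max (u α) (u β) := by
  have hm := S.vmono h
  rcases le_total (v t) 0 with h0 | h0
  · have := S.ub le_rfl ht.1 ht.2 (m := 0) (fun r hr =>
      (hm ⟨hr.1, hr.2.trans ht.2⟩ ht hr.2).trans h0)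
    exact le_max_of_le_left (by linarith)
  · have := S.lb ht.1 ht.2 le_rfl (m := 0) (fun r hr =>
      h0.trans (hm ht ⟨ht.1.trans hr.1, hr.2⟩ hr.1))
    exact le_max_of_le_right (by linarith)

theorem min_le (S : Sol α β f u v) (h : ∀ᵐ t, t ∈ Icc α β → f t ≤ 0) {t : ℝ} (ht : t ∈ Icc α β) :
    min (u α) (u β) ≤ u t := by
  have := (S.smul (-1)).le_max (by filter_upwards [h] with t ht ht'; linarith [ht ht']) ht
  rcases le_total (u α) (u β) with h1 | h1
  · rw [min_eq_left h1]
    rw [max_eq_left (by linarith)] at this; linarith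
  · rw [min_eq_right h1]
    rw [max_eq_right (by linarith)] at this; linarith

/-- Gronwall constant -/
noncomputable def Bd (l Λ : ℝ) : ℝ := 2 * (1 + l) * (1 + Λ) * Real.exp (2 * (l * Λ)) + 1

theorem Bd_pos {l Λ : ℝ} (hl : 0 ≤ l) (hΛ : 0 ≤ Λ) : 1 ≤ Bd l Λ := by
  unfold Bd; have := Real.exp_pos (2 * (l * Λ)); linarith [(by positivity : 0 ≤ 2 * (1 + l) * (1 + Λ) * Real.exp (2 * (l * Λ)))]

theorem gronwall (S : Sol α β f u v) {k ρ : ℝ → ℝ} {Λ R : ℝ}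
    (hk : IntervalIntegrable k volume α β) (hk0 : ∀ t, 0 ≤ k t)
    (hρ : IntervalIntegrable ρ volume α β) (hρ0 : ∀ t, 0 ≤ ρ t)
    (hΛ : ∫ s in α..β, k s ≤ Λ) (hR : ∫ s in α..β, ρ s ≤ R)
    (h : ∀ᵐ t, t ∈ Icc α β → |f t| ≤ k t * |u t| + ρ t) {t : ℝ} (ht : t ∈ Icc α β) :
    |u t| ≤ Bd (β - α) Λ * (|u α| + |v α| + R) ∧ |v t| ≤ Bd (β - α) Λ * (|u α| + |v α| + R) := by
  have hαβ := S.le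
  have hαm := left_mem_Icc.2 hαβ
  have hβm := right_mem_Icc.2 hαβ
  have hl : 0 ≤ β - α := by linarith
  have cku : ∀ x ∈ Icc α β, IntervalIntegrable (fun s => k s * |u s|) volume α x := fun x hx =>
    (ii_sub hk hαm hx).mul_continuousOn (S.cu.abs.mono (uIcc_subset_Icc hαm hx))
  have intmono : ∀ {p : ℝ → ℝ}, IntervalIntegrable p volume α β → (∀ t, 0 ≤ p t) →
      ∀ x ∈ Icc α β, ∀ y ∈ Icc α β, x ≤ y → ∫ s in α..x, p s ≤ ∫ s in α..y, p s := by
    intro p hp hp0 x hx y hy hxy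
    rw [← ii_add hp hx hy]
    have := intervalIntegral.integral_nonneg (μ := volume) (f := p) hxy (fun u _ => hp0 u)
    linarith
  have nonneg : ∀ {p : ℝ → ℝ}, (∀ t, 0 ≤ p t) → ∀ x ∈ Icc α β, 0 ≤ ∫ s in α..x, p s :=
    fun {p} hp0 x hx => intervalIntegral.integral_nonneg (μ := volume) (f := p) hx.1 (fun u _ => hp0 u)
  have hku0 : ∀ t, 0 ≤ k t * |u t| := fun t => mul_nonneg (hk0 t) (abs_nonneg _)
  have hR0 : 0 ≤ R := (nonneg hρ0 β hβm).trans hR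
  have hΛ0 : 0 ≤ Λ := (nonneg hk0 β hβm).trans hΛ
  have vb : ∀ x ∈ Icc α β, |v x| ≤ |v α| + R + ∫ s in α..x, k s * |u s| := by
    intro x hx
    rw [S.ev x hx]
    have h1 : |∫ s in α..x, f s| ≤ ∫ s in α..x, (k s * |u s| + ρ s) := by
      rw [← Real.norm_eq_abs]
      apply intervalIntegral.norm_integral_le_of_norm_le hx.1
      · filter_upwards [h] with s hs hs'
        exact hs ⟨hs'.1.le, hs'.2.trans hx.2⟩
      · exact (cku x hx).add (ii_sub hρ hαm hx)
    rw [intervalIntegral.integral_add (cku x hx) (ii_sub hρ hαm hx)] at h1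
    have h2 := intmono hρ hρ0 x hx β hβm hx.2
    have h3 := abs_add_le (v α) (∫ s in α..x, f s)
    linarith
  have ub' : ∀ x ∈ Icc α β, |u x| ≤ (|u α| + (β - α) * (|v α| + R)) +
      ∫ s in α..x, ((β - α) * k s) * |u s| := by
    intro x hx
    have hI := nonneg hku0 x hx
    have h1 : |∫ s in α..x, v s| ≤ (|v α| + R + ∫ s in α..x, k s * |u s|) * |x - α| := by
      rw [← Real.norm_eq_abs]
      apply intervalIntegral.norm_integral_le_of_norm_le_const
      intro s hs
      rw [uIoc_of_le hx.1] at hs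
      have hsm : s ∈ Icc α β := ⟨hs.1.le, hs.2.trans hx.2⟩
      have := intmono (cku β hβm) hku0 s hsm x hx hs.2
      exact (vb s hsm).trans (by linarith)
    rw [abs_of_nonneg (by linarith [hx.1] : 0 ≤ x - α)] at h1
    have h2 : (|v α| + R + ∫ s in α..x, k s * |u s|) * (x - α) ≤
        (|v α| + R + ∫ s in α..x, k s * |u s|) * (β - α) :=
      mul_le_mul_of_nonneg_left (by linarith [hx.2]) (by positivity)
    have e : ∫ s in α..x, ((β - α) * k s) * |u s| = (β - α) * ∫ s in α..x, k s * |u s| := by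
      rw [← intervalIntegral.integral_const_mul]; congr 1; ext s; ring
    rw [e, S.eu x hx]
    have h3 := abs_add_le (u α) (∫ s in α..x, v s)
    linarith
  have G := gron (hk.const_mul (β - α)) (fun t => mul_nonneg hl (hk0 t)) S.cu.abs
    (A := |u α| + (β - α) * (|v α| + R)) (by positivity) ub'
  have G' : ∀ x ∈ Icc α β, |u x| ≤ 2 * (|u α| + (β - α) * (|v α| + R)) *
      Real.exp (2 * ((β - α) * Λ)) := by
    intro x hx
    refine (G x hx).trans ?_
    rw [intervalIntegral.integral_const_mul]
    have := intmono hk hk0 x hx β hβm hx.2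
    gcongr
    linarith
  set e := Real.exp (2 * ((β - α) * Λ)) with he
  have he0 : 0 < e := Real.exp_pos _
  set X := |u α| + |v α| + R with hX
  have hA : |u α| + (β - α) * (|v α| + R) ≤ (1 + (β - α)) * X := by
    rw [hX]; nlinarith [abs_nonneg (u α), abs_nonneg (v α), mul_nonneg hl (abs_nonneg (u α))]
  have hX0 : 0 ≤ X := by positivity
  have hU : ∀ x ∈ Icc α β, |u x| ≤ 2 * (1 + (β - α)) * X * e := by
    intro x hx
    refine (G' x hx).trans ?_
    have := mul_le_mul_of_nonneg_right hA he0.le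
    nlinarith
  constructor
  · refine (hU t ht).trans ?_
    unfold Bd
    have : 0 ≤ 2 * (1 + (β - α)) * Λ * e * X := by positivity
    nlinarith
  · refine (vb t ht).trans ?_
    have h1 : ∫ s in α..t, k s * |u s| ≤ ∫ s in α..t, (2 * (1 + (β - α)) * X * e) * k s := by
      apply intervalIntegral.integral_mono_on ht.1 (cku t ht) ((ii_sub hk hαm ht).const_mul _)
      intro s hs
      have := mul_le_mul_of_nonneg_left (hU s ⟨hs.1, hs.2.trans ht.2⟩) (hk0 s)
      linarith
    rw [intervalIntegral.integral_const_mul] at h1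
    have h2 := intmono hk hk0 t ht β hβm ht.2
    have h3 : (2 * (1 + (β - α)) * X * e) * (∫ s in α..t, k s) ≤ (2 * (1 + (β - α)) * X * e) * Λ :=
      mul_le_mul_of_nonneg_left (by linarith) (by positivity)
    unfold Bd
    have : 0 ≤ 2 * (1 + (β - α)) * e * X := by positivity
    have : |v α| + R ≤ X := by rw [hX]; linarith [abs_nonneg (u α)]
    nlinarith

theorem zero_fwd (S : Sol α β f u v) {k : ℝ → ℝ} (hk : IntervalIntegrable k volume α β)
    (hk0 : ∀ t, 0 ≤ k t) (h : ∀ᵐ t, t ∈ Icc α β → |f t| ≤ k t * |u t|) (hu : u α = 0) (hv : v α = 0)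
    {t : ℝ} (ht : t ∈ Icc α β) : u t = 0 ∧ v t = 0 := by
  have := S.gronwall hk hk0 (ρ := fun _ => 0) (R := 0) (by simp) (by simp) le_rfl (by simp)
    (by simpa using h) ht
  simp only [hu, hv, abs_zero, add_zero, mul_zero] at this
  exact ⟨abs_nonpos_iff.1 this.1, abs_nonpos_iff.1 this.2⟩

theorem zero_all (S : Sol α β f u v) {k : ℝ → ℝ} (hk : IntervalIntegrable k volume α β)
    (hk0 : ∀ t, 0 ≤ k t) (h : ∀ᵐ t, t ∈ Icc α β → |f t| ≤ k t * |u t|) {t₀ : ℝ}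
    (ht₀ : t₀ ∈ Icc α β) (hu : u t₀ = 0) (hv : v t₀ = 0)
    {t : ℝ} (ht : t ∈ Icc α β) : u t = 0 ∧ v t = 0 := by
  rcases le_total t₀ t with h1 | h1
  · refine (S.sub ht₀.1 ht₀.2 le_rfl).zero_fwd (ii_sub hk ht₀ (right_mem_Icc.2 S.le)) hk0 ?_ hu hv ⟨h1, ht.2⟩
    filter_upwards [h] with s hs hs' using hs ⟨ht₀.1.trans hs'.1, hs'.2⟩
  · have S' := (S.sub le_rfl ht₀.1 ht₀.2).refl (α + t₀)
    have hq : Measure.QuasiMeasurePreserving (fun s : ℝ => α + t₀ - s) volume volume :=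
      (Measure.measurePreserving_sub_left volume (α + t₀)).quasiMeasurePreserving
    have hint : IntervalIntegrable (fun s => k (α + t₀ - s)) volume (α + t₀ - t₀) (α + t₀ - α) :=
      ((ii_sub hk (left_mem_Icc.2 S.le) ht₀).comp_sub_left (α + t₀)).symm
    have := S'.zero_fwd hint (fun t => hk0 _) (by
      filter_upwards [hq.ae h] with s hs hs'
      exact hs ⟨by linarith [hs'.2], by linarith [hs'.1, ht₀.2]⟩) (by simpa using hu) (by simpa using hv)
      (t := α + t₀ - t) ⟨by linarith, by linarith [ht.1]⟩
    simpa using this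

end Sol

theorem exists_sol {α β : ℝ} (hαβ : α ≤ β) {q G : ℝ → ℝ} (hq : IntervalIntegrable q volume α β)
    {L : ℝ} (hL : ∀ x y, |G x - G y| ≤ L * |x - y|) (x s : ℝ) :
    ∃ u v, Sol α β (fun t => -(q t * G (u t))) u v ∧ u α = x ∧ v α = s := by
  have hαm := left_mem_Icc.2 hαβ
  have hL0 : 0 ≤ L := by have := (abs_nonneg _).trans (hL 1 0); simpa using this
  have hGc : Continuous G := by
    have : LipschitzWith (Real.toNNReal L) G := by
      apply LipschitzWith.of_dist_le_mul
      intro a b; rw [Real.dist_eq, Real.dist_eq, Real.coe_toNNReal _ hL0]; exact hL a b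
    exact this.continuous
  have hl : 0 ≤ β - α := by linarith
  set k : ℝ → ℝ := fun t => (β - α) * L * |q t| with hk
  have hki : IntervalIntegrable k volume α β := hq.abs.const_mul _
  have hk0 : ∀ t, 0 ≤ k t := fun t => by simp only [hk]; positivity
  set E : ℝ → ℝ := fun t => Real.exp (2 * ∫ s in α..t, k s) with hE
  have hEp : ∀ t, 0 < E t := fun t => Real.exp_pos _
  have hprim : ∀ {p : ℝ → ℝ}, IntervalIntegrable p volume α β →
      ContinuousOn (fun t => ∫ s in α..t, p s) (Icc α β) := by
    intro p hp
    have := intervalIntegral.continuousOn_primitive_interval' hp left_mem_uIcc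
    rwa [uIcc_of_le hαβ] at this
  have hEc : ContinuousOn E (Icc α β) :=
    Real.continuous_exp.comp_continuousOn (continuousOn_const.mul (hprim hki))
  set ex : C(Icc α β, ℝ) → ℝ → ℝ := fun y t => E t * y (projIcc α β hαβ t) with hex
  have hexc : ∀ y, ContinuousOn (ex y) (Icc α β) := fun y =>
    hEc.mul (y.continuous.comp continuous_projIcc).continuousOn
  set F : C(Icc α β, ℝ) → ℝ → ℝ := fun y r => -(q r * G (ex y r)) with hF
  have hFi : ∀ y, IntervalIntegrable (F y) volume α β := fun y => by
    refine (hq.mul_continuousOn ?_).neg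
    rw [uIcc_of_le hαβ]
    exact hGc.comp_continuousOn (hexc y)
  have hFFc : ∀ y, ContinuousOn (fun r => ∫ s in α..r, F y s) (Icc α β) := fun y => hprim (hFi y)
  have hFFi : ∀ y, IntervalIntegrable (fun r => ∫ s in α..r, F y s) volume α β := fun y => by
    apply ContinuousOn.intervalIntegrable; rw [uIcc_of_le hαβ]; exact hFFc y
  set Φ : C(Icc α β, ℝ) → ℝ → ℝ := fun y t => x + s * (t - α) + ∫ r in α..t, ∫ s in α..r, F y s with hΦ
  have hΦc : ∀ y, ContinuousOn (Φ y) (Icc α β) := fun y => by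
    refine ContinuousOn.add (by fun_prop) (hprim (hFFi y))
  set T : C(Icc α β, ℝ) → C(Icc α β, ℝ) := fun y =>
    ⟨fun t => (E t)⁻¹ * Φ y t, by
      have : ContinuousOn (fun t => (E t)⁻¹ * Φ y t) (Icc α β) :=
        (hEc.inv₀ (fun t _ => (hEp t).ne')).mul (hΦc y)
      exact this.domRestrict⟩ with hT
  have hcontr : ContractingWith (1/2) T := by
    refine ⟨by norm_num, LipschitzWith.of_dist_le_mul fun y z => ?_⟩
    rw [ContinuousMap.dist_le (by positivity)]
    rintro ⟨t, ht⟩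
    have hti := ii_sub hq.abs hαm ht
    set D := dist y z with hD
    have hEct : ContinuousOn E (uIcc α t) := hEc.mono (uIcc_subset_Icc hαm ht)
    have b1 : ∀ r ∈ Icc α t, |(∫ s in α..r, F y s) - ∫ s in α..r, F z s| ≤
        ∫ s in α..t, (L * |q s|) * (E s * D) := by
      intro r hr
      have hrm : r ∈ Icc α β := ⟨hr.1, hr.2.trans ht.2⟩
      rw [← intervalIntegral.integral_sub (ii_sub (hFi y) hαm hrm) (ii_sub (hFi z) hαm hrm)]
      have hii : IntervalIntegrable (fun s => (L * |q s|) * (E s * D)) volume α t :=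
        (hti.const_mul L).mul_continuousOn (hEct.mul continuousOn_const)
      have c1 : |∫ s in α..r, (F y s - F z s)| ≤ ∫ s in α..r, (L * |q s|) * (E s * D) := by
        rw [← Real.norm_eq_abs]
        apply intervalIntegral.norm_integral_le_of_norm_le hr.1
        · refine Eventually.of_forall fun s _ => ?_
          have : F y s - F z s = -(q s * (G (ex y s) - G (ex z s))) := by simp only [hF]; ring
          rw [this, norm_neg, norm_mul, Real.norm_eq_abs, Real.norm_eq_abs]
          have d1 := hL (ex y s) (ex z s)
          have d2 : |ex y s - ex z s| ≤ E s * D := by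
            simp only [hex]
            rw [← mul_sub, abs_mul, abs_of_pos (hEp s)]
            exact mul_le_mul_of_nonneg_left (ContinuousMap.dist_apply_le_dist (f := y) (g := z) _) (hEp s).le
          have d3 := mul_le_mul_of_nonneg_left d2 hL0
          have d4 := mul_le_mul_of_nonneg_left (d1.trans d3) (abs_nonneg (q s))
          linarith
        · exact ii_sub hii (left_mem_Icc.2 ht.1) hr
      refine c1.trans ?_
      rw [← ii_add hii hr (right_mem_Icc.2 ht.1)]
      have : 0 ≤ ∫ s in r..t, (L * |q s|) * (E s * D) :=
        intervalIntegral.integral_nonneg hr.2 (fun s _ => by have := hEp s; positivity)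
      linarith
    have b2 : |Φ y t - Φ z t| ≤ (∫ s in α..t, (L * |q s|) * (E s * D)) * (t - α) := by
      have : Φ y t - Φ z t = ∫ r in α..t, ((∫ s in α..r, F y s) - ∫ s in α..r, F z s) := by
        rw [intervalIntegral.integral_sub (ii_sub (hFFi y) hαm ht) (ii_sub (hFFi z) hαm ht)]
        simp only [hΦ]; ring
      rw [this]
      have c := intervalIntegral.norm_integral_le_of_norm_le_const (a := α) (b := t)
        (f := fun r => (∫ s in α..r, F y s) - ∫ s in α..r, F z s)
        (C := ∫ s in α..t, (L * |q s|) * (E s * D)) (by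
          intro r hr; rw [uIoc_of_le ht.1] at hr; exact b1 r ⟨hr.1.le, hr.2⟩)
      rwa [abs_of_nonneg (by linarith [ht.1] : 0 ≤ t - α)] at c
    have b3 : (∫ s in α..t, (L * |q s|) * (E s * D)) * (β - α) = D * ∫ s in α..t, k s * E s := by
      rw [mul_comm, ← intervalIntegral.integral_const_mul, ← intervalIntegral.integral_const_mul]
      congr 1; ext r; simp only [hk]; ring
    have b4 : 0 ≤ ∫ s in α..t, (L * |q s|) * (E s * D) :=
      intervalIntegral.integral_nonneg ht.1 (fun s _ => by have := hEp s; positivity)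
    have b5 := wexp hki hk0 ht
    have b6 : |Φ y t - Φ z t| ≤ D * (E t / 2) := by
      refine b2.trans ?_
      have : (∫ s in α..t, (L * |q s|) * (E s * D)) * (t - α) ≤
        (∫ s in α..t, (L * |q s|) * (E s * D)) * (β - α) :=
        mul_le_mul_of_nonneg_left (by linarith [ht.2]) b4
      refine this.trans ?_
      rw [b3]
      refine mul_le_mul_of_nonneg_left ?_ dist_nonneg
      simp only [hE] at b5 ⊢
      linarith
    rw [Real.dist_eq]
    change |(E t)⁻¹ * Φ y t - (E t)⁻¹ * Φ z t| ≤ _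
    rw [← mul_sub, abs_mul, abs_of_pos (inv_pos.2 (hEp t))]
    have := mul_le_mul_of_nonneg_left b6 (inv_pos.2 (hEp t)).le
    refine this.trans (le_of_eq ?_)
    have := (hEp t).ne'
    field_simp
    simp
  obtain ⟨y, hy, -⟩ := hcontr.exists_fixedPoint (0 : C(Icc α β, ℝ)) (edist_ne_top _ _)
  have hfix : ∀ t ∈ Icc α β, ex y t = Φ y t := by
    intro t ht
    have h1 : (E t)⁻¹ * Φ y t = y ⟨t, ht⟩ := by change (T y) ⟨t, ht⟩ = _; rw [hy]
    simp only [hex]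
    rw [projIcc_of_mem hαβ ht, ← h1]
    have := (hEp t).ne'
    field_simp
  have hex0 : ex y α = x := by rw [hfix α hαm]; simp [hΦ]
  refine ⟨ex y, fun r => s + ∫ s in α..r, F y s, ⟨hαβ, hFi y, fun t ht => ?_, fun t ht => ?_⟩, hex0, by simp⟩
  · rw [hfix t ht, hex0, intervalIntegral.integral_add (by simp) (ii_sub (hFFi y) hαm ht)]
    simp [hΦ]; ring
  · simp [hF]


/-- the truncated nonlinearity -/
structure Nl (G G' : ℝ → ℝ) (L : ℝ) : Prop where
  d : ∀ x, HasDerivAt G (G' x) x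
  uc : UniformContinuous G'
  nn : ∀ x, 0 ≤ G' x
  le : ∀ x, G' x ≤ L
  z : ∀ x ≤ 0, G x = 0
  z' : ∀ x ≤ 0, G' x = 0
  pos : ∀ x > 0, 0 < G x
  s : ∀ x > 0, G x < x * G' x

namespace Nl
variable {G G' : ℝ → ℝ} {L : ℝ}

theorem cont (N : Nl G G' L) : Continuous G :=
  continuous_iff_continuousAt.2 fun x => (N.d x).continuousAt

theorem L0 (N : Nl G G' L) : 0 ≤ L := (N.nn 0).trans (N.le 0)

theorem mono (N : Nl G G' L) : Monotone G :=
  monotone_of_deriv_nonneg (fun x => (N.d x).differentiableAt) (fun x => by rw [(N.d x).deriv]; exact N.nn x)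

theorem G0 (N : Nl G G' L) (x : ℝ) : 0 ≤ G x := by
  rcases le_or_gt x 0 with h | h
  · rw [N.z x h]
  · exact (N.pos x h).le

theorem mvt (N : Nl G G' L) (x y : ℝ) : ∃ ξ ∈ uIcc x y, G x - G y = G' ξ * (x - y) := by
  rcases lt_trichotomy x y with h | h | h
  · obtain ⟨ξ, h1, h2⟩ := exists_hasDerivAt_eq_slope G G' h N.cont.continuousOn (fun t _ => N.d t)
    refine ⟨ξ, by rw [uIcc_of_le h.le]; exact Ioo_subset_Icc_self h1, ?_⟩
    rw [h2]; have : y - x ≠ 0 := by linarith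
    field_simp; ring
  · subst h; exact ⟨x, by simp, by simp⟩
  · obtain ⟨ξ, h1, h2⟩ := exists_hasDerivAt_eq_slope G G' h N.cont.continuousOn (fun t _ => N.d t)
    refine ⟨ξ, by rw [uIcc_of_ge h.le]; exact Ioo_subset_Icc_self h1, ?_⟩
    rw [h2]; have : x - y ≠ 0 := by linarith
    field_simp

theorem lip (N : Nl G G' L) (x y : ℝ) : |G x - G y| ≤ L * |x - y| := by
  obtain ⟨ξ, -, h⟩ := N.mvt x y
  rw [h, abs_mul, abs_of_nonneg (N.nn ξ)]
  exact mul_le_mul_of_nonneg_right (N.le ξ) (abs_nonneg _)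

theorem lip0 (N : Nl G G' L) (x : ℝ) : |G x| ≤ L * |x| := by
  have := N.lip x 0; rwa [N.z 0 le_rfl, sub_zero, sub_zero] at this

/-- near zero `G'` is small -/
theorem small (N : Nl G G' L) {η : ℝ} (hη : 0 < η) : ∃ δ > 0, ∀ x < δ, G' x ≤ η := by
  obtain ⟨δ, h1, h2⟩ := Metric.uniformContinuous_iff.1 N.uc η hη
  refine ⟨δ, h1, fun x hx => ?_⟩
  rcases le_or_gt x 0 with h | h
  · rw [N.z' x h]; exact hη.le
  · have := h2 (a := x) (b := 0) (by rw [Real.dist_eq, sub_zero, abs_of_pos h]; exact hx)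
    rw [Real.dist_eq, N.z' 0 le_rfl, sub_zero] at this
    exact (le_abs_self _).trans this.le

theorem ratio (N : Nl G G' L) {x y : ℝ} (hx : 0 < x) (hxy : x ≤ y) : G x * y ≤ G y * x := by
  have hm : MonotoneOn (fun s => G s / s) (Icc x y) := by
    have hd : ∀ s ∈ Icc x y, HasDerivAt (fun s => G s / s) ((G' s * s - G s * 1) / s ^ 2) s := fun s hs =>
      (N.d s).div (hasDerivAt_id s) (by linarith [hs.1])
    apply monotoneOn_of_deriv_nonneg (convex_Icc x y)
    · exact fun s hs => (hd s hs).continuousAt.continuousWithinAt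
    · exact fun s hs => (hd s (interior_subset hs)).differentiableAt.differentiableWithinAt
    · intro s hs
      rw [(hd s (interior_subset hs)).deriv]
      have : 0 < s := by linarith [(interior_subset hs : s ∈ Icc x y).1]
      have := N.s s this
      apply div_nonneg _ (by positivity)
      linarith
  have := hm (left_mem_Icc.2 hxy) (right_mem_Icc.2 hxy) hxy
  simp only at this
  rw [div_le_div_iff₀ hx (by linarith)] at this
  exact this

end Nl

namespace Sol
variable {α β : ℝ} {f u v f₂ u₂ v₂ : ℝ → ℝ}

theorem tan_conv (S : Sol α β f u v) (h : ∀ᵐ t, t ∈ Icc α β → 0 ≤ f t) {x y : ℝ} (hx : x ∈ Icc α β)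
    (hy : y ∈ Icc α β) : u x + v x * (y - x) ≤ u y := by
  have hm := S.vmono h
  rcases le_total x y with h1 | h1
  · exact S.lb hx.1 h1 hy.2 (fun t ht => hm hx ⟨hx.1.trans ht.1, ht.2.trans hy.2⟩ ht.1)
  · have := S.ub hy.1 h1 hx.2 (fun t ht => hm ⟨hy.1.trans ht.1, ht.2.trans hx.2⟩ hx ht.2)
    linarith

theorem tan_conc (S : Sol α β f u v) (h : ∀ᵐ t, t ∈ Icc α β → f t ≤ 0) {x y : ℝ} (hx : x ∈ Icc α β)
    (hy : y ∈ Icc α β) : u y ≤ u x + v x * (y - x) := by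
  have := (S.smul (-1)).tan_conv (by filter_upwards [h] with t ht ht'; linarith [ht ht']) hx hy
  linarith

/-- continuous dependence for the nonlinear equation -/
theorem dep {q G : ℝ → ℝ} {L Λ : ℝ} (hL : ∀ x y, |G x - G y| ≤ L * |x - y|)
    (S : Sol α β (fun t => -(q t * G (u t))) u v) (S₂ : Sol α β (fun t => -(q t * G (u₂ t))) u₂ v₂)
    (hq : IntervalIntegrable q volume α β) (hΛ : ∫ s in α..β, L * |q s| ≤ Λ) {t : ℝ} (ht : t ∈ Icc α β) :
    |u t - u₂ t| ≤ Bd (β - α) Λ * (|u α - u₂ α| + |v α - v₂ α|) ∧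
    |v t - v₂ t| ≤ Bd (β - α) Λ * (|u α - u₂ α| + |v α - v₂ α|) := by
  have hL0 : 0 ≤ L := by have := (abs_nonneg _).trans (hL 1 0); simpa using this
  have := (S.lin S₂ 1 (-1)).gronwall (k := fun t => L * |q t|) (ρ := fun _ => 0) (R := 0)
    (hq.abs.const_mul L) (fun t => by positivity) (by simp) (by simp) hΛ (by simp) (by
      refine Eventually.of_forall fun t _ => ?_
      have h1 : 1 * -(q t * G (u t)) + -1 * -(q t * G (u₂ t)) = -(q t * (G (u t) - G (u₂ t))) := by ring
      have h2 : 1 * u t + -1 * u₂ t = u t - u₂ t := by ring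
      rw [h1, h2, abs_neg, abs_mul]
      have := mul_le_mul_of_nonneg_left (hL (u t) (u₂ t)) (abs_nonneg (q t))
      linarith) ht
  have e : ∀ x y : ℝ, 1 * x + -1 * y = x - y := fun x y => by ring
  simpa only [e, add_zero] using this

/-- comparison of two linear equations -/
theorem lincmp {q c c₂ w w' W W' : ℝ → ℝ} {L Λ ω : ℝ} (hq : IntervalIntegrable q volume α β)
    (S : Sol α β (fun t => -(q t * (c t * w t))) w w') (S₂ : Sol α β (fun t => -(q t * (c₂ t * W t))) W W')
    (hc : ∀ t ∈ Icc α β, |c t| ≤ L) (hc₂ : ∀ t ∈ Icc α β, |c₂ t| ≤ L)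
    (hω : ∀ t ∈ Icc α β, |c t - c₂ t| ≤ ω)
    (hΛ : ∫ s in α..β, L * |q s| ≤ Λ) {X : ℝ} (hX : ∫ s in α..β, |q s| ≤ X) {t : ℝ} (ht : t ∈ Icc α β) :
    |w t - W t| ≤ Bd (β - α) Λ * (|w α - W α| + |w' α - W' α| +
      ω * (Bd (β - α) Λ * (|W α| + |W' α|)) * X) ∧
    |w' t - W' t| ≤ Bd (β - α) Λ * (|w α - W α| + |w' α - W' α| +
      ω * (Bd (β - α) Λ * (|W α| + |W' α|)) * X) := by
  have hL0 : 0 ≤ L := (abs_nonneg _).trans (hc α (left_mem_Icc.2 S.le))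
  have hω0 : 0 ≤ ω := (abs_nonneg _).trans (hω α (left_mem_Icc.2 S.le))
  have hi : IntervalIntegrable (fun t => L * |q t|) volume α β := hq.abs.const_mul L
  have hi0 : ∀ t, 0 ≤ L * |q t| := fun t => by positivity
  have hΛ0 : 0 ≤ Λ := (intervalIntegral.integral_nonneg S.le (fun t _ => hi0 t)).trans hΛ
  set Y := Bd (β - α) Λ * (|W α| + |W' α|) with hY
  have hB := Bd_pos (by linarith [S.le] : 0 ≤ β - α) hΛ0
  have hY0 : 0 ≤ Y := by positivity
  have hWb : ∀ t ∈ Icc α β, |W t| ≤ Y := fun t ht => by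
    have := (S₂.gronwall hi hi0 (ρ := fun _ => 0) (R := 0) (by simp) (by simp) hΛ (by simp) (by
      refine Eventually.of_forall fun t ht => ?_
      rw [abs_neg, abs_mul, abs_mul, add_zero]
      have := mul_le_mul_of_nonneg_right (hc₂ t ht) (mul_nonneg (abs_nonneg (q t)) (abs_nonneg (W t)))
      linarith) ht).1
    simpa [hY] using this
  have e : ∀ x y : ℝ, 1 * x + -1 * y = x - y := fun x y => by ring
  have := (S.lin S₂ 1 (-1)).gronwall hi hi0 (ρ := fun t => ω * Y * |q t|) (R := ω * Y * X)
    (hq.abs.const_mul _) (fun t => by positivity) hΛ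
    (by rw [intervalIntegral.integral_const_mul]; exact mul_le_mul_of_nonneg_left hX (by positivity)) (by
      refine Eventually.of_forall fun t ht => ?_
      have h1 : 1 * -(q t * (c t * w t)) + -1 * -(q t * (c₂ t * W t)) =
        -(q t * (c t * (w t - W t))) - q t * ((c t - c₂ t) * W t) := by ring
      rw [h1, e]
      refine (abs_sub _ _).trans ?_
      rw [abs_neg, abs_mul, abs_mul, abs_mul, abs_mul]
      have h2 := mul_le_mul_of_nonneg_right (hc t ht) (mul_nonneg (abs_nonneg (q t)) (abs_nonneg (w t - W t)))
      have h3 := mul_le_mul (hω t ht) (hWb t ht) (abs_nonneg _) hω0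
      have h4 := mul_le_mul_of_nonneg_left h3 (abs_nonneg (q t))
      linarith) ht
  simpa only [e] using this

end Sol

theorem first_zero {D : ℝ → ℝ} {x y : ℝ} (hxy : x < y) (hc : ContinuousOn D (Icc x y))
    (hx : ∀ᶠ t in 𝓝[>] x, 0 < D t) (hy : ∃ t ∈ Ioc x y, D t ≤ 0) :
    ∃ z ∈ Ioc x y, D z = 0 ∧ ∀ t ∈ Ioo x z, 0 < D t := by
  obtain ⟨y', hy', hDy⟩ := hy
  obtain ⟨p, hp1, hp2⟩ := (mem_nhdsGT_iff_exists_Ioo_subset' hxy).1 hx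
  set p' := min ((x + p) / 2) y' with hp'
  have hxp : x < p' := lt_min (by have : x < p := hp1; linarith) hy'.1
  have hpp : p' < p := (min_le_left _ _).trans_lt (by have : x < p := hp1; linarith)
  have hpy : p' ≤ y' := min_le_right _ _
  have hcl : IsClosed {t ∈ Icc p' y | D t ≤ 0} := by
    have := (hc.mono (Icc_subset_Icc hxp.le le_rfl)).preimage_isClosed_of_isClosed isClosed_Icc isClosed_Iic (t := Iic 0)
    exact this
  have hne : {t ∈ Icc p' y | D t ≤ 0}.Nonempty := ⟨y', ⟨hpy, hy'.2⟩, hDy⟩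
  have hbd : BddBelow {t ∈ Icc p' y | D t ≤ 0} := ⟨p', fun t ht => ht.1.1⟩
  have hz := hcl.csInf_mem hne hbd
  set z := sInf {t ∈ Icc p' y | D t ≤ 0} with hzdef
  have hlt : ∀ t ∈ Ioo x z, 0 < D t := by
    intro t ht
    rcases lt_or_ge t p' with h | h
    · exact hp2 ⟨ht.1, h.trans hpp⟩
    · by_contra hcon
      have := csInf_le hbd (⟨⟨h, ht.2.le.trans hz.1.2⟩, not_lt.1 hcon⟩ : t ∈ {t ∈ Icc p' y | D t ≤ 0})
      linarith [ht.2]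
  refine ⟨z, ⟨hxp.trans_le hz.1.1, hz.1.2⟩, le_antisymm hz.2 ?_, hlt⟩
  have hxz : x < z := hxp.trans_le hz.1.1
  have hcz : ContinuousWithinAt D (Ioo x z) z :=
    (hc z ⟨hxz.le, hz.1.2⟩).mono (fun t ht => ⟨ht.1.le, ht.2.le.trans hz.1.2⟩)
  have : (𝓝[Ioo x z] z).NeBot := by
    rw [← mem_closure_iff_nhdsWithin_neBot, closure_Ioo hxz.ne]; exact right_mem_Icc.2 hxz.le
  exact ge_of_tendsto hcz (by filter_upwards [self_mem_nhdsWithin] with t ht using (hlt t ht).le)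

theorem pos_right {D : ℝ → ℝ} {x y d : ℝ} (hxy : x < y) (hd : HasDerivWithinAt D d (Icc x y) x)
    (h0 : D x = 0) (hd0 : 0 < d) : ∀ᶠ t in 𝓝[>] x, 0 < D t := by
  have h1 : HasDerivWithinAt D d (Ioi x) x :=
    hd.mono_of_mem_nhdsWithin (mem_of_superset (Ioc_mem_nhdsGT hxy) Ioc_subset_Icc_self)
  have h2 := (hasDerivWithinAt_iff_tendsto_slope' (by simp)).1 h1
  filter_upwards [h2.eventually (lt_mem_nhds hd0), self_mem_nhdsWithin] with t ht ht'
  rw [slope_def_field, h0, sub_zero] at ht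
  have : 0 < t - x := sub_pos.2 ht'
  exact (div_pos_iff_of_pos_right this).1 ht

theorem left_nonpos {D : ℝ → ℝ} {x z d : ℝ} (hxz : x < z) (hd : HasDerivWithinAt D d (Icc x z) z)
    (h0 : D z = 0) (hp : ∀ t ∈ Ioo x z, 0 < D t) : d ≤ 0 := by
  have h1 : HasDerivWithinAt D d (Iio z) z :=
    hd.mono_of_mem_nhdsWithin (mem_of_superset (Ico_mem_nhdsLT hxz) Ico_subset_Icc_self)
  have h2 := (hasDerivWithinAt_iff_tendsto_slope' (by simp)).1 h1
  refine le_of_tendsto h2 ?_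
  filter_upwards [Ioo_mem_nhdsLT hxz] with t ht
  rw [slope_def_field, h0]
  apply div_nonpos_of_nonneg_of_nonpos <;> linarith [hp t ht, ht.2]


/-- weight on a positivity interval -/
structure Wt (H : ℝ → ℝ) (σ τ r η : ℝ) : Prop where
  lt : σ < τ
  int : IntervalIntegrable H volume σ τ
  nn : ∀ t, 0 ≤ H t
  sym : ∀ t, H (σ + τ - t) = H t
  mono : MonotoneOn H (Icc σ ((σ + τ) / 2))
  r0 : 0 < r
  r4 : r ≤ (τ - σ) / 4
  η0 : 0 < η
  bump : ∀ t ∈ Icc ((σ + τ) / 2 - r) ((σ + τ) / 2 + r), η ≤ H t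

namespace Wt
variable {H G G' : ℝ → ℝ} {σ τ r η L : ℝ}

theorem anti (hW : Wt H σ τ r η) : AntitoneOn H (Icc ((σ + τ) / 2) τ) := by
  intro x hx y hy hxy
  rw [← hW.sym x, ← hW.sym y]
  exact hW.mono ⟨by linarith [hy.2], by linarith [hy.1]⟩ ⟨by linarith [hx.2], by linarith [hx.1]⟩ (by linarith)

theorem apriori (hW : Wt H σ τ r η) {K sK : ℝ} (hK : 16 < K * (r * η * (τ - σ))) (hs : 0 < sK)
    (hG0 : ∀ s, 0 ≤ G s) (hGK : ∀ s ≥ sK, K * s ≤ G s) {u v : ℝ → ℝ}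
    (S : Sol σ τ (fun t => -(H t * G (u t))) u v) (hσ : 0 ≤ u σ) (hτ : 0 ≤ u τ) :
    ∀ t ∈ Icc σ τ, 0 ≤ u t ∧ u t ≤ 4 * sK := by
  have hlt := hW.lt
  have hr0 := hW.r0
  have hr4 := hW.r4
  have hη0 := hW.η0
  have hf : ∀ᵐ t, t ∈ Icc σ τ → -(H t * G (u t)) ≤ 0 := Eventually.of_forall fun t _ => by
    have := mul_nonneg (hW.nn t) (hG0 (u t)); linarith
  have hu0 : ∀ t ∈ Icc σ τ, 0 ≤ u t := fun t ht => (le_min hσ hτ).trans (S.min_le hf ht)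
  obtain ⟨x, hx, hmax⟩ := isCompact_Icc.exists_isMaxOn (nonempty_Icc.2 hlt.le) S.cu
  intro t ht
  refine ⟨hu0 t ht, (hmax ht).trans ?_⟩
  by_contra hcon
  rw [not_le] at hcon
  set N := u x with hN
  have hN0 : 0 < N := by linarith
  have hm : ∀ y ∈ Icc σ τ, u y ≤ N := fun y hy => hmax hy
  set ζ := (σ + τ) / 2 with hζ
  have hlow : ∀ t ∈ Icc (ζ - r) (ζ + r), N / 4 ≤ u t := by
    intro t ht
    have htm : t ∈ Icc σ τ := ⟨by linarith [ht.1], by linarith [ht.2]⟩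
    have h1 := S.tan_conc hf htm hx
    have h2 := S.tan_conc hf htm (left_mem_Icc.2 hlt.le)
    have h3 := S.tan_conc hf htm (right_mem_Icc.2 hlt.le)
    have h4 : (τ - σ) / 4 ≤ t - σ := by linarith [ht.1]
    have h5 : (τ - σ) / 4 ≤ τ - t := by linarith [ht.2]
    have hut := hu0 t htm
    have key : N * ((τ - σ) / 4) ≤ u t * (τ - σ) := by
      rcases le_total t x with h | h
      · have a1 : v t * (x - t) * (t - σ) ≤ u t * (x - t) := by
          have : v t * (t - σ) ≤ u t := by linarith
          nlinarith
        have a2 : N * (t - σ) ≤ u t * (t - σ) + v t * (x - t) * (t - σ) := by nlinarith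
        have a3 : u t * (x - σ) ≤ u t * (τ - σ) := mul_le_mul_of_nonneg_left (by linarith [hx.2]) hut
        have a4 : N * ((τ - σ) / 4) ≤ N * (t - σ) := mul_le_mul_of_nonneg_left h4 hN0.le
        nlinarith
      · have a1 : v t * (x - t) * (τ - t) ≤ u t * (t - x) := by
          have : -(v t * (τ - t)) ≤ u t := by linarith
          nlinarith
        have a2 : N * (τ - t) ≤ u t * (τ - t) + v t * (x - t) * (τ - t) := by nlinarith
        have a3 : u t * (τ - x) ≤ u t * (τ - σ) := mul_le_mul_of_nonneg_left (by linarith [hx.1]) hut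
        have a4 : N * ((τ - σ) / 4) ≤ N * (τ - t) := mul_le_mul_of_nonneg_left h5 hN0.le
        nlinarith
    have : 0 < τ - σ := by linarith
    nlinarith
  have m1 : ζ - r ∈ Icc σ τ := ⟨by linarith, by linarith⟩
  have m2 : ζ + r ∈ Icc σ τ := ⟨by linarith, by linarith⟩
  have e1 := S.dv m1 m2
  have K0 : 0 < K := by
    by_contra h
    have : K * (r * η * (τ - σ)) ≤ 0 := mul_nonpos_of_nonpos_of_nonneg (not_lt.1 h)
      (by have : 0 < τ - σ := by linarith
          positivity)
    linarith
  have e2 : ∫ s in (ζ - r)..(ζ + r), -(H s * G (u s)) ≤ ∫ s in (ζ - r)..(ζ + r), -(η * (K * (N / 4))) := by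
    refine intervalIntegral.integral_mono_on (by linarith) (ii_sub S.int m1 m2) (by simp) fun t ht => ?_
    have b1 := hW.bump t ht
    have b2 := hlow t ht
    have b3 := hGK (u t) (by linarith)
    have b4 : K * (N / 4) ≤ G (u t) := (mul_le_mul_of_nonneg_left b2 K0.le).trans b3
    have := mul_le_mul b1 b4 (by positivity) (hW.nn t)
    linarith
  rw [intervalIntegral.integral_const, smul_eq_mul] at e2
  have e3 := S.tan_conc hf m1 (left_mem_Icc.2 hlt.le)
  have e4 := S.tan_conc hf m2 (right_mem_Icc.2 hlt.le)
  have e5 := hm _ m1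
  have e6 := hm _ m2
  have hℓ : 0 < τ - σ := by linarith
  have e7 : v (ζ - r) * (τ - σ) ≤ 4 * N := by
    rcases le_total (v (ζ - r)) 0 with h | h
    · nlinarith
    · have : v (ζ - r) * ((τ - σ) / 4) ≤ v (ζ - r) * (ζ - r - σ) :=
        mul_le_mul_of_nonneg_left (by linarith) h
      nlinarith
  have e8 : -v (ζ + r) * (τ - σ) ≤ 4 * N := by
    rcases le_total (-v (ζ + r)) 0 with h | h
    · nlinarith
    · have : -v (ζ + r) * ((τ - σ) / 4) ≤ -v (ζ + r) * (τ - (ζ + r)) :=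
        mul_le_mul_of_nonneg_left (by linarith) h
      nlinarith
  have e9 : 2 * r * (η * (K * (N / 4))) ≤ v (ζ - r) - v (ζ + r) := by linarith
  have e10 : 2 * r * (η * (K * (N / 4))) * (τ - σ) ≤ 8 * N := by
    have := mul_le_mul_of_nonneg_right e9 hℓ.le
    nlinarith
  have : K * (r * η * (τ - σ)) * N ≤ 16 * N := by nlinarith
  nlinarith

theorem velo (hW : Wt H σ τ r η) (N : Nl G G' L) {M : ℝ} {u v : ℝ → ℝ}
    (S : Sol σ τ (fun t => -(H t * G (u t))) u v) (hu : ∀ t ∈ Icc σ τ, 0 ≤ u t ∧ u t ≤ M) :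
    ∀ t ∈ Icc σ τ, |v t| ≤ M / (τ - σ) + (∫ s in σ..τ, H s) * (L * M) := by
  have hlt := hW.lt
  have hl := left_mem_Icc.2 hlt.le
  have hr := right_mem_Icc.2 hlt.le
  have hf : ∀ᵐ t, t ∈ Icc σ τ → -(H t * G (u t)) ≤ 0 := Eventually.of_forall fun t _ => by
    have := mul_nonneg (hW.nn t) (N.G0 (u t)); linarith
  have h1 := S.tan_conc hf hl hr
  have h2 := S.tan_conc hf hr hl
  have hℓ : 0 < τ - σ := by linarith
  have h3 : v τ ≤ M / (τ - σ) := by rw [le_div_iff₀ hℓ]; linarith [(hu _ hl).2, (hu _ hr).1, (hu _ hl).1, (hu _ hr).2]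
  have h4 : - v σ ≤ M / (τ - σ) := by rw [le_div_iff₀ hℓ]; linarith [(hu _ hl).2, (hu _ hr).1, (hu _ hl).1, (hu _ hr).2]
  have h5 : ∫ s in σ..τ, (-(L * M)) * H s ≤ ∫ s in σ..τ, -(H s * G (u s)) := by
    refine intervalIntegral.integral_mono_on hlt.le (hW.int.const_mul _) S.int fun t ht => ?_
    have a1 := N.lip0 (u t)
    rw [abs_of_nonneg (N.G0 _), abs_of_nonneg (hu t ht).1] at a1
    have a2 := mul_le_mul_of_nonneg_left (hu t ht).2 N.L0
    have := mul_le_mul_of_nonneg_left (a1.trans a2) (hW.nn t)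
    linarith
  rw [intervalIntegral.integral_const_mul] at h5
  have h6 := S.dv hl hr
  intro t ht
  have h7 := S.vanti hf hl ht ht.1
  have h8 := S.vanti hf ht hr ht.2
  rw [abs_le]; constructor <;> linarith

/-- the integral of `H` against a positive function near the centre is positive -/
theorem int_pos (hW : Wt H σ τ r η) {x y : ℝ} (hxy : x ≤ y) (hx : x ∈ Icc σ ((σ + τ) / 2)) (hy : (σ + τ) / 2 < y) (hyτ : y ≤ τ)
    {φ : ℝ → ℝ} (hφ : ContinuousOn φ (Icc σ τ)) (h0 : ∀ t ∈ Icc x y, 0 ≤ φ t)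
    (hp : ∀ t ∈ Ioo ((σ + τ) / 2) y, 0 < φ t) : 0 < ∫ s in x..y, H s * φ s := by
  set ζ := (σ + τ) / 2 with hζ
  have hlt := hW.lt
  have hr0 := hW.r0
  have hr4 := hW.r4
  have hη0 := hW.η0
  set e := min (ζ + r) y with he
  have hζe : ζ < e := lt_min (by linarith) hy
  have hey : e ≤ y := min_le_right _ _
  have mx : x ∈ Icc σ τ := ⟨hx.1, by linarith [hx.2]⟩
  have mζ : ζ ∈ Icc σ τ := ⟨by linarith, by linarith⟩
  have me : e ∈ Icc σ τ := ⟨by linarith, by linarith⟩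
  have my : y ∈ Icc σ τ := ⟨by linarith, by linarith⟩
  have hI : IntervalIntegrable (fun s => H s * φ s) volume σ τ :=
    hW.int.mul_continuousOn (by rwa [uIcc_of_le hlt.le])
  have s1 := intervalIntegral.integral_add_adjacent_intervals (ii_sub hI mx mζ) (ii_sub hI mζ me)
  have s2 := intervalIntegral.integral_add_adjacent_intervals (ii_sub hI mx me) (ii_sub hI me my)
  have p1 : 0 ≤ ∫ s in x..ζ, H s * φ s := intervalIntegral.integral_nonneg hx.2 fun t ht =>
    mul_nonneg (hW.nn t) (h0 t ⟨ht.1, ht.2.trans hy.le⟩)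
  have p2 : 0 ≤ ∫ s in e..y, H s * φ s := intervalIntegral.integral_nonneg hey fun t ht =>
    mul_nonneg (hW.nn t) (h0 t ⟨by linarith [ht.1, hx.2], ht.2⟩)
  have hφi : IntervalIntegrable (fun s => η * φ s) volume ζ e := by
    apply ContinuousOn.intervalIntegrable
    exact continuousOn_const.mul (hφ.mono (uIcc_subset_Icc mζ me))
  have p3 : 0 < ∫ s in ζ..e, η * φ s := by
    apply intervalIntegral.intervalIntegral_pos_of_pos_on hφi _ hζe
    intro t ht
    exact mul_pos hη0 (hp t ⟨ht.1, ht.2.trans_le hey⟩)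
  have p4 : ∫ s in ζ..e, η * φ s ≤ ∫ s in ζ..e, H s * φ s := by
    refine intervalIntegral.integral_mono_on hζe.le hφi (ii_sub hI mζ me) fun t ht => ?_
    refine mul_le_mul_of_nonneg_right (hW.bump t ⟨by linarith [ht.1], ht.2.trans (min_le_left _ _)⟩) ?_
    exact h0 t ⟨by linarith [ht.1, hx.2], ht.2.trans hey⟩
  linarith

theorem not_pos (hW : Wt H σ τ r η) (N : Nl G G' L) {u v : ℝ → ℝ}
    (S : Sol σ τ (fun t => -(H t * G (u t))) u v) (hσ : u σ = 0) (hτ : u τ = 0) :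
    v ((σ + τ) / 2) ≤ 0 := by
  by_contra hcon
  rw [not_le] at hcon
  set ζ := (σ + τ) / 2 with hζ
  have hlt := hW.lt
  have hf : ∀ᵐ t, t ∈ Icc σ τ → -(H t * G (u t)) ≤ 0 := Eventually.of_forall fun t _ => by
    have := mul_nonneg (hW.nn t) (N.G0 (u t)); linarith
  have hva := S.vanti hf
  have S₀ := S.refl (σ + τ)
  rw [show σ + τ - τ = σ by ring, show σ + τ - σ = τ by ring] at S₀
  simp only [hW.sym] at S₀
  set U := fun t => u (σ + τ - t) with hU
  set V := fun t => - v (σ + τ - t) with hV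
  have hζτ : ζ < τ := by linarith
  have S1 := S.sub (by linarith : σ ≤ ζ) hζτ.le le_rfl
  have S2 := S₀.sub (by linarith : σ ≤ ζ) hζτ.le le_rfl
  have SD := S1.lin S2 1 (-1)
  have hUζ : U ζ = u ζ := by simp only [hU]; congr 1; linarith
  have hVζ : V ζ = - v ζ := by simp only [hV]; congr 2; linarith
  have hr := pos_right hζτ (SD.deriv (left_mem_Icc.2 hζτ.le)) (by simp only [hUζ]; ring)
    (by simp only [hVζ]; linarith)
  obtain ⟨z, hz, hDz, hDp⟩ := first_zero hζτ SD.cu hr ⟨τ, right_mem_Ioc.2 hζτ, by simp [hU, hσ, hτ]⟩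
  have zm : z ∈ Icc ζ τ := ⟨hz.1.le, hz.2⟩
  have SDz := SD.sub le_rfl hz.1.le hz.2
  have hd := left_nonpos hz.1 (SDz.deriv (right_mem_Icc.2 hz.1.le)) hDz hDp
  have hne : 1 * v z + -1 * V z ≠ 0 := by
    intro h0
    have := (SD.zero_all (k := fun t => L * |H t|) ((ii_sub hW.int ⟨by linarith, by linarith⟩ (right_mem_Icc.2 hlt.le)).abs.const_mul L)
      (fun t => by have := N.L0; positivity) (by
        refine Eventually.of_forall fun t _ => ?_
        have h1 : 1 * -(H t * G (u t)) + -1 * -(H t * G (U t)) = -(H t * (G (u t) - G (U t))) := by ring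
        have h2 : 1 * u t + -1 * U t = u t - U t := by ring
        change |1 * -(H t * G (u t)) + -1 * -(H t * G (U t))| ≤ _
        rw [h1, h2, abs_neg, abs_mul]
        have := mul_le_mul_of_nonneg_left (N.lip (u t) (U t)) (abs_nonneg (H t))
        linarith) zm hDz h0 (left_mem_Icc.2 hζτ.le)).2
    simp only [hVζ] at this
    linarith
  have hlt' : v z < V z := by
    rcases lt_or_eq_of_le hd with h | h
    · linarith
    · exact absurd h hne
  have hV0 : V z < 0 := by
    have := hva (a := σ + τ - z) (b := ζ) ⟨by linarith [hz.2], by linarith [hz.1]⟩ ⟨by linarith, hζτ.le⟩ (by linarith [hz.1])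
    simp only [hV]; linarith
  -- energy
  have Sz1 := S1.sub le_rfl hz.1.le hz.2
  have Sz2 := S2.sub le_rfl hz.1.le hz.2
  have E1 := prod_parts hz.1.le Sz1.int Sz1.int Sz1.ev Sz1.ev
  have E2 := prod_parts hz.1.le Sz2.int Sz2.int Sz2.ev Sz2.ev
  have hΓ : ∀ x, HasDerivAt (fun x => ∫ s in (0:ℝ)..x, G s) (G x) x := fun x =>
    (N.cont.integral_hasStrictDerivAt 0 x).hasDerivAt
  have hzτ : Icc ζ z ⊆ Icc σ τ := fun t ht => ⟨by linarith [ht.1], ht.2.trans hz.2⟩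
  have A := anti_int hz.1.le (h := H) (k := fun t => (∫ s in (0:ℝ)..u t, G s) - ∫ s in (0:ℝ)..U t, G s)
    (k' := fun t => G (u t) * v t - G (U t) * V t)
    (hW.anti.mono (Icc_subset_Icc le_rfl hz.2))
    (fun t ht => ((hΓ (u t)).comp_hasDerivWithinAt t (Sz1.deriv ht)).sub
      ((hΓ (U t)).comp_hasDerivWithinAt t (Sz2.deriv ht)))
    (((N.cont.comp_continuousOn Sz1.cu).mul Sz1.cv).sub ((N.cont.comp_continuousOn Sz2.cu).mul Sz2.cv))
    (fun t ht => by
      have hle : U t ≤ u t := by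
        rcases eq_or_lt_of_le ht.1 with h | h
        · rw [← h, hUζ]
        rcases eq_or_lt_of_le ht.2 with h' | h'
        · rw [h']; linarith
        · have := hDp t ⟨h, h'⟩; linarith
      rw [intervalIntegral.integral_interval_sub_left (N.cont.intervalIntegrable _ _) (N.cont.intervalIntegrable _ _)]
      exact intervalIntegral.integral_nonneg hle fun s _ => N.G0 s)
    (by simp only [hUζ, sub_self]) (by
      have : u z = U z := by linarith
      rw [this, sub_self])
  have i1 : IntervalIntegrable (fun s => -(H s * G (u s)) * v s) volume ζ z :=
    Sz1.int.mul_continuousOn (by rw [uIcc_of_le hz.1.le]; exact Sz1.cv)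
  have i2 : IntervalIntegrable (fun s => -(H s * G (U s)) * V s) volume ζ z :=
    Sz2.int.mul_continuousOn (by rw [uIcc_of_le hz.1.le]; exact Sz2.cv)
  have e1 : ∫ s in ζ..z, (-(H s * G (u s)) * v s + v s * -(H s * G (u s))) =
      2 * ∫ s in ζ..z, -(H s * G (u s)) * v s := by
    rw [← intervalIntegral.integral_const_mul]; congr 1; ext s; ring
  have e2 : ∫ s in ζ..z, (-(H s * G (U s)) * V s + V s * -(H s * G (U s))) =
      2 * ∫ s in ζ..z, -(H s * G (U s)) * V s := by
    rw [← intervalIntegral.integral_const_mul]; congr 1; ext s; ring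
  have e3 : ∫ s in ζ..z, H s * (G (u s) * v s - G (U s) * V s) =
      (∫ s in ζ..z, -(H s * G (U s)) * V s) - ∫ s in ζ..z, -(H s * G (u s)) * v s := by
    rw [← intervalIntegral.integral_sub i2 i1]; congr 1; ext s; ring
  rw [e1] at E1
  change ∫ s in ζ..z, (-(H s * G (U s)) * V s + V s * -(H s * G (U s))) = _ at E2
  rw [e2, hVζ] at E2
  rw [e3] at A
  nlinarith

theorem v_mid (hW : Wt H σ τ r η) (N : Nl G G' L) {u v : ℝ → ℝ}
    (S : Sol σ τ (fun t => -(H t * G (u t))) u v) (hσ : u σ = 0) (hτ : u τ = 0) :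
    v ((σ + τ) / 2) = 0 := by
  refine le_antisymm (hW.not_pos N S hσ hτ) ?_
  have S₀ := S.refl (σ + τ)
  rw [show σ + τ - τ = σ by ring, show σ + τ - σ = τ by ring] at S₀
  simp only [hW.sym] at S₀
  have := hW.not_pos N S₀ (by simp [hτ]) (by simp [hσ])
  rw [show σ + τ - (σ + τ) / 2 = (σ + τ) / 2 by ring] at this
  linarith

end Wt


namespace Wt
variable {H G G' : ℝ → ℝ} {σ τ r η L : ℝ}

theorem dir_pos (hW : Wt H σ τ r η) (N : Nl G G' L) {u v : ℝ → ℝ}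
    (S : Sol σ τ (fun t => -(H t * G (u t))) u v) (hσ : u σ = 0) (hτ : u τ = 0) (hv : 0 < v σ) :
    ∀ t ∈ Ioo σ τ, 0 < u t := by
  have hlt := hW.lt
  have hf : ∀ᵐ t, t ∈ Icc σ τ → -(H t * G (u t)) ≤ 0 := Eventually.of_forall fun t _ => by
    have := mul_nonneg (hW.nn t) (N.G0 (u t)); linarith
  have hu0 : ∀ t ∈ Icc σ τ, 0 ≤ u t := fun t ht => (le_min hσ.ge hτ.ge).trans (S.min_le hf ht)
  intro t ht
  have tm : t ∈ Icc σ τ := Ioo_subset_Icc_self ht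
  rcases (hu0 t tm).lt_or_eq with h | h
  · exact h
  exfalso
  have h1 := S.tan_conc hf tm (left_mem_Icc.2 hlt.le)
  have h2 := S.tan_conc hf tm (right_mem_Icc.2 hlt.le)
  have : v t = 0 := by
    apply le_antisymm
    · by_contra hc; nlinarith [ht.1]
    · by_contra hc; nlinarith [ht.2]
  have := (S.zero_all (k := fun t => L * |H t|) (hW.int.abs.const_mul L)
      (fun t => by have := N.L0; positivity) (by
        refine Eventually.of_forall fun t _ => ?_
        rw [abs_neg, abs_mul]
        have := mul_le_mul_of_nonneg_left (N.lip0 (u t)) (abs_nonneg (H t))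
        linarith) tm h.symm this (left_mem_Icc.2 hlt.le)).2
  linarith

theorem lin_end (hW : Wt H σ τ r η) (N : Nl G G' L) {u v w w' : ℝ → ℝ}
    (S : Sol σ τ (fun t => -(H t * G (u t))) u v) (hσ : u σ = 0) (hτ : u τ = 0) (hv : 0 < v σ)
    (SW : Sol σ τ (fun t => -(H t * (G' (u t) * w t))) w w') (hwσ : w σ = 0) (hw'σ : w' σ = 1) :
    w τ < 0 ∧ v τ < 0 := by
  have hlt := hW.lt
  have hl := left_mem_Icc.2 hlt.le
  have hr := right_mem_Icc.2 hlt.le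
  have hf : ∀ᵐ t, t ∈ Icc σ τ → -(H t * G (u t)) ≤ 0 := Eventually.of_forall fun t _ => by
    have := mul_nonneg (hW.nn t) (N.G0 (u t)); linarith
  have hva := S.vanti hf
  have hpos := hW.dir_pos N S hσ hτ hv
  have hu0 : ∀ t ∈ Icc σ τ, 0 ≤ u t := fun t ht => (le_min hσ.ge hτ.ge).trans (S.min_le hf ht)
  have hmid := hW.v_mid N S hσ hτ
  set ζ := (σ + τ) / 2 with hζ
  have mζ : ζ ∈ Icc σ τ := ⟨by linarith, by linarith⟩
  have hG'c : Continuous G' := N.uc.continuous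
  have cφ : ContinuousOn (fun t => G (u t)) (Icc σ τ) := N.cont.comp_continuousOn S.cu
  have hvneg : ∀ z ∈ Ioc ζ τ, v z < 0 := by
    intro z hz
    have e := S.dv mζ ⟨mζ.1.trans hz.1.le, hz.2⟩
    have p := hW.int_pos hz.1.le ⟨mζ.1, le_rfl⟩ hz.1 hz.2 cφ (fun t _ => N.G0 _)
      (fun t ht => N.pos _ (hpos t ⟨by linarith [ht.1, mζ.1], ht.2.trans_le hz.2⟩))
    rw [intervalIntegral.integral_neg, hmid] at e
    linarith
  refine ⟨?_, hvneg τ ⟨by linarith, le_rfl⟩⟩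
  -- the product identity
  have prod : ∀ x ∈ Icc σ τ, ∀ z ∈ Icc σ τ, x ≤ z →
      ∫ s in x..z, H s * (G' (u s) * v s * w s + G (u s) * w' s) = v x * w' x - v z * w' z := by
    intro x hx z hz hxz
    have Sx := S.sub hx.1 hxz hz.2
    have Wx := SW.sub hx.1 hxz hz.2
    have E := prod_parts hxz Sx.int Wx.int Sx.ev Wx.ev
    have : ∫ s in x..z, H s * (G' (u s) * v s * w s + G (u s) * w' s) =
      - ∫ s in x..z, (-(H s * G (u s)) * w' s + v s * -(H s * (G' (u s) * w s))) := by
      rw [← intervalIntegral.integral_neg]; congr 1; ext s; ring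
    rw [this, E]; ring
  have kd : ∀ x ∈ Icc σ τ, ∀ z ∈ Icc σ τ, x ≤ z → ∀ t ∈ Icc x z,
      HasDerivWithinAt (fun t => G (u t) * w t) (G' (u t) * v t * w t + G (u t) * w' t) (Icc x z) t := by
    intro x hx z hz hxz t ht
    exact ((N.d (u t)).comp_hasDerivWithinAt t ((S.sub hx.1 hxz hz.2).deriv ht)).mul
      ((SW.sub hx.1 hxz hz.2).deriv ht)
  have kc : ContinuousOn (fun t => G' (u t) * v t * w t + G (u t) * w' t) (Icc σ τ) :=
    (((hG'c.comp_continuousOn S.cu).mul S.cv).mul SW.cu).add (cφ.mul SW.cv)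
  have nz : ∀ z ∈ Icc σ τ, w z = 0 → w' z ≠ 0 := by
    intro z hz h1 h2
    have := (SW.zero_all (k := fun t => L * |H t|) (hW.int.abs.const_mul L)
      (fun t => by have := N.L0; positivity) (by
        refine Eventually.of_forall fun t _ => ?_
        rw [abs_neg, abs_mul, abs_mul, abs_of_nonneg (N.nn _)]
        have := mul_le_mul_of_nonneg_right (N.le (u t)) (mul_nonneg (abs_nonneg (H t)) (abs_nonneg (w t)))
        linarith) hz h1 h2 hl).2
    linarith
  -- first zero of w exists in (σ,τ)
  have hex : ∃ t ∈ Ioo σ τ, w t ≤ 0 := by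
    by_contra hcon
    push Not at hcon
    have hwτ : 0 ≤ w τ := by
      have hcz : ContinuousWithinAt w (Ioo σ τ) τ := (SW.cu τ hr).mono Ioo_subset_Icc_self
      have : (𝓝[Ioo σ τ] τ).NeBot := by
        rw [← mem_closure_iff_nhdsWithin_neBot, closure_Ioo hlt.ne]; exact hr
      exact ge_of_tendsto hcz (by filter_upwards [self_mem_nhdsWithin] with t ht using (hcon t ht).le)
    have E1 := prod_parts hlt.le S.cv' SW.int S.eu SW.ev
    have E2 := prod_parts hlt.le SW.cv' S.int SW.eu S.ev
    have cc : ContinuousOn (fun t => w t * (u t * G' (u t) - G (u t))) (Icc σ τ) :=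
      SW.cu.mul ((S.cu.mul (hG'c.comp_continuousOn S.cu)).sub cφ)
    have p := hW.int_pos (x := σ) hlt.le ⟨le_rfl, by linarith⟩ (by linarith) le_rfl cc (fun t ht => by
      rcases eq_or_lt_of_le ht.1 with h | h
      · rw [← h, hwσ]; simp
      rcases eq_or_lt_of_le ht.2 with h' | h'
      · rw [h', hτ, N.z 0 le_rfl]; simp
      · exact (mul_pos (hcon t ⟨h, h'⟩) (by linarith [N.s _ (hpos t ⟨h, h'⟩)])).le)
      (fun t ht => by
        have ht' : t ∈ Ioo σ τ := ⟨by linarith [ht.1], ht.2⟩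
        exact mul_pos (hcon t ht') (by linarith [N.s _ (hpos t ht')]))
    have i1 : IntervalIntegrable (fun s => v s * w' s + u s * -(H s * (G' (u s) * w s))) volume σ τ :=
      (S.cv'.mul_continuousOn (by rw [uIcc_of_le hlt.le]; exact SW.cv)).add
        (SW.int.continuousOn_mul (by rw [uIcc_of_le hlt.le]; exact S.cu))
    have i2 : IntervalIntegrable (fun s => w' s * v s + w s * -(H s * G (u s))) volume σ τ :=
      (SW.cv'.mul_continuousOn (by rw [uIcc_of_le hlt.le]; exact S.cv)).add
        (S.int.continuousOn_mul (by rw [uIcc_of_le hlt.le]; exact SW.cu))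
    have e : ∫ s in σ..τ, H s * (w s * (u s * G' (u s) - G (u s))) =
        (∫ s in σ..τ, (w' s * v s + w s * -(H s * G (u s)))) -
        ∫ s in σ..τ, (v s * w' s + u s * -(H s * (G' (u s) * w s))) := by
      rw [← intervalIntegral.integral_sub i2 i1]; congr 1; ext s; ring
    rw [e, E1, E2, hσ, hτ, hwσ] at p
    have := mul_nonpos_of_nonneg_of_nonpos hwτ (hvneg τ ⟨by linarith, le_rfl⟩).le
    linarith
  obtain ⟨t₁, ht₁, hwt₁⟩ := hex
  have hr0 := pos_right hlt (SW.deriv hl) hwσ (by rw [hw'σ]; exact one_pos)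
  obtain ⟨z, hz, hwz, hwp⟩ := first_zero hlt SW.cu hr0 ⟨t₁, ⟨ht₁.1, ht₁.2.le⟩, hwt₁⟩
  have hzτ : z < τ := by
    by_contra h
    have : t₁ ∈ Ioo σ z := ⟨ht₁.1, ht₁.2.trans_le (not_lt.1 h)⟩
    linarith [hwp t₁ this]
  have zm : z ∈ Icc σ τ := ⟨hz.1.le, hz.2⟩
  have hw'z : w' z < 0 := lt_of_le_of_ne
    (left_nonpos hz.1 ((SW.sub le_rfl hz.1.le hz.2).deriv (right_mem_Icc.2 hz.1.le)) hwz hwp) (nz z zm hwz)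
  have hzζ : ζ < z := by
    by_contra h
    rw [not_lt] at h
    have M := mono_int hz.1.le (h := H) (hW.mono.mono (Icc_subset_Icc le_rfl h)) (kd σ hl z zm hz.1.le)
      (kc.mono (Icc_subset_Icc le_rfl hz.2)) (fun t ht => by
        rcases eq_or_lt_of_le ht.1 with h | h
        · rw [← h, hwσ]; simp
        rcases eq_or_lt_of_le ht.2 with h' | h'
        · rw [h', hwz]; simp
        · exact mul_nonneg (N.G0 _) (hwp t ⟨h, h'⟩).le) (by simp [hwσ]) (by simp [hwz])
    rw [prod σ hl z zm hz.1.le, hw'σ] at M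
    have := hva zm mζ h
    nlinarith
  by_contra hcon
  rw [not_lt] at hcon
  have SWz := SW.sub zm.1 zm.2 le_rfl
  have SWn := SWz.smul (-1)
  have hrz := pos_right hzτ (SWn.deriv (left_mem_Icc.2 hzτ.le)) (by simp [hwz]) (by linarith)
  obtain ⟨y, hy, hwy, hyp⟩ := first_zero hzτ SWn.cu hrz ⟨τ, right_mem_Ioc.2 hzτ, by linarith⟩
  have ym : y ∈ Icc σ τ := ⟨zm.1.trans hy.1.le, hy.2⟩
  have hw'y := left_nonpos hy.1 ((SWn.sub le_rfl hy.1.le hy.2).deriv (right_mem_Icc.2 hy.1.le)) hwy hyp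
  have A := anti_int hy.1.le (h := H) (hW.anti.mono (Icc_subset_Icc hzζ.le hy.2))
    (fun t ht => (kd z zm y ym hy.1.le t ht).neg)
    ((kc.mono (Icc_subset_Icc zm.1 hy.2)).neg) (fun t ht => by
        rcases eq_or_lt_of_le ht.1 with h | h
        · rw [← h]; simp [hwz]
        rcases eq_or_lt_of_le ht.2 with h' | h'
        · have : w y = 0 := by linarith
          rw [h']; simp [this]
        · have := hyp t ⟨h, h'⟩
          have h2 : 0 ≤ - w t := by linarith
          have := mul_nonneg (N.G0 (u t)) h2
          simp only [Pi.neg_apply]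
          linarith) (by simp [hwz]) (by
          have : w y = 0 := by linarith
          simp [this])
  simp only [Pi.neg_apply, mul_neg, intervalIntegral.integral_neg] at A
  rw [prod z zm y ym hy.1.le] at A
  have h1 := hvneg z ⟨hzζ, hz.2⟩
  have h2 := hvneg y ⟨hzζ.trans hy.1, hy.2⟩
  nlinarith

end Wt


theorem Nl.slope {G G' : ℝ → ℝ} {L : ℝ} (N : Nl G G' L) (x y : ℝ) : ∃ c, (∃ ξ ∈ uIcc x y, c = G' ξ) ∧
    G x - G y = c * (x - y) ∧ (0 ≤ x → 0 ≤ y → G x ≤ c * x) := by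
  rcases lt_trichotomy x y with h | h | h
  · obtain ⟨ξ, h1, h2⟩ := N.mvt x y
    refine ⟨G' ξ, ⟨ξ, h1, rfl⟩, h2, fun hx hy => ?_⟩
    rcases hx.eq_or_lt with h0 | h0
    · rw [← h0, N.z 0 le_rfl]; simp
    · have := N.ratio h0 h.le
      have h3 : G y = G x + G' ξ * (y - x) := by linarith
      rw [h3] at this
      have : G x * (y - x) ≤ G' ξ * x * (y - x) := by linarith
      exact le_of_mul_le_mul_right this (by linarith)
  · subst h
    refine ⟨G' x, ⟨x, by simp, rfl⟩, by simp, fun hx _ => ?_⟩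
    rcases hx.eq_or_lt with h0 | h0
    · rw [← h0, N.z 0 le_rfl]; simp
    · linarith [N.s x h0]
  · obtain ⟨ξ, h1, h2⟩ := N.mvt x y
    refine ⟨G' ξ, ⟨ξ, h1, rfl⟩, h2, fun hx hy => ?_⟩
    rcases hy.eq_or_lt with h0 | h0
    · rw [← h0, N.z 0 le_rfl] at h2; linarith
    · have := N.ratio h0 h.le
      have h3 : G y = G x - G' ξ * (x - y) := by linarith
      rw [h3] at this
      have : G x * (x - y) ≤ G' ξ * x * (x - y) := by linarith
      exact le_of_mul_le_mul_right this (by linarith)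

theorem lin_ext {α β : ℝ} (hαβ : α ≤ β) {q c : ℝ → ℝ} (hq : IntervalIntegrable q volume α β)
    (hc : ContinuousOn c (Icc α β)) (x s : ℝ) :
    ∃ w w', Sol α β (fun t => -(q t * (c t * w t))) w w' ∧ w α = x ∧ w' α = s := by
  obtain ⟨w, w', S, h1, h2⟩ := exists_sol hαβ (q := fun t => q t * c t) (G := fun x => x) (L := 1)
    (hq.mul_continuousOn (by rwa [uIcc_of_le hαβ])) (fun x y => by simp) x s
  exact ⟨w, w', S.congr (Eventually.of_forall fun t _ => by ring), h1, h2⟩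

/-- difference of two solutions solves a linear equation -/
theorem Sol.quot {α β : ℝ} {q G G' u v u₂ v₂ : ℝ → ℝ} {L : ℝ} (N : Nl G G' L)
    (S : Sol α β (fun t => -(q t * G (u t))) u v) (S₂ : Sol α β (fun t => -(q t * G (u₂ t))) u₂ v₂) (d : ℝ) :
    ∃ c : ℝ → ℝ, (∀ t, (∃ ξ ∈ uIcc (u t) (u₂ t), c t = G' ξ)) ∧
      (∀ t, 0 ≤ u t → 0 ≤ u₂ t → G (u t) ≤ c t * u t) ∧
      Sol α β (fun t => -(q t * (c t * (d * u t + -d * u₂ t)))) (fun t => d * u t + -d * u₂ t)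
        (fun t => d * v t + -d * v₂ t) := by
  choose c h1 h2 h3 using fun t => N.slope (u t) (u₂ t)
  refine ⟨c, h1, h3, (S.lin S₂ d (-d)).congr (Eventually.of_forall fun t _ => ?_)⟩
  linear_combination (-(d * q t)) * h2 t

namespace Wt
variable {H G G' : ℝ → ℝ} {σ τ r η L : ℝ}

theorem near (hW : Wt H σ τ r η) (N : Nl G G' L) {U V : ℝ → ℝ}
    (S : Sol σ τ (fun t => -(H t * G (U t))) U V) (hσ : U σ = 0) (hτ : U τ = 0) (hv : 0 < V σ) :
    ∃ θ > 0, ∃ κ > 0, ∃ C > 0, ∀ u₁ v₁ u₂ v₂ c w w' : ℝ → ℝ,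
      Sol σ τ (fun t => -(H t * G (u₁ t))) u₁ v₁ → Sol σ τ (fun t => -(H t * G (u₂ t))) u₂ v₂ →
      |u₁ σ| ≤ θ → |u₂ σ| ≤ θ → |v₁ σ - V σ| ≤ θ → |v₂ σ - V σ| ≤ θ →
      (∀ t ∈ Icc σ τ, ∃ ξ ∈ uIcc (u₁ t) (u₂ t), c t = G' ξ) →
      Sol σ τ (fun t => -(H t * (c t * w t))) w w' → w' σ = 1 → |w σ| ≤ θ →
      w τ ≤ -κ ∧ |w' τ| ≤ C ∧ v₁ τ ≤ -κ := by
  have hlt := hW.lt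
  have hr := right_mem_Icc.2 hlt.le
  obtain ⟨W, W', SW, hW0, hW1⟩ := lin_ext hlt.le hW.int (N.uc.continuous.comp_continuousOn S.cu) 0 1
  change Sol σ τ (fun t => -(H t * (G' (U t) * W t))) W W' at SW
  obtain ⟨e1, e2⟩ := hW.lin_end N S hσ hτ hv SW hW0 hW1
  set Λ := ∫ s in σ..τ, L * |H s| with hΛ
  set X := ∫ s in σ..τ, |H s| with hX
  have hX0 : 0 ≤ X := intervalIntegral.integral_nonneg hlt.le fun s _ => abs_nonneg _
  have hΛ0 : 0 ≤ Λ := intervalIntegral.integral_nonneg hlt.le fun s _ => mul_nonneg N.L0 (abs_nonneg _)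
  set B := Sol.Bd (τ - σ) Λ with hB
  have hB1 : 1 ≤ B := Sol.Bd_pos (by linarith) hΛ0
  set κ := min (-W τ) (-V τ) / 2 with hκ
  have hκ0 : 0 < κ := by have : 0 < min (-W τ) (-V τ) := lt_min (by linarith) (by linarith)
                         linarith
  have hκ1 : κ ≤ -W τ / 2 := by have := min_le_left (-W τ) (-V τ); linarith
  have hκ2 : κ ≤ -V τ / 2 := by have := min_le_right (-W τ) (-V τ); linarith
  set ω := κ / (2 * B * (B * X + 1)) with hω
  have hω0 : 0 < ω := by positivity
  obtain ⟨δ, hδ, huc⟩ := Metric.uniformContinuous_iff.1 N.uc ω hω0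
  set θ := min (δ / (4 * B)) (κ / (4 * B)) with hθ
  have hθ0 : 0 < θ := by positivity
  have b1 : B * θ ≤ δ / 4 := by
    calc B * θ ≤ B * (δ / (4 * B)) := by gcongr; exact min_le_left _ _
      _ = δ / 4 := by field_simp
  have b2 : B * θ ≤ κ / 4 := by
    calc B * θ ≤ B * (κ / (4 * B)) := by gcongr; exact min_le_right _ _
      _ = κ / 4 := by field_simp
  refine ⟨θ, hθ0, κ, hκ0, |W' τ| + κ, by positivity, ?_⟩
  intro u₁ v₁ u₂ v₂ c w w' S₁ S₂ h1 h2 h3 h4 hc Sw hw' hw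
  have d1 : ∀ t ∈ Icc σ τ, |u₁ t - U t| ≤ δ / 2 ∧ |v₁ t - V t| ≤ κ := fun t ht => by
    have := S₁.dep N.lip S hW.int le_rfl ht
    rw [hσ, sub_zero] at this
    have h5 : B * (|u₁ σ| + |v₁ σ - V σ|) ≤ B * (2 * θ) := by gcongr; linarith
    exact ⟨this.1.trans (h5.trans (by linarith)), this.2.trans (h5.trans (by linarith))⟩
  have d2 : ∀ t ∈ Icc σ τ, |u₂ t - U t| ≤ δ / 2 := fun t ht => by
    have := S₂.dep N.lip S hW.int le_rfl ht
    rw [hσ, sub_zero] at this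
    have h5 : B * (|u₂ σ| + |v₂ σ - V σ|) ≤ B * (2 * θ) := by gcongr; linarith
    exact this.1.trans (h5.trans (by linarith))
  have hcL : ∀ t ∈ Icc σ τ, |c t| ≤ L ∧ |c t - G' (U t)| ≤ ω := fun t ht => by
    obtain ⟨ξ, hξ, e⟩ := hc t ht
    rw [e]
    refine ⟨by rw [abs_of_nonneg (N.nn _)]; exact N.le _, ?_⟩
    have := huc (a := ξ) (b := U t) (by
      have a1 := abs_le.1 (d1 t ht).1
      have a2 := abs_le.1 (d2 t ht)
      rw [Real.dist_eq]
      have : |ξ - U t| ≤ δ / 2 := by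
        rw [abs_le]
        rw [mem_uIcc] at hξ
        rcases hξ with hξ | hξ <;> constructor <;> linarith [hξ.1, hξ.2]
      linarith)
    rw [Real.dist_eq] at this
    exact this.le
  have cmp := Sw.lincmp hW.int SW (fun t ht => (hcL t ht).1)
    (fun t _ => by rw [abs_of_nonneg (N.nn _)]; exact N.le _) (fun t ht => (hcL t ht).2) le_rfl le_rfl hr
  rw [hW0, hW1, hw', sub_zero, sub_self, abs_zero, abs_one, add_zero, zero_add, mul_one] at cmp
  have b3 : B * (|w σ| + ω * B * X) ≤ κ := by
    have a1 : B * |w σ| ≤ B * θ := by gcongr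
    have a2 : B * (ω * B * X) ≤ κ / 2 := by
      have : κ / 2 = ω * B * (B * X + 1) := by rw [hω]; field_simp
      rw [this]
      have : 0 ≤ ω * B := by positivity
      linarith
    rw [mul_add]; linarith
  have c1 := abs_le.1 (cmp.1.trans b3)
  have c2 := cmp.2.trans b3
  have c3 := abs_le.1 (d1 τ hr).2
  refine ⟨by linarith [c1.2], ?_, by linarith [c3.2]⟩
  have := abs_sub_abs_le_abs_sub (w' τ) (W' τ)
  linarith

theorem pi_main (hW : Wt H σ τ r η) (N : Nl G G' L) {M : ℝ}
    (hap : ∀ u v : ℝ → ℝ, Sol σ τ (fun t => -(H t * G (u t))) u v → 0 ≤ u σ → 0 ≤ u τ →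
      ∀ t ∈ Icc σ τ, 0 ≤ u t ∧ u t ≤ M) :
    ∃ s > 0,
    (∀ θ > 0, ∀ P, ∃ κ > 0, ∃ ε > 0, ∀ u v : ℝ → ℝ, Sol σ τ (fun t => -(H t * G (u t))) u v →
      0 ≤ u σ → u σ ≤ ε → (θ ≤ v σ → v σ ≤ s - θ → κ ≤ u τ) ∧ (s + θ ≤ v σ → v σ ≤ P → u τ ≤ -κ)) ∧
    ∃ θ > 0, ∃ κ > 0, ∃ C > 0, ∀ u₁ v₁ u₂ v₂ c w w' : ℝ → ℝ,
      Sol σ τ (fun t => -(H t * G (u₁ t))) u₁ v₁ → Sol σ τ (fun t => -(H t * G (u₂ t))) u₂ v₂ →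
      |u₁ σ| ≤ θ → |u₂ σ| ≤ θ → |v₁ σ - s| ≤ θ → |v₂ σ - s| ≤ θ →
      (∀ t ∈ Icc σ τ, ∃ ξ ∈ uIcc (u₁ t) (u₂ t), c t = G' ξ) →
      Sol σ τ (fun t => -(H t * (c t * w t))) w w' → w' σ = 1 → |w σ| ≤ θ →
      w τ ≤ -κ ∧ |w' τ| ≤ C ∧ v₁ τ ≤ -κ := by
  have hlt := hW.lt
  have hl := left_mem_Icc.2 hlt.le
  have hr := right_mem_Icc.2 hlt.le
  choose U V hS hU0 hV0 using fun s => exists_sol hlt.le hW.int N.lip 0 s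
  set f : ℝ → ℝ := fun s => U s τ with hf
  set Λ := ∫ s in σ..τ, L * |H s| with hΛ
  set B := Sol.Bd (τ - σ) Λ with hB
  have hΛ0 : 0 ≤ Λ := intervalIntegral.integral_nonneg hlt.le fun s _ => mul_nonneg N.L0 (abs_nonneg _)
  have hB1 : 1 ≤ B := Sol.Bd_pos (by linarith) hΛ0
  -- comparison of general solutions with U
  have hcmp : ∀ u v, Sol σ τ (fun t => -(H t * G (u t))) u v → |u τ - f (v σ)| ≤ B * |u σ| := by
    intro u v S
    have := (S.dep N.lip (hS (v σ)) hW.int le_rfl hr).1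
    rwa [hU0, hV0, sub_zero, sub_self, abs_zero, add_zero] at this
  have hfc : Continuous f := by
    have : LipschitzWith (Real.toNNReal B) f := by
      apply LipschitzWith.of_dist_le_mul
      intro a b
      have := ((hS a).dep N.lip (hS b) hW.int le_rfl hr).1
      rw [hU0, hU0, hV0, hV0, sub_self, abs_zero, zero_add] at this
      rw [Real.dist_eq, Real.dist_eq, Real.coe_toNNReal _ (by linarith)]
      exact this
    exact this.continuous
  have hfn : ∀ s, ∀ᵐ t, t ∈ Icc σ τ → -(H t * G (U s t)) ≤ 0 := fun s => Eventually.of_forall fun t _ => by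
    have := mul_nonneg (hW.nn t) (N.G0 (U s t)); linarith
  -- small s
  have hsm : ∃ s₀ > 0, ∀ s, 0 < s → s ≤ s₀ → 0 < f s := by
    have hI0 : 0 ≤ ∫ t in σ..τ, H t := intervalIntegral.integral_nonneg hlt.le fun t _ => hW.nn t
    have hℓ : 0 < τ - σ := by linarith
    obtain ⟨δ, hδ, hsmall⟩ := N.small (η := 1 / (2 * ((∫ t in σ..τ, H t) * (τ - σ) + 1))) (by positivity)
    refine ⟨δ / (2 * (τ - σ)), by positivity, fun s hs hs2 => ?_⟩
    have hUs : ∀ t ∈ Icc σ τ, U s t ≤ s * (τ - σ) := fun t ht => by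
      have := (hS s).tan_conc (hfn s) hl ht
      rw [hU0, hV0, zero_add] at this
      exact this.trans (mul_le_mul_of_nonneg_left (by linarith [ht.2]) hs.le)
    have hx : s * (τ - σ) < δ := by
      have : s * (τ - σ) ≤ δ / (2 * (τ - σ)) * (τ - σ) := mul_le_mul_of_nonneg_right hs2 hℓ.le
      have e : δ / (2 * (τ - σ)) * (τ - σ) = δ / 2 := by field_simp
      linarith
    have hGs : G (s * (τ - σ)) ≤ 1 / (2 * ((∫ t in σ..τ, H t) * (τ - σ) + 1)) * (s * (τ - σ)) := by
      obtain ⟨ξ, hξ, e⟩ := N.mvt (s * (τ - σ)) 0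
      rw [N.z 0 le_rfl, sub_zero, sub_zero] at e
      rw [e]
      rw [uIcc_of_ge (by positivity)] at hξ
      exact mul_le_mul_of_nonneg_right (hsmall ξ (hξ.2.trans_lt hx)) (by positivity)
    have hI : ∫ t in σ..τ, (-(G (s * (τ - σ)))) * H t ≤ ∫ t in σ..τ, -(H t * G (U s t)) := by
      refine intervalIntegral.integral_mono_on hlt.le (hW.int.const_mul _) (hS s).int fun t ht => ?_
      have := mul_le_mul_of_nonneg_left (N.mono (hUs t ht)) (hW.nn t)
      linarith
    rw [intervalIntegral.integral_const_mul] at hI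
    have e := (hS s).dv hl hr
    rw [hV0] at e
    have hV : s / 2 ≤ V s τ := by
      have h3 := mul_le_mul_of_nonneg_right hGs hI0
      have h4 : 1 / (2 * ((∫ t in σ..τ, H t) * (τ - σ) + 1)) * (s * (τ - σ)) * (∫ t in σ..τ, H t) ≤ s / 2 := by
        rw [one_div, inv_mul_eq_div, div_mul_eq_mul_div, div_le_iff₀ (by positivity)]
        nlinarith
      linarith
    have := (hS s).tan_conc (hfn s) hr hl
    rw [hU0] at this
    have h5 : 0 < V s τ * (τ - σ) := mul_pos (by linarith) hℓ
    change 0 < U s τ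
    linarith
  obtain ⟨s₀, hs₀, hsm⟩ := hsm
  have hlg : ∃ s₁, ∀ s > s₁, f s < 0 := by
    refine ⟨M / (τ - σ) + (∫ s in σ..τ, H s) * (L * M), fun s hs => ?_⟩
    by_contra h
    have := hW.velo N (hS s) (hap _ _ (hS s) (hU0 s).ge (not_lt.1 h)) σ hl
    rw [hV0] at this
    linarith [le_abs_self s]
  obtain ⟨s₁, hlg⟩ := hlg
  -- down-crossing
  have hdown : ∀ s > 0, f s = 0 → ∃ θ > 0, ∀ x, |x - s| ≤ θ → (x < s → 0 < f x) ∧ (s < x → f x < 0) := by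
    intro s hs hfs
    obtain ⟨θ, hθ, κ, hκ, C, -, hn⟩ := hW.near N (hS s) (hU0 s) hfs (by rw [hV0]; exact hs)
    refine ⟨θ, hθ, fun x hx => ?_⟩
    by_cases hxs : x = s
    · subst hxs; simp
    have hne : x - s ≠ 0 := sub_ne_zero.2 hxs
    obtain ⟨c, hc, -, Sc⟩ := (hS x).quot N (hS s) (1 / (x - s))
    have := (hn _ _ _ _ c _ _ (hS x) (hS s) (by rw [hU0]; simpa using hθ.le) (by rw [hU0]; simpa using hθ.le)
      (by rw [hV0, hV0]; exact hx) (by simpa using hθ.le) (fun t _ => hc t) Sc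
      (by rw [hV0, hV0]; field_simp; ring) (by rw [hU0, hU0]; simpa using hθ.le)).1
    have e : 1 / (x - s) * U x τ + -(1 / (x - s)) * U s τ = f x / (x - s) := by
      have h0 : U s τ = 0 := hfs
      rw [h0]; simp only [hf]; field_simp; ring
    rw [e] at this
    have h2 : f x / (x - s) < 0 := by linarith
    constructor
    · intro h
      rcases div_neg_iff.1 h2 with h3 | h3
      · exact h3.1
      · linarith
    · intro h
      rcases div_neg_iff.1 h2 with h3 | h3
      · linarith
      · exact h3.1
  have huniq : ∀ x > 0, ∀ y, x < y → f x = 0 → f y = 0 → False := by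
    intro x hx y hxy hfx hfy
    obtain ⟨θ, hθ, h1⟩ := hdown x hx hfx
    obtain ⟨z, hz, hfz, hlt⟩ := first_zero (D := fun t => - f t) hxy hfc.neg.continuousOn (by
      filter_upwards [Ioo_mem_nhdsGT (show x < x + θ by linarith)] with t ht
      have := (h1 t (by rw [abs_of_pos (by linarith [ht.1])]; linarith [ht.2])).2 ht.1
      linarith) ⟨y, right_mem_Ioc.2 hxy, by simp [hfy]⟩
    obtain ⟨θ', hθ', h2⟩ := hdown z (hx.trans hz.1) (by linarith)
    set t := max ((x + z) / 2) (z - θ') with ht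
    have ht1 : x < t := lt_of_lt_of_le (by linarith [hz.1]) (le_max_left _ _)
    have ht2 : t < z := max_lt (by linarith [hz.1]) (by linarith)
    have ht3 : z - θ' ≤ t := le_max_right _ _
    have h3 := hlt t ⟨ht1, ht2⟩
    have h4 := (h2 t (by rw [abs_of_neg (by linarith)]; linarith)).1 ht2
    linarith
  -- existence
  set s₂ := max s₀ s₁ + 1 with hs₂
  have hs02 : s₀ ≤ s₂ := by have := le_max_left s₀ s₁; linarith
  obtain ⟨s, hsm', hfs⟩ := intermediate_value_Icc' hs02 hfc.continuousOn (show (0:ℝ) ∈ Icc (f s₂) (f s₀) from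
    ⟨(hlg s₂ (by have := le_max_right s₀ s₁; linarith)).le, (hsm s₀ hs₀ le_rfl).le⟩)
  have hs : 0 < s := hs₀.trans_le hsm'.1
  have hbelow : ∀ x, 0 < x → x < s → 0 < f x := by
    intro x hx hxs
    by_contra h
    set y := min x s₀ with hy
    have hy0 : 0 < y := lt_min hx hs₀
    obtain ⟨z, hz, hfz⟩ := intermediate_value_Icc' (min_le_left x s₀) hfc.continuousOn (show (0:ℝ) ∈ Icc (f x) (f y) from
      ⟨not_lt.1 h, (hsm y hy0 (min_le_right _ _)).le⟩)
    exact huniq z (hy0.trans_le hz.1) s (hz.2.trans_lt hxs) hfz hfs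
  have habove : ∀ x, s < x → f x < 0 := by
    intro x hxs
    by_contra h
    set y := max x s₁ + 1 with hy
    have := le_max_left x s₁
    have := le_max_right x s₁
    obtain ⟨z, hz, hfz⟩ := intermediate_value_Icc' (show x ≤ y by linarith) hfc.continuousOn (show (0:ℝ) ∈ Icc (f y) (f x) from
      ⟨(hlg y (by linarith)).le, not_lt.1 h⟩)
    exact huniq s hs z (hxs.trans_le hz.1) hfs hfz
  refine ⟨s, hs, ?_, ?_⟩
  · intro θ hθ P
    have k1 : ∃ κ > 0, ∀ x ∈ Icc θ (s - θ), κ ≤ f x := by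
      rcases (Icc θ (s - θ)).eq_empty_or_nonempty with h | h
      · exact ⟨1, one_pos, fun x hx => by rw [h] at hx; exact hx.elim⟩
      · obtain ⟨x, hx, hmin⟩ := isCompact_Icc.exists_isMinOn h hfc.continuousOn
        exact ⟨f x, hbelow x (by linarith [hx.1]) (by linarith [hx.2]), fun y hy => hmin hy⟩
    have k2 : ∃ κ > 0, ∀ x ∈ Icc (s + θ) P, f x ≤ -κ := by
      rcases (Icc (s + θ) P).eq_empty_or_nonempty with h | h
      · exact ⟨1, one_pos, fun x hx => by rw [h] at hx; exact hx.elim⟩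
      · obtain ⟨x, hx, hmax⟩ := isCompact_Icc.exists_isMaxOn h hfc.continuousOn
        exact ⟨- f x, by linarith [habove x (by linarith [hx.1])], fun y hy => by
          have : f y ≤ f x := hmax hy
          linarith⟩
    obtain ⟨κ₁, hκ₁, k1⟩ := k1
    obtain ⟨κ₂, hκ₂, k2⟩ := k2
    set κ := min κ₁ κ₂ / 2 with hκ
    have hκ0 : 0 < κ := by positivity
    have q1 : 2 * κ ≤ κ₁ := by have := min_le_left κ₁ κ₂; linarith
    have q2 : 2 * κ ≤ κ₂ := by have := min_le_right κ₁ κ₂; linarith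
    refine ⟨κ, hκ0, κ / B, by positivity, fun u v S hu0 huε => ?_⟩
    have h1 := hcmp u v S
    rw [abs_of_nonneg hu0] at h1
    have h2 : B * u σ ≤ κ := by
      calc B * u σ ≤ B * (κ / B) := by gcongr
        _ = κ := by field_simp
    have h3 := abs_le.1 (h1.trans h2)
    refine ⟨fun a b => ?_, fun a b => ?_⟩
    · linarith [k1 _ ⟨a, b⟩, h3.1]
    · linarith [k2 _ ⟨a, b⟩, h3.2]
  · have := hW.near N (hS s) (hU0 s) hfs (by rw [hV0]; exact hs)
    simpa only [hV0] using this

end Wt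


namespace Sol
variable {α β : ℝ} {p c u v w w' : ℝ → ℝ} {G : ℝ → ℝ}

theorem const_sol (hαβ : α ≤ β) (s : ℝ) : Sol α β (fun _ => 0) (fun t => s * (t - α)) (fun _ => s) :=
  ⟨hαβ, by simp, fun t _ => by simp [mul_comm], fun t _ => by simp⟩

/-- solutions leaving zero with nonpositive speed are linear -/
theorem lin_neg {q G' : ℝ → ℝ} {L : ℝ} (N : Nl G G' L) (hq : IntervalIntegrable q volume α β)
    (S : Sol α β (fun t => -(q t * G (u t))) u v) (hu : u α = 0) (hv : v α ≤ 0) {t : ℝ} (ht : t ∈ Icc α β) :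
    u t = v α * (t - α) ∧ v t = v α := by
  have := (S.lin (const_sol S.le (v α)) 1 (-1)).zero_fwd (k := fun t => L * |q t|) (hq.abs.const_mul L)
    (fun t => mul_nonneg N.L0 (abs_nonneg _)) (by
      refine Eventually.of_forall fun t ht => ?_
      have h1 : G (v α * (t - α)) = 0 := N.z _ (mul_nonpos_of_nonpos_of_nonneg hv (by linarith [ht.1]))
      have h2 := N.lip (u t) (v α * (t - α))
      rw [h1, sub_zero] at h2
      have h3 : 1 * -(q t * G (u t)) + -1 * 0 = -(q t * G (u t)) := by ring
      have h4 : 1 * u t + -1 * (v α * (t - α)) = u t - v α * (t - α) := by ring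
      rw [h3, h4, abs_neg, abs_mul]
      have := mul_le_mul_of_nonneg_left h2 (abs_nonneg (q t))
      linarith) (by simp [hu]) (by simp) ht
  constructor <;> linarith [this.1, this.2]

theorem nonneg_of_end {q G' : ℝ → ℝ} {L : ℝ} (N : Nl G G' L) (hq : IntervalIntegrable q volume α β)
    (S : Sol α β (fun t => -(q t * G (u t))) u v) (hu : 0 ≤ u α) (hu' : 0 ≤ u β) {t : ℝ} (ht : t ∈ Icc α β) :
    0 ≤ u t := by
  by_contra hcon
  rw [not_le] at hcon
  have hαt : α < t := lt_of_le_of_ne ht.1 (fun h => by rw [← h] at hcon; linarith)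
  have S' := ((S.sub le_rfl ht.1 ht.2).refl 0).smul (-1)
  rw [zero_sub, zero_sub] at S'
  have hlt : -t < -α := by linarith
  obtain ⟨z, hz, h0, hp⟩ := first_zero hlt S'.cu (by
    have h1 := (S'.cu (-t) (left_mem_Icc.2 hlt.le)).mono Ioc_subset_Icc_self
    have h2 : ContinuousWithinAt (fun t => -1 * u (0 - t)) (Ioi (-t)) (-t) :=
      h1.mono_of_mem_nhdsWithin (Ioc_mem_nhdsGT hlt)
    exact h2.eventually (lt_mem_nhds (by simp only [zero_sub, neg_neg]; linarith)))
    ⟨-α, right_mem_Ioc.2 hlt, by simp only [zero_sub, neg_neg]; linarith⟩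
  have hd := left_nonpos hz.1 ((S'.sub le_rfl hz.1.le hz.2).deriv (right_mem_Icc.2 hz.1.le)) h0 hp
  simp only [zero_sub] at h0 hd
  have mz : -z ∈ Icc α β := ⟨by linarith [hz.2], by linarith [hz.1, ht.2]⟩
  have S2 := S.sub mz.1 mz.2 le_rfl
  have hq2 := ii_sub hq mz (right_mem_Icc.2 S.le)
  have k := fun x hx => (S2.lin_neg N hq2 (by linarith) (by linarith) (t := x) hx).1
  have k1 := k t ⟨by linarith [hz.1], ht.2⟩
  have k2 := k β (right_mem_Icc.2 mz.2)
  rw [k1] at hcon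
  rw [k2] at hu'
  have : v (-z) < 0 := by
    by_contra h
    have := mul_nonneg (not_lt.1 h) (by linarith [hz.1] : 0 ≤ t - -z)
    linarith
  have h3 : 0 < β - -z := by linarith [hz.1, ht.2]
  nlinarith

/-- nonnegative solutions are positive inside or trivial -/
theorem pos_int {q G' : ℝ → ℝ} {L : ℝ} (N : Nl G G' L) (hq : IntervalIntegrable q volume α β)
    (S : Sol α β (fun t => -(q t * G (u t))) u v) (h0 : ∀ t ∈ Icc α β, 0 ≤ u t) (hv : v α ≠ 0)
    {t : ℝ} (ht : t ∈ Ioo α β) : 0 < u t := by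
  have tm : t ∈ Icc α β := Ioo_subset_Icc_self ht
  have hl := left_mem_Icc.2 S.le
  have hr := right_mem_Icc.2 S.le
  rcases (h0 t tm).lt_or_eq with h | h
  · exact h
  exfalso
  have a1 : 0 ≤ v t := by
    by_contra hc
    have := ((S.sub tm.1 tm.2 le_rfl).lin_neg N (ii_sub hq tm hr) h.symm (not_le.1 hc).le (right_mem_Icc.2 tm.2)).1
    have := h0 β hr
    nlinarith [ht.2]
  have a2 : v t ≤ 0 := by
    by_contra hc
    have S' := (S.sub le_rfl tm.1 tm.2).refl (α + t)
    have hq' := ((ii_sub hq hl tm).comp_sub_left (α + t)).symm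
    have := (S'.lin_neg (q := fun s => q (α + t - s)) N hq' (by simp [h]) (by simp; linarith)
      (right_mem_Icc.2 (by linarith [tm.1]))).1
    simp only [sub_sub_cancel, add_sub_cancel_right, add_sub_cancel_left] at this
    have := h0 α hl
    nlinarith [ht.1]
  refine hv (S.zero_all (k := fun t => L * |q t|) (hq.abs.const_mul L) (fun t => mul_nonneg N.L0 (abs_nonneg _)) (by
    refine Eventually.of_forall fun t _ => ?_
    rw [abs_neg, abs_mul]
    have := mul_le_mul_of_nonneg_left (N.lip0 (u t)) (abs_nonneg (q t))
    linarith) tm h.symm (le_antisymm a2 a1) hl).2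

theorem neg_ub {ε : ℝ} (S : Sol α β (fun t => p t * G (u t)) u v) (hp : ∀ t, 0 ≤ p t) (hG : ∀ x, 0 ≤ G x)
    (h1 : u α ≤ ε) (h2 : u β ≤ ε) {t : ℝ} (ht : t ∈ Icc α β) : u t ≤ ε :=
  (S.le_max (Eventually.of_forall fun t _ => mul_nonneg (hp t) (hG _)) ht).trans (max_le h1 h2)

theorem lin_pos (S : Sol α β (fun t => p t * (c t * w t)) w w') (hp : ∀ t, 0 ≤ p t) (hc : ∀ t ∈ Icc α β, 0 ≤ c t)
    (h1 : 0 ≤ w α) (h2 : 0 < w' α) :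
    (∀ t ∈ Icc α β, 0 ≤ w t) ∧ MonotoneOn w' (Icc α β) := by
  have hl := left_mem_Icc.2 S.le
  have step : ∀ z ∈ Icc α β, (∀ t ∈ Ioo α z, 0 < w' t) → (∀ t ∈ Icc α z, 0 ≤ w t) ∧ w' α ≤ w' z := by
    intro z hz hpos
    have hw : ∀ t ∈ Icc α z, 0 ≤ w t := by
      intro t ht
      have hle : ∀ r ∈ Ico α z, 0 ≤ w' r := fun r hr => by
        rcases hr.1.eq_or_lt with h | h
        · rw [← h]; exact h2.le
        · exact (hpos r ⟨h, hr.2⟩).le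
      rcases ht.1.eq_or_lt with h | h
      · rw [← h]; exact h1
      have Sz := S.sub le_rfl hz.1 hz.2
      have : 0 ≤ ∫ s in α..t, w' s := by
        rw [intervalIntegral.integral_of_le ht.1, integral_Ioc_eq_integral_Ioo]
        exact setIntegral_nonneg measurableSet_Ioo fun s hs => hle s ⟨hs.1.le, hs.2.trans_le ht.2⟩
      rw [Sz.eu t ht]; linarith
    refine ⟨hw, ?_⟩
    exact (S.sub le_rfl hz.1 hz.2).vmono (Eventually.of_forall fun t ht =>
      mul_nonneg (hp t) (mul_nonneg (hc t ⟨ht.1, ht.2.trans hz.2⟩) (hw t ht))) (left_mem_Icc.2 hz.1) (right_mem_Icc.2 hz.1) hz.1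
  have hall : ∀ t ∈ Icc α β, 0 < w' t := by
    by_contra hcon
    push Not at hcon
    obtain ⟨t, ht, hwt⟩ := hcon
    have hαt : α < t := lt_of_le_of_ne ht.1 (fun h => by rw [← h] at hwt; linarith)
    have hαβ : α < β := hαt.trans_le ht.2
    obtain ⟨z, hz, h0, hp'⟩ := first_zero hαβ S.cv (by
      have h3 : ContinuousWithinAt w' (Ioi α) α :=
        ((S.cv α hl).mono Ioc_subset_Icc_self).mono_of_mem_nhdsWithin (Ioc_mem_nhdsGT hαβ)
      exact h3.eventually (lt_mem_nhds h2)) ⟨t, ⟨hαt, ht.2⟩, hwt⟩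
    have := (step z ⟨hz.1.le, hz.2⟩ hp').2
    linarith
  have hw := (step β (right_mem_Icc.2 S.le) (fun t ht => hall t (Ioo_subset_Icc_self ht))).1
  exact ⟨hw, S.vmono (Eventually.of_forall fun t ht => mul_nonneg (hp t) (mul_nonneg (hc t ht) (hw t ht)))⟩

end Sol

/-- N2 -/
theorem neg_gain {G G' : ℝ → ℝ} {L : ℝ} (N : Nl G G' L) {α β : ℝ} (hαβ : α < β) {k : ℝ → ℝ}
    (hk : IntervalIntegrable k volume α β)
    (hk0 : ∀ t, 0 ≤ k t) (hki : ∀ δ > 0, α + δ ≤ β → 0 < ∫ s in α..(α + δ), k s) {ε C P : ℝ} (hε : 0 < ε)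
    (hC : 0 < C) (hP : 0 < P) : ∀ᶠ μ in atTop, ∀ u v : ℝ → ℝ, Sol α β (fun t => μ * k t * G (u t)) u v →
      ε ≤ u α → -C ≤ v α → (∀ t ∈ Icc α β, 0 ≤ u t) ∧ P < v β := by
  set δ := min (ε / (2 * C)) (β - α) with hδ
  have hδ0 : 0 < δ := lt_min (by positivity) (by linarith)
  have hδβ : α + δ ≤ β := by have := min_le_right (ε / (2 * C)) (β - α); linarith
  have hδC : C * δ ≤ ε / 2 := by
    calc C * δ ≤ C * (ε / (2 * C)) := by gcongr; exact min_le_left _ _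
      _ = ε / 2 := by field_simp
  have hI := hki δ hδ0 hδβ
  have hG := N.pos (ε / 2) (by positivity)
  set κ := G (ε / 2) * ∫ s in α..(α + δ), k s with hκ
  have hκ0 : 0 < κ := by positivity
  filter_upwards [eventually_gt_atTop ((C + P) / κ), eventually_gt_atTop 0] with μ hμ hμ0 u v S hu hv
  have mδ : α + δ ∈ Icc α β := ⟨by linarith, hδβ⟩
  have hl := left_mem_Icc.2 hαβ.le
  have hf : ∀ᵐ t, t ∈ Icc α β → 0 ≤ μ * k t * G (u t) := Eventually.of_forall fun t _ =>
    mul_nonneg (mul_nonneg hμ0.le (hk0 t)) (N.G0 _)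
  have hvm := S.vmono hf
  have hlow : ∀ t ∈ Icc α (α + δ), ε / 2 ≤ u t := fun t ht => by
    have := S.lb le_rfl ht.1 (ht.2.trans hδβ) (m := -C) (fun r hr =>
      hv.trans (hvm hl ⟨hr.1, hr.2.trans (ht.2.trans hδβ)⟩ hr.1))
    have h2 : C * (t - α) ≤ C * δ := by gcongr; linarith [ht.2]
    linarith
  have e := S.dv hl mδ
  have hint : ∫ s in α..(α + δ), (μ * G (ε / 2)) * k s ≤ ∫ s in α..(α + δ), μ * k s * G (u s) := by
    refine intervalIntegral.integral_mono_on (by linarith) ((ii_sub hk hl mδ).const_mul _) (ii_sub S.int hl mδ) fun t ht => ?_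
    have := mul_le_mul_of_nonneg_left (N.mono (hlow t ht)) (mul_nonneg hμ0.le (hk0 t))
    linarith
  rw [intervalIntegral.integral_const_mul] at hint
  have h3 : C + P < μ * κ := by rwa [div_lt_iff₀ hκ0] at hμ
  have h4 : P < v (α + δ) := by rw [hκ] at h3; linarith
  refine ⟨fun t ht => ?_, h4.trans_le (hvm mδ (right_mem_Icc.2 hαβ.le) hδβ)⟩
  rcases le_total t (α + δ) with h | h
  · linarith [hlow t ⟨ht.1, h⟩]
  · have := S.lb mδ.1 h ht.2 (m := 0) (fun r hr => (hP.trans h4).le.trans (hvm mδ ⟨mδ.1.trans hr.1, hr.2.trans ht.2⟩ hr.1))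
    linarith [hlow (α + δ) ⟨mδ.1, le_rfl⟩]

/-- N1 -/
theorem neg_loss {G G' : ℝ → ℝ} {L : ℝ} (N : Nl G G' L) {α β : ℝ} (hαβ : α < β) {k : ℝ → ℝ}
    (hk : IntervalIntegrable k volume α β)
    (hk0 : ∀ t, 0 ≤ k t) (hki : ∀ δ > 0, α ≤ β - δ → 0 < ∫ s in (β - δ)..β, k s) {ε C P : ℝ} (hε : 0 < ε)
    (hC : 0 < C) (hP : 0 < P) : ∀ᶠ μ in atTop, ∀ u v : ℝ → ℝ, Sol α β (fun t => μ * k t * G (u t)) u v →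
      ε ≤ u β → v β ≤ P → v α < -C := by
  have hk' : IntervalIntegrable (fun s => k (α + β - s)) volume α β := by
    have := (hk.comp_sub_left (α + β)).symm
    rwa [add_sub_cancel_left, add_sub_cancel_right] at this
  filter_upwards [neg_gain N hαβ hk' (fun t => hk0 _) (fun δ hδ h => by
    rw [intervalIntegral.integral_comp_sub_left (fun s => k s), add_sub_cancel_left,
      show α + β - (α + δ) = β - δ by ring]
    exact hki δ hδ (by linarith)) hε hP hC] with μ hμ u v S hu hv
  have S' := S.refl (α + β)
  rw [add_sub_cancel_left, add_sub_cancel_right] at S'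
  have := (hμ _ _ S' (by simpa using hu) (by simp; linarith)).2
  simp only [add_sub_cancel_right] at this
  linarith

theorem neg_exit {G G' : ℝ → ℝ} {L : ℝ} (N : Nl G G' L) {α β : ℝ} (hαβ : α < β) {s K : ℝ} (hs : 0 < s) (hK : 0 < K) :
    ∃ ε > 0, ∀ p u v c w w' : ℝ → ℝ, (∀ t, 0 ≤ p t) → Sol α β (fun t => p t * G (u t)) u v →
      Sol α β (fun t => p t * (c t * w t)) w w' → (∀ t ∈ Icc α β, 0 ≤ u t) → (∀ t ∈ Icc α β, 0 ≤ c t) →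
      (∀ t ∈ Icc α β, G (u t) ≤ c t * u t) → u α ≤ ε → u β ≤ ε → s / 2 ≤ v β → 0 ≤ w α → 0 < w' α →
      K * w β ≤ w' β := by
  set δ := min (1 / (2 * K)) (β - α) with hδ
  have hδ0 : 0 < δ := lt_min (by positivity) (by linarith)
  have hδβ : α ≤ β - δ := by have := min_le_right (1 / (2 * K)) (β - α); linarith
  have hδK : K * δ ≤ 1 / 2 := by
    calc K * δ ≤ K * (1 / (2 * K)) := by gcongr; exact min_le_left _ _
      _ = 1 / 2 := by field_simp
  refine ⟨min (s * δ / 4) (s / (8 * K)), by positivity, ?_⟩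
  set ε := min (s * δ / 4) (s / (8 * K)) with hε
  have hε0 : 0 < ε := by positivity
  have e1 : ε ≤ s * δ / 4 := min_le_left _ _
  have e2 : K * ε ≤ s / 8 := by
    calc K * ε ≤ K * (s / (8 * K)) := by gcongr; exact min_le_right _ _
      _ = s / 8 := by field_simp
  intro p u v c w w' hp S SW hu hc hcu hα hβ hv hw hw'
  by_contra hcon
  rw [not_le] at hcon
  have hr := right_mem_Icc.2 hαβ.le
  have mδ : β - δ ∈ Icc α β := ⟨hδβ, by linarith⟩
  obtain ⟨w0, wm⟩ := SW.lin_pos hp hc hw hw'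
  have hub := fun t ht => S.neg_ub hp N.G0 hα hβ (t := t) ht
  have hwlow : ∀ t ∈ Icc (β - δ) β, w β / 2 ≤ w t := fun t ht => by
    have htm : t ∈ Icc α β := ⟨hδβ.trans ht.1, ht.2⟩
    have := SW.ub htm.1 ht.2 le_rfl (m := K * w β) (fun r hr' => (wm ⟨htm.1.trans hr'.1, hr'.2⟩ hr hr'.2).trans hcon.le)
    have h2 : K * w β * (β - t) ≤ w β * (1 / 2) := by
      have := mul_le_mul_of_nonneg_left (show K * (β - t) ≤ 1 / 2 from
        (mul_le_mul_of_nonneg_left (by linarith [ht.1]) hK.le).trans hδK) (w0 β hr)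
      linarith
    linarith
  have hf : ∀ᵐ t, t ∈ Icc α β → 0 ≤ p t * G (u t) := Eventually.of_forall fun t _ =>
    mul_nonneg (hp t) (N.G0 _)
  have t1 := S.tan_conv hf mδ hr
  have t2 : v (β - δ) ≤ s / 4 := by
    have h1 : v (β - δ) * δ ≤ ε := by linarith [hu _ mδ]
    by_contra hcc
    have := mul_lt_mul_of_pos_right (not_le.1 hcc) hδ0
    linarith
  have d1 := S.dv mδ hr
  have d2 := SW.dv mδ hr
  have hint : ∫ x in (β - δ)..β, w β / 2 * (p x * G (u x)) ≤ ∫ x in (β - δ)..β, ε * (p x * (c x * w x)) := by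
    refine intervalIntegral.integral_mono_on (by linarith) ((ii_sub S.int mδ hr).const_mul _)
      ((ii_sub SW.int mδ hr).const_mul _) fun t ht => ?_
    have htm : t ∈ Icc α β := ⟨hδβ.trans ht.1, ht.2⟩
    have a1 : G (u t) ≤ c t * ε := (hcu t htm).trans (mul_le_mul_of_nonneg_left (hub t htm) (hc t htm))
    have a2 : w β / 2 * G (u t) ≤ w t * (c t * ε) :=
      mul_le_mul (hwlow t ht) a1 (N.G0 _) (w0 t htm)
    have := mul_le_mul_of_nonneg_left a2 (hp t)
    linarith
  rw [intervalIntegral.integral_const_mul, intervalIntegral.integral_const_mul] at hint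
  have h3 : 0 < w' (β - δ) := hw'.trans_le (wm (left_mem_Icc.2 hαβ.le) mδ hδβ)
  have hwβ := w0 β hr
  have h4 : w β / 2 * (s / 4) ≤ w β / 2 * ∫ x in (β - δ)..β, p x * G (u x) :=
    mul_le_mul_of_nonneg_left (by linarith) (by linarith)
  have h5 : ε * ∫ x in (β - δ)..β, p x * (c x * w x) < ε * (K * w β) :=
    mul_lt_mul_of_pos_left (by linarith) hε0
  have h6 := mul_le_mul_of_nonneg_right e2 hwβ
  linarith

theorem neg_entry {G G' : ℝ → ℝ} {L : ℝ} (N : Nl G G' L) {α β : ℝ} (hαβ : α < β) {C κ : ℝ} (hC : 0 < C) (hκ : 0 < κ) :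
    ∃ ε > 0, ∀ p u v c w w' : ℝ → ℝ, (∀ t, 0 ≤ p t) → Sol α β (fun t => p t * G (u t)) u v →
      Sol α β (fun t => p t * (c t * w t)) w w' → (∀ t ∈ Icc α β, 0 ≤ u t) → (∀ t ∈ Icc α β, 0 ≤ c t) →
      (∀ t ∈ Icc α β, G (u t) ≤ c t * u t) → u α ≤ ε → u β ≤ ε → v α ≤ -κ → w α = 1 → -C ≤ w' α →
      0 < w' β ∧ 0 ≤ w β ∧ w β ≤ 2 * (β - α) * w' β := by
  set δ := min (1 / (4 * C)) (β - α) with hδ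
  have hℓ : 0 < β - α := by linarith
  have hδ0 : 0 < δ := lt_min (by positivity) hℓ
  have hδβ : α + δ ≤ β := by have := min_le_right (1 / (4 * C)) (β - α); linarith
  have hδC : C * δ ≤ 1 / 4 := by
    calc C * δ ≤ C * (1 / (4 * C)) := by gcongr; exact min_le_left _ _
      _ = 1 / 4 := by field_simp
  set Q := C + 1 / (β - α) with hQ
  have hQ0 : 0 < Q := by positivity
  refine ⟨min (κ * δ / 2) (κ / (4 * Q)), by positivity, ?_⟩
  set ε := min (κ * δ / 2) (κ / (4 * Q)) with hε
  have hε0 : 0 < ε := by positivity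
  have e1 : ε ≤ κ * δ / 2 := min_le_left _ _
  have e2 : Q * ε ≤ κ / 4 := by
    calc Q * ε ≤ Q * (κ / (4 * Q)) := by gcongr; exact min_le_right _ _
      _ = κ / 4 := by field_simp
  intro p u v c w w' hp S SW hu hc hcu hα hβ hv hw hw'
  have hl := left_mem_Icc.2 hαβ.le
  have hr := right_mem_Icc.2 hαβ.le
  have mδ : α + δ ∈ Icc α β := ⟨by linarith, hδβ⟩
  have hub := fun t ht => S.neg_ub hp N.G0 hα hβ (t := t) ht
  have key : ∀ z ∈ Icc α (α + δ), (∀ t ∈ Ioo α z, 0 < w t - 1 / 2) → MonotoneOn w' (Icc α z) ∧ 3 / 4 ≤ w z := by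
    intro z hz hz2
    have Sz := SW.sub le_rfl hz.1 (hz.2.trans hδβ)
    have hm : MonotoneOn w' (Icc α z) := by
      refine Sz.vmono ?_
      have hne : ∀ᵐ t : ℝ, t ≠ z := by simp [ae_iff, measure_singleton]
      filter_upwards [hne] with t h1 ht
      have : 0 ≤ w t := by
        rcases ht.1.eq_or_lt with h | h
        · rw [← h, hw]; norm_num
        · linarith [hz2 t ⟨h, lt_of_le_of_ne ht.2 h1⟩]
      exact mul_nonneg (hp t) (mul_nonneg (hc t ⟨ht.1, ht.2.trans (hz.2.trans hδβ)⟩) this)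
    refine ⟨hm, ?_⟩
    have := Sz.lb le_rfl hz.1 le_rfl (m := -C) (fun r hr => hw'.trans (hm (left_mem_Icc.2 hz.1) hr hr.1))
    have h2 : C * (z - α) ≤ C * δ := by gcongr; linarith [hz.2]
    linarith
  have hall : ∀ t ∈ Icc α (α + δ), 0 < w t - 1 / 2 := by
    by_contra hcon
    push Not at hcon
    obtain ⟨t, ht, hwt⟩ := hcon
    have hαt : α < t := lt_of_le_of_ne ht.1 (fun h => by rw [← h, hw] at hwt; linarith)
    have hcw : ContinuousOn (fun t => w t - 1 / 2) (Icc α (α + δ)) :=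
      (SW.cu.mono (Icc_subset_Icc le_rfl hδβ)).sub continuousOn_const
    obtain ⟨z, hz, h0, hp'⟩ := first_zero (D := fun t => w t - 1 / 2) (by linarith : α < α + δ) hcw (by
      have h3 : ContinuousWithinAt (fun t => w t - 1 / 2) (Ioi α) α :=
        ((hcw α (left_mem_Icc.2 (by linarith))).mono Ioc_subset_Icc_self).mono_of_mem_nhdsWithin (Ioc_mem_nhdsGT (by linarith))
      exact h3.eventually (lt_mem_nhds (by simp only [hw]; norm_num))) ⟨t, ⟨hαt, ht.2⟩, hwt⟩
    have := (key z ⟨hz.1.le, hz.2⟩ hp').2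
    linarith
  obtain ⟨wm, -⟩ := key (α + δ) ⟨by linarith, le_rfl⟩ (fun t ht => hall t (Ioo_subset_Icc_self ht))
  have hf : ∀ᵐ t, t ∈ Icc α β → 0 ≤ p t * G (u t) := Eventually.of_forall fun t _ =>
    mul_nonneg (hp t) (N.G0 _)
  have t1 := S.tan_conv hf mδ hl
  have t2 : -(κ / 2) ≤ v (α + δ) := by
    have h1 : -ε ≤ v (α + δ) * δ := by linarith [hu _ mδ]
    by_contra hcc
    have := mul_lt_mul_of_pos_right (not_le.1 hcc) hδ0
    linarith
  have d1 := S.dv hl mδ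
  have d2 := SW.dv hl mδ
  have hint : ∫ x in α..(α + δ), 1 / 2 * (p x * G (u x)) ≤ ∫ x in α..(α + δ), ε * (p x * (c x * w x)) := by
    refine intervalIntegral.integral_mono_on (by linarith) ((ii_sub S.int hl mδ).const_mul _)
      ((ii_sub SW.int hl mδ).const_mul _) fun t ht => ?_
    have htm : t ∈ Icc α β := ⟨ht.1, ht.2.trans hδβ⟩
    have a1 : G (u t) ≤ c t * ε := (hcu t htm).trans (mul_le_mul_of_nonneg_left (hub t htm) (hc t htm))
    have a2 : 1 / 2 * G (u t) ≤ w t * (c t * ε) :=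
      mul_le_mul (by linarith [hall t ht]) a1 (N.G0 _) (by linarith [hall t ht])
    have := mul_le_mul_of_nonneg_left a2 (hp t)
    linarith
  rw [intervalIntegral.integral_const_mul, intervalIntegral.integral_const_mul] at hint
  have h4 : Q ≤ ∫ x in α..(α + δ), p x * (c x * w x) := by
    have : ε * Q ≤ ε * ∫ x in α..(α + δ), p x * (c x * w x) := by linarith
    exact le_of_mul_le_mul_left this hε0
  have h5 : 1 / (β - α) ≤ w' (α + δ) := by linarith
  have h5' : 0 < 1 / (β - α) := by positivity
  obtain ⟨w0, wm2⟩ := (SW.sub mδ.1 mδ.2 le_rfl).lin_pos hp (fun t ht => hc t ⟨mδ.1.trans ht.1, ht.2⟩)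
    (by linarith [hall (α + δ) ⟨mδ.1, le_rfl⟩]) (by linarith)
  have h6 := wm2 (left_mem_Icc.2 mδ.2) (right_mem_Icc.2 mδ.2) mδ.2
  refine ⟨by linarith, w0 β (right_mem_Icc.2 mδ.2), ?_⟩
  have h7 := SW.ub le_rfl hαβ.le le_rfl (m := w' β) (fun r hr' => by
    rcases le_total r (α + δ) with h | h
    · exact (wm ⟨hr'.1, h⟩ ⟨mδ.1, le_rfl⟩ h).trans h6
    · exact wm2 ⟨h, hr'.2⟩ (right_mem_Icc.2 mδ.2) hr'.2)
  have h8 : 1 ≤ w' β * (β - α) := by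
    have : 1 / (β - α) * (β - α) ≤ w' β * (β - α) := mul_le_mul_of_nonneg_right (h5.trans h6) hℓ.le
    rwa [one_div, inv_mul_cancel₀ hℓ.ne'] at this
  linarith

/-- combined step on a negativity interval -/
theorem neg_step {G G' : ℝ → ℝ} {L : ℝ} (N : Nl G G' L) {α β : ℝ} (hαβ : α < β) {s K C κ : ℝ} (hs : 0 < s) (hK : 0 < K)
    (hC : 0 < C) (hκ : 0 < κ) :
    ∃ ε > 0, ∀ p u v c w w' : ℝ → ℝ, (∀ t, 0 ≤ p t) → Sol α β (fun t => p t * G (u t)) u v →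
      Sol α β (fun t => p t * (c t * w t)) w w' → (∀ t ∈ Icc α β, 0 ≤ u t) → (∀ t ∈ Icc α β, 0 ≤ c t) →
      (∀ t ∈ Icc α β, G (u t) ≤ c t * u t) → u α ≤ ε → u β ≤ ε → ∀ Y ≥ β - α,
      (0 ≤ w α ∧ 0 < w' α ∧ w α ≤ Y * w' α) ∨ (v α ≤ -κ ∧ w α = 1 ∧ -C ≤ w' α) →
      0 < w' β ∧ 0 < w β ∧ w β ≤ (Y + (β - α)) * w' β ∧ (s / 2 ≤ v β → K * w β ≤ w' β) := by
  set γ := (α + β) / 2 with hγ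
  have h1 : α < γ := by linarith
  have h2 : γ < β := by linarith
  obtain ⟨ε₁, hε₁, he1⟩ := neg_exit N h2 hs hK
  obtain ⟨ε₂, hε₂, he2⟩ := neg_entry N h1 hC hκ
  refine ⟨min ε₁ ε₂, lt_min hε₁ hε₂, ?_⟩
  intro p u v c w w' hp S SW hu hc hcu hα hβ Y hY hcase
  have hγub := S.neg_ub hp N.G0 hα hβ (t := γ) ⟨h1.le, h2.le⟩
  have a1 := min_le_left ε₁ ε₂
  have a2 := min_le_right ε₁ ε₂
  have SW1 := SW.sub le_rfl h1.le h2.le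
  have SW2 := SW.sub h1.le h2.le le_rfl
  have i1 : ∀ t ∈ Icc α γ, t ∈ Icc α β := fun t ht => ⟨ht.1, ht.2.trans h2.le⟩
  have i2 : ∀ t ∈ Icc γ β, t ∈ Icc α β := fun t ht => ⟨h1.le.trans ht.1, ht.2⟩
  have hmid : 0 < w' γ ∧ 0 ≤ w γ ∧ w γ ≤ (Y + (γ - α)) * w' γ := by
    rcases hcase with ⟨b1, b2, b3⟩ | ⟨b1, b2, b3⟩
    · obtain ⟨w0, wm⟩ := SW1.lin_pos hp (fun t ht => hc t (i1 t ht)) b1 b2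
      have hl := left_mem_Icc.2 h1.le
      have hr := right_mem_Icc.2 h1.le
      have hm := wm hl hr h1.le
      refine ⟨b2.trans_le hm, w0 γ hr, ?_⟩
      have := SW1.ub le_rfl h1.le le_rfl (m := w' γ) (fun r hr' => wm hr' hr hr'.2)
      have h3 : Y * w' α ≤ Y * w' γ := mul_le_mul_of_nonneg_left hm (by linarith)
      linarith
    · obtain ⟨c1, c2, c3⟩ := he2 p u v c w w' hp (S.sub le_rfl h1.le h2.le) SW1 (fun t ht => hu t (i1 t ht))
        (fun t ht => hc t (i1 t ht)) (fun t ht => hcu t (i1 t ht)) (by linarith) (by linarith) b1 b2 b3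
      refine ⟨c1, c2, c3.trans ?_⟩
      exact mul_le_mul_of_nonneg_right (by linarith) c1.le
  obtain ⟨m1, m2, m3⟩ := hmid
  obtain ⟨w0, wm⟩ := SW2.lin_pos hp (fun t ht => hc t (i2 t ht)) m2 m1
  have hl := left_mem_Icc.2 h2.le
  have hr := right_mem_Icc.2 h2.le
  have hm := wm hl hr h2.le
  have hub := SW2.ub le_rfl h2.le le_rfl (m := w' β) (fun r hr' => wm hr' hr hr'.2)
  have hlb := SW2.lb le_rfl h2.le le_rfl (m := w' γ) (fun r hr' => wm hl hr' hr'.1)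
  refine ⟨m1.trans_le hm, ?_, ?_, fun hv => ?_⟩
  · have := mul_pos m1 (by linarith : 0 < β - γ)
    linarith
  · have h3 : (Y + (γ - α)) * w' γ ≤ (Y + (γ - α)) * w' β := mul_le_mul_of_nonneg_left hm (by linarith)
    linarith
  · exact he1 p u v c w w' hp (S.sub h1.le h2.le le_rfl) SW2 (fun t ht => hu t (i2 t ht))
        (fun t ht => hc t (i2 t ht)) (fun t ht => hcu t (i2 t ht)) (by linarith) (by linarith) hv m2 m1

/-- positivity interval carrying a small solution -/
theorem small_step {α β : ℝ} {H c w w' : ℝ → ℝ} {η Y : ℝ} (SW : Sol α β (fun t => -(H t * (c t * w t))) w w')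
    (hH : ∀ t, 0 ≤ H t) (hHi : IntervalIntegrable H volume α β) (hc : ∀ t ∈ Icc α β, 0 ≤ c t ∧ c t ≤ η)
    (h0 : 0 ≤ w α) (h1 : w' α = 1) (hY : w α ≤ Y)
    (hs : (∫ s in α..β, H s) * (η * (Y + (β - α))) < 1 / 2) :
    1 / 2 ≤ w' β ∧ 0 ≤ w β ∧ w β ≤ 2 * (Y + (β - α)) * w' β := by
  have hαβ := SW.le
  have hl := left_mem_Icc.2 hαβ
  have hr := right_mem_Icc.2 hαβ
  have hη : 0 ≤ η := (hc α hl).1.trans (hc α hl).2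
  have hY0 : 0 ≤ Y := h0.trans hY
  have key : ∀ z ∈ Icc α β, (∀ t ∈ Ioo α z, 0 < w' t - 1 / 2) → (0 ≤ w z ∧ w z ≤ Y + (β - α)) ∧ 0 < w' z - 1 / 2 := by
    intro z hz hz2
    have Sz := SW.sub le_rfl hz.1 hz.2
    have hle : ∀ r ∈ Ico α z, 0 ≤ w' r := fun r hr => by
      rcases hr.1.eq_or_lt with h | h
      · rw [← h, h1]; norm_num
      · linarith [hz2 r ⟨h, hr.2⟩]
    have hw : ∀ t ∈ Icc α z, 0 ≤ w t := by
      intro t ht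
      have : 0 ≤ ∫ s in α..t, w' s := by
        rw [intervalIntegral.integral_of_le ht.1, integral_Ioc_eq_integral_Ioo]
        exact setIntegral_nonneg measurableSet_Ioo fun s hs => hle s ⟨hs.1.le, hs.2.trans_le ht.2⟩
      rw [Sz.eu t ht]; linarith
    have hm := Sz.vanti (Eventually.of_forall fun t ht => by
      have := mul_nonneg (hH t) (mul_nonneg (hc t ⟨ht.1, ht.2.trans hz.2⟩).1 (hw t ht)); linarith)
    have hub : ∀ t ∈ Icc α z, w t ≤ Y + (β - α) := fun t ht => by
      have := Sz.ub le_rfl ht.1 ht.2 (m := 1) (fun r hr' => by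
        rw [← h1]; exact hm (left_mem_Icc.2 hz.1) ⟨hr'.1, hr'.2.trans ht.2⟩ hr'.1)
      linarith [ht.2, hz.2]
    refine ⟨⟨hw z (right_mem_Icc.2 hz.1), hub z (right_mem_Icc.2 hz.1)⟩, ?_⟩
    have hint : ∫ s in α..z, (-(η * (Y + (β - α)))) * H s ≤ ∫ s in α..z, -(H s * (c s * w s)) := by
      refine intervalIntegral.integral_mono_on hz.1 ((ii_sub hHi hl hz).const_mul _) Sz.int fun t ht => ?_
      have := mul_le_mul (hc t ⟨ht.1, ht.2.trans hz.2⟩).2 (hub t ht) (hw t ht) hη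
      have := mul_le_mul_of_nonneg_left this (hH t)
      linarith
    rw [intervalIntegral.integral_const_mul] at hint
    have e := Sz.ev z (right_mem_Icc.2 hz.1)
    have h3 : ∫ s in α..z, H s ≤ ∫ s in α..β, H s := by
      rw [← ii_add hHi hz hr]
      have := intervalIntegral.integral_nonneg (μ := volume) (f := H) hz.2 (fun u _ => hH u)
      linarith
    have h4 := mul_le_mul_of_nonneg_left h3 (by have : 0 ≤ β - α := by linarith
                                                positivity : 0 ≤ η * (Y + (β - α)))
    linarith
  have hall : ∀ t ∈ Icc α β, 0 < w' t - 1 / 2 := by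
    by_contra hcon
    push Not at hcon
    obtain ⟨t, ht, hwt⟩ := hcon
    have hαt : α < t := lt_of_le_of_ne ht.1 (fun h => by rw [← h, h1] at hwt; linarith)
    have hlt : α < β := hαt.trans_le ht.2
    have hcw : ContinuousOn (fun t => w' t - 1 / 2) (Icc α β) := SW.cv.sub continuousOn_const
    obtain ⟨z, hz, h0', hp'⟩ := first_zero (D := fun t => w' t - 1 / 2) hlt hcw (by
      have h3 : ContinuousWithinAt (fun t => w' t - 1 / 2) (Ioi α) α :=
        ((hcw α hl).mono Ioc_subset_Icc_self).mono_of_mem_nhdsWithin (Ioc_mem_nhdsGT hlt)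
      exact h3.eventually (lt_mem_nhds (by simp only [h1]; norm_num))) ⟨t, ⟨hαt, ht.2⟩, hwt⟩
    have := (key z ⟨hz.1.le, hz.2⟩ hp').2
    linarith
  obtain ⟨⟨k1, k2⟩, k3⟩ := key β hr (fun t ht => hall t (Ioo_subset_Icc_self ht))
  refine ⟨by linarith, k1, ?_⟩
  have h5 : 0 ≤ Y + (β - α) := by linarith
  nlinarith


def Pc (H G G' : ℝ → ℝ) (σ τ s θ κ C : ℝ) : Prop := ∀ u₁ v₁ u₂ v₂ c w w' : ℝ → ℝ,
      Sol σ τ (fun t => -(H t * G (u₁ t))) u₁ v₁ → Sol σ τ (fun t => -(H t * G (u₂ t))) u₂ v₂ →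
      |u₁ σ| ≤ θ → |u₂ σ| ≤ θ → |v₁ σ - s| ≤ θ → |v₂ σ - s| ≤ θ →
      (∀ t ∈ Icc σ τ, ∃ ξ ∈ uIcc (u₁ t) (u₂ t), c t = G' ξ) →
      Sol σ τ (fun t => -(H t * (c t * w t))) w w' → w' σ = 1 → |w σ| ≤ θ →
      w τ ≤ -κ ∧ |w' τ| ≤ C ∧ v₁ τ ≤ -κ

def Ns (G : ℝ → ℝ) (α β s K C κ ε : ℝ) : Prop :=
    ∀ p u v c w w' : ℝ → ℝ, (∀ t, 0 ≤ p t) → Sol α β (fun t => p t * G (u t)) u v →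
      Sol α β (fun t => p t * (c t * w t)) w w' → (∀ t ∈ Icc α β, 0 ≤ u t) → (∀ t ∈ Icc α β, 0 ≤ c t) →
      (∀ t ∈ Icc α β, G (u t) ≤ c t * u t) → u α ≤ ε → u β ≤ ε → ∀ Y ≥ β - α,
      (0 ≤ w α ∧ 0 < w' α ∧ w α ≤ Y * w' α) ∨ (v α ≤ -κ ∧ w α = 1 ∧ -C ≤ w' α) →
      0 < w' β ∧ 0 < w β ∧ w β ≤ (Y + (β - α)) * w' β ∧ (s / 2 ≤ v β → K * w β ≤ w' β)

/-- state of the normalized linear solution at the left end of a positivity interval -/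
def St (s K Y w w' v : ℝ) : Prop := 0 < w' ∧ 0 ≤ w ∧ w ≤ Y * w' ∧ (s / 2 ≤ v → K * w ≤ w')

theorem Sol.lsc {α β : ℝ} {q c w w' : ℝ → ℝ} (S : Sol α β (fun t => q t * (c t * w t)) w w') (e : ℝ) :
    Sol α β (fun t => q t * (c t * (e * w t))) (fun t => e * w t) (fun t => e * w' t) :=
  (S.smul e).congr (ae_of_all _ fun t _ => by ring)

theorem un_step {G G' : ℝ → ℝ} {L : ℝ} (N : Nl G G' L) {H : ℝ → ℝ} {σ τ β ℓ s θc κ C s' K' ε δ η Y θ K : ℝ}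
    (h1 : σ < τ) (h2 : τ < β) (hl : τ - σ ≤ ℓ) (hl' : β - τ ≤ ℓ) (hH : ∀ t, 0 ≤ H t)
    (hHi : IntervalIntegrable H volume σ τ) (hpc : Pc H G G' σ τ s θc κ C) (hκ : 0 < κ)
    (hns : Ns G τ β s' K' (C / κ) κ ε) (hδ : ∀ x < δ, G' x ≤ η)
    (hη0 : 0 ≤ η) (hη : (∫ t in σ..τ, H t) * (η * (Y + ℓ)) < 1 / 2) (hθ0 : 0 ≤ θ) (hθ : θ ≤ θc) (hθδ : θ * (1 + ℓ) < δ) (hεθ : ε ≤ θ)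
    (hθc : 0 < θc) (hK : 1 ≤ K * θc) (hY : ℓ ≤ Y)
    {p u₁ v₁ u₂ v₂ c w w' : ℝ → ℝ} (hp : ∀ t, 0 ≤ p t)
    (S1 : Sol σ τ (fun t => -(H t * G (u₁ t))) u₁ v₁) (S2 : Sol σ τ (fun t => -(H t * G (u₂ t))) u₂ v₂)
    (SW : Sol σ τ (fun t => -(H t * (c t * w t))) w w')
    (T1 : Sol τ β (fun t => p t * G (u₁ t)) u₁ v₁) (TW : Sol τ β (fun t => p t * (c t * w t)) w w')
    (n1 : ∀ t ∈ Icc σ β, 0 ≤ u₁ t) (n2 : ∀ t ∈ Icc σ β, 0 ≤ u₂ t)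
    (a1 : u₁ σ ≤ ε) (a2 : u₂ σ ≤ ε) (a3 : u₁ τ ≤ ε) (a4 : u₁ β ≤ ε)
    (hc : ∀ t ∈ Icc σ β, ∃ ξ ∈ uIcc (u₁ t) (u₂ t), c t = G' ξ)
    (hcu : ∀ t ∈ Icc σ β, G (u₁ t) ≤ c t * u₁ t)
    (pat : (v₁ σ ≤ θ ∧ v₂ σ ≤ θ) ∨ (|v₁ σ - s| ≤ θ ∧ |v₂ σ - s| ≤ θ ∧ s / 2 ≤ v₁ σ))
    {e : ℝ} (he : e ≠ 0) (st : St s K Y (e * w σ) (e * w' σ) (v₁ σ)) :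
    ∃ e' ≠ 0, St s' K' (6 * Y) (e' * w β) (e' * w' β) (v₁ β) ∧ 0 < e' * w β := by
  obtain ⟨t1, t2, t3, t4⟩ := st
  have hσσ : σ ∈ Icc σ β := ⟨le_rfl, (h1.trans h2).le⟩
  have nn : ∀ t ∈ Icc τ β, t ∈ Icc σ β := fun t ht => ⟨h1.le.trans ht.1, ht.2⟩
  have nn' : ∀ t ∈ Icc σ τ, t ∈ Icc σ β := fun t ht => ⟨ht.1, ht.2.trans h2.le⟩
  have hc0 : ∀ t ∈ Icc σ β, 0 ≤ c t := fun t ht => by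
    obtain ⟨ξ, _, h⟩ := hc t ht; rw [h]; exact N.nn ξ
  -- normalized multiplier
  set d := e / (e * w' σ) with hd
  have hd0 : d ≠ 0 := div_ne_zero he t1.ne'
  have hdw : d * w' σ = 1 := by rw [hd]; field_simp; exact div_self (right_ne_zero_of_mul t1.ne')
  have hdw0 : 0 ≤ d * w σ := by
    have : d * w σ = (e * w σ) / (e * w' σ) := by rw [hd]; ring
    rw [this]; positivity
  have hdY : d * w σ ≤ Y := by
    have : d * w σ = (e * w σ) / (e * w' σ) := by rw [hd]; ring
    rw [this, div_le_iff₀ t1]; exact t3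
  have SWd : Sol σ τ (fun t => -(H t * (c t * (d * w t)))) (fun t => d * w t) (fun t => d * w' t) :=
    (SW.smul d).congr (ae_of_all _ fun t _ => by ring)
  have fin : ∀ e' ≠ 0, ∀ Y' ≥ β - τ, Y' + (β - τ) ≤ 6 * Y → ((0 ≤ e' * w τ ∧ 0 < e' * w' τ ∧ e' * w τ ≤ Y' * (e' * w' τ)) ∨
      (v₁ τ ≤ -κ ∧ e' * w τ = 1 ∧ -(C / κ) ≤ e' * w' τ)) →
      ∃ e' ≠ 0, St s' K' (6 * Y) (e' * w β) (e' * w' β) (v₁ β) ∧ 0 < e' * w β := by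
    intro e' he' Y' hY' hY6 hor
    obtain ⟨x1, x2, x3, x4⟩ := hns p u₁ v₁ c (fun t => e' * w t) (fun t => e' * w' t) hp T1 (TW.lsc e')
      (fun t ht => n1 t (nn t ht)) (fun t ht => hc0 t (nn t ht)) (fun t ht => hcu t (nn t ht)) a3 a4 Y' hY' hor
    exact ⟨e', he', ⟨x1, x2.le, x3.trans (by gcongr), x4⟩, x2⟩
  rcases pat with ⟨p1, p2⟩ | ⟨p1, p2, p3⟩
  · have up : ∀ u v : ℝ → ℝ, Sol σ τ (fun t => -(H t * G (u t))) u v → u σ ≤ ε → v σ ≤ θ →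
        ∀ t ∈ Icc σ τ, u t < δ := by
      intro u v S hu hv t ht
      have := S.tan_conc (ae_of_all _ fun t _ => neg_nonpos.2 (mul_nonneg (hH t) (N.G0 _)))
        (left_mem_Icc.2 h1.le) ht
      have h3 : v σ * (t - σ) ≤ θ * ℓ := mul_le_mul hv (by linarith [ht.2]) (by linarith [ht.1]) hθ0
      linarith
    have hcη : ∀ t ∈ Icc σ τ, 0 ≤ c t ∧ c t ≤ η := fun t ht => by
      refine ⟨hc0 t (nn' t ht), ?_⟩
      obtain ⟨ξ, hξ, h⟩ := hc t (nn' t ht)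
      rw [h]
      exact hδ ξ (hξ.2.trans_lt (max_lt (up _ _ S1 a1 p1 t ht) (up _ _ S2 a2 p2 t ht)))
    obtain ⟨y1, y2, y3⟩ := small_step SWd hH hHi hcη hdw0 hdw hdY (lt_of_le_of_lt
      (mul_le_mul_of_nonneg_left (mul_le_mul_of_nonneg_left (by linarith) hη0)
        (intervalIntegral.integral_nonneg h1.le fun t _ => hH t)) hη)
    exact fin d hd0 (2 * (Y + (τ - σ))) (by linarith) (by linarith) (Or.inl ⟨y2, by linarith, y3⟩)
  · have hw : d * w σ ≤ θc := by
      have h3 := t4 p3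
      have : d * w σ = (e * w σ) / (e * w' σ) := by rw [hd]; ring
      rw [this, div_le_iff₀ t1]
      nlinarith
    obtain ⟨y1, y2, y3⟩ := hpc u₁ v₁ u₂ v₂ c _ _ S1 S2
      (by rw [abs_of_nonneg (n1 _ hσσ)]; linarith) (by rw [abs_of_nonneg (n2 _ hσσ)]; linarith)
      (p1.trans hθ) (p2.trans hθ) (fun t ht => hc t (nn' t ht)) SWd hdw (by rw [abs_of_nonneg hdw0]; exact hw)
    have hne : d * w τ < 0 := by linarith
    refine fin (d / (d * w τ)) (div_ne_zero hd0 hne.ne) Y (by linarith) (by linarith) (Or.inr ⟨y3, ?_, ?_⟩)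
    · rw [div_mul_eq_mul_div, div_self hne.ne]
    · rw [div_mul_eq_mul_div]
      have hCκ : |d * w' τ / (d * w τ)| ≤ C / κ := by
        rw [abs_div]
        exact div_le_div₀ ((abs_nonneg _).trans y2) y2 hκ (by rw [abs_of_neg hne]; linarith)
      exact (abs_le.1 hCκ).1


structure Dat (m : ℕ) (A B : ℕ → ℝ) (H : ℕ → ℝ → ℝ) (k G G' : ℝ → ℝ) (L M : ℝ) : Prop where
  N : Nl G G' L
  M0 : 0 < M
  AB : ∀ i ≤ m, A i < B i
  W : ∀ i < m, ∃ r η, Wt (H i) (B i) (A (i + 1)) r η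
  ap : ∀ i < m, ∀ u v : ℝ → ℝ, Sol (B i) (A (i + 1)) (fun t => -(H i t * G (u t))) u v →
    0 ≤ u (B i) → 0 ≤ u (A (i + 1)) → ∀ t ∈ Icc (B i) (A (i + 1)), 0 ≤ u t ∧ u t ≤ M
  kint : IntervalIntegrable k volume (A 0) (B m)
  k0 : ∀ t, 0 ≤ k t
  kr : ∀ i < m, ∀ δ > 0, A (i + 1) + δ ≤ B (i + 1) → 0 < ∫ s in A (i + 1)..(A (i + 1) + δ), k s
  kl : ∀ i < m, ∀ δ > 0, A i ≤ B i - δ → 0 < ∫ s in (B i - δ)..(B i), k s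

structure Qw (m : ℕ) (A B : ℕ → ℝ) (H : ℕ → ℝ → ℝ) (k : ℝ → ℝ) (μ : ℝ) (q : ℝ → ℝ) : Prop where
  int : IntervalIntegrable q volume (A 0) (B m)
  qH : ∀ i < m, ∀ᵐ t, t ∈ Icc (B i) (A (i + 1)) → q t = H i t
  qk : ∀ i ≤ m, ∀ᵐ t, t ∈ Icc (A i) (B i) → q t = -(μ * k t)

/-- the constants -/
structure Good (m : ℕ) (A B : ℕ → ℝ) (H : ℕ → ℝ → ℝ) (k G G' : ℝ → ℝ) (s : ℕ → ℝ) (θ ε P C μ : ℝ) : Prop where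
  μ0 : 0 ≤ μ
  θ0 : 0 < θ
  θs : ∀ i < m, θ < s i / 2
  ε0 : 0 < ε
  C0 : 0 < C
  CP : C ≤ P
  sP : ∀ i < m, s i + θ ≤ P
  b : ∀ i < m, ∀ u v : ℝ → ℝ, Sol (B i) (A (i + 1)) (fun t => -(H i t * G (u t))) u v →
      0 ≤ u (B i) → u (B i) ≤ ε → (θ ≤ v (B i) → v (B i) ≤ s i - θ → ε ≤ u (A (i + 1))) ∧
        (s i + θ ≤ v (B i) → v (B i) ≤ P → u (A (i + 1)) < 0)
  vel : ∀ i < m, ∀ u v : ℝ → ℝ, Sol (B i) (A (i + 1)) (fun t => -(H i t * G (u t))) u v →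
    0 ≤ u (B i) → 0 ≤ u (A (i + 1)) → ∀ t ∈ Icc (B i) (A (i + 1)), |v t| ≤ C
  gain : ∀ i < m, ∀ u v : ℝ → ℝ, Sol (A (i + 1)) (B (i + 1)) (fun t => μ * k t * G (u t)) u v →
    ε ≤ u (A (i + 1)) → -C ≤ v (A (i + 1)) → (∀ t ∈ Icc (A (i + 1)) (B (i + 1)), 0 ≤ u t) ∧ P < v (B (i + 1))
  loss : ∀ i < m, ∀ u v : ℝ → ℝ, Sol (A i) (B i) (fun t => μ * k t * G (u t)) u v →
    ε ≤ u (B i) → v (B i) ≤ P → v (A i) < -C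
  un : ∀ q u₁ v₁ u₂ v₂ c w w' : ℝ → ℝ, Qw m A B H k μ q →
    Sol (A 0) (B m) (fun t => -(q t * G (u₁ t))) u₁ v₁ → Sol (A 0) (B m) (fun t => -(q t * G (u₂ t))) u₂ v₂ →
    Sol (A 0) (B m) (fun t => -(q t * (c t * w t))) w w' →
    (∀ t ∈ Icc (A 0) (B m), 0 ≤ u₁ t) → (∀ t ∈ Icc (A 0) (B m), 0 ≤ u₂ t) →
    (∀ i ≤ m, u₁ (A i) ≤ ε ∧ u₁ (B i) ≤ ε ∧ u₂ (B i) ≤ ε) →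
    (∀ t ∈ Icc (A 0) (B m), ∃ ξ ∈ uIcc (u₁ t) (u₂ t), c t = G' ξ) →
    (∀ t ∈ Icc (A 0) (B m), G (u₁ t) ≤ c t * u₁ t) →
    (∀ i < m, (v₁ (B i) ≤ θ ∧ v₂ (B i) ≤ θ) ∨ (|v₁ (B i) - s i| ≤ θ ∧ |v₂ (B i) - s i| ≤ θ ∧ s i / 2 ≤ v₁ (B i))) →
    w (A 0) = 0 → w' (A 0) = 1 → w (B m) ≠ 0

theorem fin_min (f : ℕ → ℝ) (hf : ∀ i, 0 < f i) (m : ℕ) : ∃ x > 0, ∀ i ≤ m, x ≤ f i := by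
  induction m with
  | zero => exact ⟨f 0, hf 0, fun i hi => by rw [Nat.le_zero.1 hi]⟩
  | succ n ih =>
    obtain ⟨x, hx, h⟩ := ih
    refine ⟨min x (f (n + 1)), lt_min hx (hf _), fun i hi => ?_⟩
    rcases Nat.lt_or_eq_of_le hi with h1 | h1
    · exact (min_le_left _ _).trans (h i (by omega))
    · rw [h1]; exact min_le_right _ _

theorem fin_max (f : ℕ → ℝ) (m : ℕ) : ∃ x > 0, ∀ i ≤ m, f i ≤ x := by
  obtain ⟨x, hx, h⟩ := fin_min (fun i => (1 + |f i|)⁻¹) (fun i => by positivity) m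
  refine ⟨x⁻¹, by positivity, fun i hi => ?_⟩
  have := le_inv_of_le_inv₀ hx (h i hi)
  linarith [le_abs_self (f i)]

section
variable {m : ℕ} {A B : ℕ → ℝ} {H : ℕ → ℝ → ℝ} {k G G' : ℝ → ℝ} {L M : ℝ}

namespace Dat

theorem BA (D : Dat m A B H k G G' L M) {i : ℕ} (hi : i < m) : B i < A (i + 1) := by
  obtain ⟨r, η, hW⟩ := D.W i hi; exact hW.lt

theorem A0 (D : Dat m A B H k G G' L M) {i : ℕ} (hi : i ≤ m) : A 0 ≤ A i := by
  induction i with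
  | zero => exact le_rfl
  | succ n ih => linarith [ih (by omega), D.AB n (by omega), D.BA (i := n) (by omega)]

theorem Bm (D : Dat m A B H k G G' L M) : ∀ j i : ℕ, i + j = m → B i ≤ B m := by
  intro j
  induction j with
  | zero => intro i h; simp at h; rw [h]
  | succ n ih =>
    intro i h
    linarith [ih (i + 1) (by omega), D.AB (i + 1) (by omega), D.BA (i := i) (by omega)]

theorem Bm' (D : Dat m A B H k G G' L M) {i : ℕ} (hi : i ≤ m) : B i ≤ B m := D.Bm (m - i) i (by omega)

theorem memA (D : Dat m A B H k G G' L M) {i : ℕ} (hi : i ≤ m) : A i ∈ Icc (A 0) (B m) :=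
  ⟨D.A0 hi, (D.AB i hi).le.trans (D.Bm' hi)⟩

theorem memB (D : Dat m A B H k G G' L M) {i : ℕ} (hi : i ≤ m) : B i ∈ Icc (A 0) (B m) :=
  ⟨(D.A0 hi).trans (D.AB i hi).le, D.Bm' hi⟩

theorem AmemI (D : Dat m A B H k G G' L M) {i : ℕ} (hi : i ≤ m) {t : ℝ} (ht : t ∈ Icc (A i) (B i)) :
    t ∈ Icc (A 0) (B m) := ⟨(D.A0 hi).trans ht.1, ht.2.trans (D.Bm' hi)⟩

theorem BmemI (D : Dat m A B H k G G' L M) {i : ℕ} (hi : i < m) {t : ℝ} (ht : t ∈ Icc (B i) (A (i + 1))) :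
    t ∈ Icc (A 0) (B m) := ⟨(D.memB hi.le).1.trans ht.1, ht.2.trans (D.memA (i := i + 1) hi).2⟩

end Dat

theorem Sol.onN (D : Dat m A B H k G G' L M) {μ : ℝ} {q : ℝ → ℝ} (Q : Qw m A B H k μ q) {F u v : ℝ → ℝ}
    (S : Sol (A 0) (B m) (fun t => -(q t * F t)) u v) {i : ℕ} (hi : i ≤ m) :
    Sol (A i) (B i) (fun t => μ * k t * F t) u v := by
  refine (S.sub (D.A0 hi) (D.AB i hi).le (D.Bm' hi)).congr ?_
  filter_upwards [Q.qk i hi] with t ht h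
  rw [ht h]; ring

theorem Sol.onP (D : Dat m A B H k G G' L M) {μ : ℝ} {q : ℝ → ℝ} (Q : Qw m A B H k μ q) {F u v : ℝ → ℝ}
    (S : Sol (A 0) (B m) (fun t => -(q t * F t)) u v) {i : ℕ} (hi : i < m) :
    Sol (B i) (A (i + 1)) (fun t => -(H i t * F t)) u v := by
  refine (S.sub (D.memB hi.le).1 (D.BA hi).le (D.memA (i := i + 1) hi).2).congr ?_
  filter_upwards [Q.qH i hi] with t ht h
  rw [ht h]

theorem Dat.consts (D : Dat m A B H k G G' L M) : ∃ s : ℕ → ℝ, ∃ θ ε P C : ℝ,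
    ∀ᶠ μ in atTop, Good m A B H k G G' s θ ε P C μ := by
  have N := D.N
  set ℓ := B m - A 0 with hℓ
  have hlN : ∀ i ≤ m, B i - A i ≤ ℓ := fun i hi => by linarith [(D.memA hi).1, (D.memB hi).2]
  have hlP : ∀ i < m, A (i + 1) - B i ≤ ℓ := fun i hi => by
    linarith [(D.memA (i := i + 1) hi).2, (D.memB hi.le).1]
  have hℓ0 : 0 < ℓ := by linarith [D.AB 0 (by omega), hlN 0 (by omega)]
  -- pi_main
  have e1 : ∀ i, ∃ s θ κ C' : ℝ, 0 < s ∧ 0 < θ ∧ 0 < κ ∧ 0 < C' ∧ (i < m →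
      (∀ θ > 0, ∀ P, ∃ κ > 0, ∃ ε > 0, ∀ u v : ℝ → ℝ, Sol (B i) (A (i + 1)) (fun t => -(H i t * G (u t))) u v →
      0 ≤ u (B i) → u (B i) ≤ ε → (θ ≤ v (B i) → v (B i) ≤ s - θ → κ ≤ u (A (i + 1))) ∧
        (s + θ ≤ v (B i) → v (B i) ≤ P → u (A (i + 1)) ≤ -κ)) ∧
      Pc (H i) G G' (B i) (A (i + 1)) s θ κ C') := by
    intro i
    by_cases hi : i < m
    · obtain ⟨r, η, hW⟩ := D.W i hi
      obtain ⟨s, hs, hb, θ, hθ, κ, hκ, C', hC', hc⟩ := hW.pi_main N (D.ap i hi)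
      exact ⟨s, θ, κ, C', hs, hθ, hκ, hC', fun _ => ⟨hb, hc⟩⟩
    · exact ⟨1, 1, 1, 1, by norm_num, by norm_num, by norm_num, by norm_num, fun h => absurd h hi⟩
  choose s θc κ C' hs hθc hκ hC' hpi using e1
  -- neg_step
  have e2 : ∀ i, ∃ ε > 0, i ≤ m → (i = 0 → Ns G (A 0) (B 0) (s 0) (θc 0)⁻¹ 1 1 ε) ∧
      (∀ j, i = j + 1 → Ns G (A (j + 1)) (B (j + 1)) (s (j + 1)) (θc (j + 1))⁻¹ (C' j / κ j) (κ j) ε) := by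
    intro i
    by_cases hi : i ≤ m
    · cases i with
      | zero =>
        obtain ⟨ε, hε, h⟩ := neg_step N (D.AB 0 hi) (hs 0) (inv_pos.2 (hθc 0)) one_pos one_pos
        exact ⟨ε, hε, fun _ => ⟨fun _ => h, fun j hj => by omega⟩⟩
      | succ n =>
        obtain ⟨ε, hε, h⟩ := neg_step N (D.AB (n + 1) hi) (hs (n + 1)) (inv_pos.2 (hθc (n + 1)))
          (div_pos (hC' n) (hκ n)) (hκ n)
        exact ⟨ε, hε, fun _ => ⟨fun h => by omega, fun j hj => by
          obtain rfl : n = j := by omega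
          exact h⟩⟩
    · exact ⟨1, one_pos, fun h => absurd h hi⟩
  choose εn hεn hns using e2
  -- η δ
  obtain ⟨X, hX0, hX⟩ := fin_max (fun i => ∫ t in B i..(A (i + 1)), H i t) m
  set Ym := 6 ^ m * (2 * ℓ) with hYm
  have hYm0 : 0 < Ym := by positivity
  set η := 1 / (4 * X * (Ym + ℓ)) with hη
  have hη0 : 0 < η := by positivity
  obtain ⟨δ, hδ0, hδ⟩ := N.small hη0
  -- θ
  obtain ⟨θ1, hθ10, hθ1⟩ := fin_min (fun i => min (θc i) (s i / 4))
    (fun i => lt_min (hθc i) (by have := hs i; positivity)) m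
  set θ := min θ1 (δ / (2 * (1 + ℓ))) with hθ
  have hθ0 : 0 < θ := lt_min hθ10 (by positivity)
  have hθδ : θ * (1 + ℓ) < δ := by
    have : θ ≤ δ / (2 * (1 + ℓ)) := min_le_right _ _
    rw [le_div_iff₀ (by positivity)] at this
    linarith
  have hθθ : ∀ i ≤ m, θ ≤ θc i := fun i hi => ((min_le_left _ _).trans (hθ1 i hi)).trans (min_le_left _ _)
  have hθs : ∀ i ≤ m, θ < s i / 2 := fun i hi => by
    have : θ ≤ s i / 4 := ((min_le_left _ _).trans (hθ1 i hi)).trans (min_le_right _ _)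
    linarith [hs i]
  -- C, P
  obtain ⟨C, hC0, hC⟩ := fin_max (fun i => M / (A (i + 1) - B i) + (∫ t in B i..(A (i + 1)), H i t) * (L * M)) m
  obtain ⟨P1, hP10, hP1⟩ := fin_max (fun i => s i + θ) m
  set P := max C P1 with hP
  have hP0 : 0 < P := lt_max_of_lt_left hC0
  -- ε
  have e3 : ∀ i, ∃ κ > 0, ∃ ε > 0, i < m → ∀ u v : ℝ → ℝ, Sol (B i) (A (i + 1)) (fun t => -(H i t * G (u t))) u v →
      0 ≤ u (B i) → u (B i) ≤ ε → (θ ≤ v (B i) → v (B i) ≤ s i - θ → κ ≤ u (A (i + 1))) ∧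
        (s i + θ ≤ v (B i) → v (B i) ≤ P → u (A (i + 1)) ≤ -κ) := by
    intro i
    by_cases hi : i < m
    · obtain ⟨κ, hκ, ε, hε, h⟩ := (hpi i hi).1 θ hθ0 P
      exact ⟨κ, hκ, ε, hε, fun _ => h⟩
    · exact ⟨1, one_pos, 1, one_pos, fun h => absurd h hi⟩
  choose κb hκb εb hεb hb using e3
  obtain ⟨ε1, hε10, hε1⟩ := fin_min (fun i => min (min (κb i) (εb i)) (εn i))
    (fun i => lt_min (lt_min (hκb i) (hεb i)) (hεn i)) m
  set ε := min ε1 θ with hε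
  have hε0 : 0 < ε := lt_min hε10 hθ0
  have hεi : ∀ i ≤ m, ε ≤ κb i ∧ ε ≤ εb i ∧ ε ≤ εn i := fun i hi => by
    have h1 : ε ≤ ε1 := min_le_left _ _
    have := h1.trans (hε1 i hi)
    exact ⟨this.trans ((min_le_left _ _).trans (min_le_left _ _)),
      this.trans ((min_le_left _ _).trans (min_le_right _ _)), this.trans (min_le_right _ _)⟩
  have hns' : ∀ {α β s K C κ ε₁ : ℝ}, ε ≤ ε₁ → Ns G α β s K C κ ε₁ → Ns G α β s K C κ ε :=
    fun hle h p u v c w w' hp a1 a2 a3 a4 a5 a6 a7 => h p u v c w w' hp a1 a2 a3 a4 a5 (a6.trans hle) (a7.trans hle)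
  refine ⟨s, θ, ε, P, C, ?_⟩
  have ki : ∀ i ≤ m, IntervalIntegrable k volume (A i) (B i) := fun i hi =>
    ii_sub D.kint (D.memA hi) (D.memB hi)
  have g1 : ∀ᶠ μ in atTop, ∀ i ∈ Finset.range m, ∀ u v : ℝ → ℝ,
      Sol (A (i + 1)) (B (i + 1)) (fun t => μ * k t * G (u t)) u v →
      ε ≤ u (A (i + 1)) → -C ≤ v (A (i + 1)) → (∀ t ∈ Icc (A (i + 1)) (B (i + 1)), 0 ≤ u t) ∧ P < v (B (i + 1)) := by
    rw [eventually_all_finset]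
    intro i hi
    rw [Finset.mem_range] at hi
    exact neg_gain N (D.AB _ hi) (ki _ hi) D.k0 (D.kr i hi) hε0 hC0 hP0
  have g2 : ∀ᶠ μ in atTop, ∀ i ∈ Finset.range m, ∀ u v : ℝ → ℝ, Sol (A i) (B i) (fun t => μ * k t * G (u t)) u v →
      ε ≤ u (B i) → v (B i) ≤ P → v (A i) < -C := by
    rw [eventually_all_finset]
    intro i hi
    rw [Finset.mem_range] at hi
    exact neg_loss N (D.AB _ hi.le) (ki _ hi.le) D.k0 (D.kl i hi) hε0 hC0 hP0
  filter_upwards [g1, g2, eventually_ge_atTop (0 : ℝ)] with μ g1 g2 hμ0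
  refine ⟨hμ0, hθ0, fun i hi => hθs i hi.le, hε0, hC0, le_max_left _ _,
    fun i hi => (hP1 i hi.le).trans (le_max_right _ _), ?_, ?_, fun i hi => g1 i (Finset.mem_range.2 hi),
    fun i hi => g2 i (Finset.mem_range.2 hi), ?_⟩
  · intro i hi u v S h0 h1
    obtain ⟨x, y⟩ := hb i hi u v S h0 (h1.trans (hεi i hi.le).2.1)
    exact ⟨fun a b => (hεi i hi.le).1.trans (x a b), fun a b => (y a b).trans_lt (by linarith [hκb i])⟩
  · intro i hi u v S h0 h1 t ht
    obtain ⟨r, η, hW⟩ := D.W i hi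
    exact (hW.velo N S (D.ap i hi u v S h0 h1) t ht).trans (hC i hi.le)
  · intro q u₁ v₁ u₂ v₂ c w w' Q S1 S2 SW n1 n2 hsm hc hcu pat w0 w1
    have hp : ∀ t, 0 ≤ μ * k t := fun t => mul_nonneg hμ0 (D.k0 t)
    have hc0 : ∀ t ∈ Icc (A 0) (B m), 0 ≤ c t := fun t ht => by
      obtain ⟨ξ, _, h⟩ := hc t ht; rw [h]; exact N.nn ξ
    have key : ∀ i ≤ m, ∃ e ≠ 0, St (s i) (θc i)⁻¹ (6 ^ i * (2 * ℓ)) (e * w (B i)) (e * w' (B i)) (v₁ (B i)) ∧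
        0 < e * w (B i) := by
      intro i
      induction i with
      | zero =>
        intro hi
        obtain ⟨x1, x2, x3, x4⟩ := hns' (hεi 0 hi).2.2 ((hns 0 hi).1 rfl) _ u₁ v₁ c w w' hp (S1.onN D Q hi) (SW.onN D Q hi)
          (fun t ht => n1 t (D.AmemI hi ht)) (fun t ht => hc0 t (D.AmemI hi ht))
          (fun t ht => hcu t (D.AmemI hi ht)) (hsm 0 hi).1 (hsm 0 hi).2.1 ℓ (hlN 0 hi)
          (Or.inl ⟨w0.ge, by rw [w1]; norm_num, by rw [w0, w1]; linarith⟩)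
        refine ⟨1, one_ne_zero, ?_⟩
        simp only [one_mul, pow_zero]
        exact ⟨⟨x1, x2.le, x3.trans (by gcongr; linarith [hlN 0 hi]), x4⟩, x2⟩
      | succ i ih =>
        intro hi
        obtain ⟨e, he, st, -⟩ := ih (by omega)
        have hi' : i < m := hi
        have hIc : ∀ t ∈ Icc (B i) (B (i + 1)), t ∈ Icc (A 0) (B m) := fun t ht =>
          ⟨(D.memB hi'.le).1.trans ht.1, ht.2.trans (D.memB hi).2⟩
        obtain ⟨r, η₀, hW⟩ := D.W i hi'
        have hY : (6 : ℝ) ^ i * (2 * ℓ) ≤ Ym := by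
          rw [hYm]; gcongr; norm_num
        have hY1 : ℓ ≤ (6 : ℝ) ^ i * (2 * ℓ) := by
          have : (1 : ℝ) ≤ 6 ^ i := one_le_pow₀ (by norm_num)
          nlinarith
        have hint : (∫ t in B i..(A (i + 1)), H i t) * (η * (6 ^ i * (2 * ℓ) + ℓ)) < 1 / 2 := by
          calc _ ≤ X * (η * (Ym + ℓ)) := mul_le_mul (hX i hi'.le) (by gcongr) (by positivity) hX0.le
            _ = 1 / 4 := by rw [hη]; field_simp
            _ < 1 / 2 := by norm_num
        obtain ⟨e', he', st', hpos⟩ := un_step N hW.lt (D.AB _ hi) (hlP i hi') (hlN _ hi) hW.nn hW.int (hpi i hi').2 (hκ i)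
          (hns' (hεi _ hi).2.2 ((hns (i + 1) hi).2 i rfl)) hδ hη0.le hint hθ0.le (hθθ i hi'.le) hθδ (min_le_right _ _)
          (hθc i) (inv_mul_cancel₀ (hθc i).ne').ge hY1 hp (S1.onP D Q hi') (S2.onP D Q hi') (SW.onP D Q hi')
          (S1.onN D Q hi) (SW.onN D Q hi) (fun t ht => n1 t (hIc t ht)) (fun t ht => n2 t (hIc t ht))
          (hsm i hi'.le).2.1 (hsm i hi'.le).2.2 (hsm _ hi).1 (hsm _ hi).2.1 (fun t ht => hc t (hIc t ht))
          (fun t ht => hcu t (hIc t ht)) (pat i hi') he st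
        refine ⟨e', he', ?_, hpos⟩
        rw [pow_succ, mul_comm _ (6 : ℝ), mul_assoc]
        exact st'
    obtain ⟨e, he, _, hpos⟩ := key m le_rfl
    exact right_ne_zero_of_mul hpos.ne'

end


section
variable {m : ℕ} {A B : ℕ → ℝ} {H : ℕ → ℝ → ℝ} {k G G' : ℝ → ℝ} {L M : ℝ} {s : ℕ → ℝ} {θ ε P C μ : ℝ}
  {q u v u₂ v₂ : ℝ → ℝ}

/-- nonnegative Dirichlet solutions -/
structure DS (m : ℕ) (A B : ℕ → ℝ) (G q u v : ℝ → ℝ) : Prop where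
  S : Sol (A 0) (B m) (fun t => -(q t * G (u t))) u v
  ua : u (A 0) = 0
  ub : u (B m) = 0
  nn : ∀ t ∈ Icc (A 0) (B m), 0 ≤ u t

theorem DS.cls (X : DS m A B G q u v) (D : Dat m A B H k G G' L M) (g : Good m A B H k G G' s θ ε P C μ)
    (Q : Qw m A B H k μ q) (hv : 0 < v (A 0)) :
    (∀ i ≤ m, u (A i) < ε ∧ u (B i) ≤ ε) ∧
    ∀ i < m, v (B i) < θ ∨ |v (B i) - s i| < θ := by
  have hlt : A 0 < B m := (D.AB 0 (by omega)).trans_le (D.Bm' (by omega))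
  have hvel : ∀ i < m, ∀ t ∈ Icc (B i) (A (i + 1)), |v t| ≤ C := fun i hi =>
    g.vel i hi u v (X.S.onP D Q hi) (X.nn _ (D.memB hi.le)) (X.nn _ (D.memA (i := i + 1) hi))
  have hvB : ∀ i < m, |v (B i)| ≤ C := fun i hi => hvel i hi _ (left_mem_Icc.2 (D.BA hi).le)
  have hvA : ∀ i < m, |v (A (i + 1))| ≤ C := fun i hi => hvel i hi _ (right_mem_Icc.2 (D.BA hi).le)
  have hvb : v (B m) ≤ 0 := left_nonpos hlt (X.S.deriv (right_mem_Icc.2 hlt.le)) X.ub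
    fun t ht => X.S.pos_int D.N Q.int X.nn hv.ne' ht
  have c1 : ∀ i ≤ m, u (A i) < ε ∧ u (B i) ≤ ε := by
    intro i hi
    constructor
    · cases i with
      | zero => rw [X.ua]; exact g.ε0
      | succ j =>
        by_contra! h
        have := (g.gain j hi u v (X.S.onN D Q hi) h (abs_le.1 (hvA j hi)).1).2
        rcases Nat.lt_or_eq_of_le hi with h1 | h1
        · linarith [(abs_le.1 (hvB _ h1)).2, g.CP]
        · rw [h1] at this; linarith [g.C0, g.CP]
    · rcases Nat.lt_or_eq_of_le hi with h1 | h1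
      · by_contra! h
        have := g.loss i h1 u v (X.S.onN D Q hi) h.le ((abs_le.1 (hvB i h1)).2.trans g.CP)
        cases i with
        | zero => linarith [g.C0]
        | succ j => linarith [(abs_le.1 (hvA j (by omega))).1]
      · rw [h1, X.ub]; exact g.ε0.le
  refine ⟨c1, fun i hi => ?_⟩
  obtain ⟨b1, b2⟩ := g.b i hi u v (X.S.onP D Q hi) (X.nn _ (D.memB hi.le)) (c1 i hi.le).2
  by_contra! h
  obtain ⟨h1, h2⟩ := h
  rcases le_or_gt (v (B i)) (s i - θ) with h3 | h3
  · linarith [b1 h1 h3, (c1 (i + 1) hi).1]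
  · have : s i + θ ≤ v (B i) := by
      rcases le_abs.1 h2 with h4 | h4 <;> linarith
    linarith [b2 this ((abs_le.1 (hvB i hi)).2.trans g.CP), X.nn _ (D.memA (i := i + 1) hi)]

theorem DS.uniq (X : DS m A B G q u v) (X₂ : DS m A B G q u₂ v₂) (D : Dat m A B H k G G' L M)
    (g : Good m A B H k G G' s θ ε P C μ) (Q : Qw m A B H k μ q)
    (c1 : ∀ i ≤ m, u (A i) < ε ∧ u (B i) ≤ ε) (c2 : ∀ i ≤ m, u₂ (A i) < ε ∧ u₂ (B i) ≤ ε)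
    (pat : ∀ i < m, (v (B i) ≤ θ ∧ v₂ (B i) ≤ θ) ∨
      (|v (B i) - s i| ≤ θ ∧ |v₂ (B i) - s i| ≤ θ)) :
    v (A 0) = v₂ (A 0) ∧ ∀ t ∈ Icc (A 0) (B m), u t = u₂ t ∧ v t = v₂ t := by
  have h : v (A 0) = v₂ (A 0) := by
    by_contra hne
    have hne' : v (A 0) - v₂ (A 0) ≠ 0 := sub_ne_zero.2 hne
    obtain ⟨c, hc, hcu, SW⟩ := X.S.quot D.N X₂.S (v (A 0) - v₂ (A 0))⁻¹
    refine g.un q u v u₂ v₂ c _ _ Q X.S X₂.S SW X.nn X₂.nn (fun i hi => ⟨(c1 i hi).1.le, (c1 i hi).2, (c2 i hi).2⟩)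
      (fun t _ => hc t) (fun t ht => hcu t (X.nn t ht) (X₂.nn t ht)) (fun i hi => ?_) ?_ ?_ ?_
    · rcases pat i hi with h | ⟨h, h'⟩
      · exact Or.inl h
      · exact Or.inr ⟨h, h', by linarith [(abs_le.1 h).1, g.θs i hi]⟩
    · simp [X.ua, X₂.ua]
    · rw [neg_mul, ← sub_eq_add_neg, ← mul_sub, inv_mul_cancel₀ hne']
    · simp [X.ub, X₂.ub]
  refine ⟨h, fun t ht => ?_⟩
  have := X.S.dep D.N.lip X₂.S Q.int le_rfl ht
  rw [X.ua, X₂.ua, h] at this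
  simp only [sub_self, abs_zero, add_zero, mul_zero, abs_nonpos_iff, sub_eq_zero] at this
  exact this

theorem DS.nondeg (X : DS m A B G q u v) (D : Dat m A B H k G G' L M)
    (g : Good m A B H k G G' s θ ε P C μ) (Q : Qw m A B H k μ q) (hv : 0 < v (A 0)) {w w' : ℝ → ℝ}
    (SW : Sol (A 0) (B m) (fun t => -(q t * (G' (u t) * w t))) w w') (w0 : w (A 0) = 0) (w1 : w (B m) = 0) :
    ∀ t ∈ Icc (A 0) (B m), w t = 0 := by
  obtain ⟨c1, c2⟩ := X.cls D g Q hv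
  have h0 : w' (A 0) = 0 := by
    by_contra hne
    refine g.un q u v u v (fun t => G' (u t)) _ _ Q X.S X.S
      ((SW.smul (w' (A 0))⁻¹).congr (f₂ := fun t => -(q t * (G' (u t) * ((w' (A 0))⁻¹ * w t)))) (ae_of_all _ fun t _ => by ring)) X.nn X.nn
      (fun i hi => ⟨(c1 i hi).1.le, (c1 i hi).2, (c1 i hi).2⟩) (fun t _ => ⟨u t, left_mem_uIcc, rfl⟩) (fun t ht => ?_)
      (fun i hi => ?_) ?_ ?_ ?_
    · rcases (X.nn t ht).eq_or_lt with h | h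
      · simp [← h, D.N.z 0 le_rfl]
      · rw [mul_comm]; exact (D.N.s _ h).le
    · rcases c2 i hi with h | h
      · exact Or.inl ⟨h.le, h.le⟩
      · exact Or.inr ⟨h.le, h.le, by linarith [(abs_le.1 h.le).1, g.θs i hi]⟩
    · simp [w0]
    · exact inv_mul_cancel₀ hne
    · simp [w1]
  intro t ht
  refine (SW.zero_fwd (k := fun t => L * |q t|) (Q.int.abs.const_mul L)
    (fun t => mul_nonneg D.N.L0 (abs_nonneg _)) (ae_of_all _ fun t _ => ?_) w0 h0 ht).1
  rw [abs_neg, abs_mul, abs_mul, abs_of_nonneg (D.N.nn _)]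
  have := D.N.le (u t)
  nlinarith [mul_nonneg (abs_nonneg (q t)) (abs_nonneg (w t))]

theorem DS.zero (Q : Qw m A B H k μ q) (D : Dat m A B H k G G' L M) :
    DS m A B G q (fun _ => 0) (fun _ => 0) := by
  have hlt : A 0 < B m := (D.AB 0 (by omega)).trans_le (D.Bm' (by omega))
  refine ⟨⟨hlt.le, ?_, ?_, ?_⟩, rfl, rfl, fun _ _ => le_rfl⟩ <;> simp [D.N.z 0 le_rfl]

theorem DS.nontriv (X : DS m A B G q u v) (D : Dat m A B H k G G' L M)
    (g : Good m A B H k G G' s θ ε P C μ) (Q : Qw m A B H k μ q) (hv : 0 < v (A 0)) :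
    ∃ i < m, |v (B i) - s i| < θ := by
  obtain ⟨c1, c2⟩ := X.cls D g Q hv
  by_contra! h
  have := (X.uniq (DS.zero Q D) D g Q c1 (fun i _ => ⟨g.ε0, g.ε0.le⟩) fun i hi => Or.inl
    ⟨((c2 i hi).resolve_right (not_lt.2 (h i hi))).le, g.θ0.le⟩).1
  exact hv.ne' this
end


theorem first_root' {f : ℝ → ℝ} (hf : Continuous f) {β δ : ℝ} (hle : β ≤ δ) (h1 : 0 ≤ f β) (h2 : f δ ≤ 0) :
    ∃ x ∈ Icc β δ, f x = 0 ∧ ∀ d ∈ Icc β x, 0 ≤ f d := by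
  have hS : IsCompact (Icc β δ ∩ f ⁻¹' Iic 0) := isCompact_Icc.inter_right (isClosed_Iic.preimage hf)
  obtain ⟨x, ⟨hx, hx0⟩, hl⟩ := hS.exists_isLeast ⟨δ, right_mem_Icc.2 hle, h2⟩
  have hx0 : f x ≤ 0 := hx0
  have e : f x = 0 := by
    obtain ⟨y, hy, hy0⟩ := intermediate_value_Icc' hx.1 hf.continuousOn ⟨hx0, h1⟩
    have := hl ⟨⟨hy.1, hy.2.trans hx.2⟩, hy0.le⟩
    rw [le_antisymm this hy.2]; exact hy0
  refine ⟨x, hx, e, fun d hd => ?_⟩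
  by_contra! h
  have := hl ⟨⟨hd.1, hd.2.trans hx.2⟩, h.le⟩
  rw [le_antisymm hd.2 this, e] at h
  exact lt_irrefl _ h

theorem first_root {f : ℝ → ℝ} (hf : Continuous f) {β δ : ℝ} (h1 : 0 ≤ f β) (h2 : f δ ≤ 0) :
    ∃ x ∈ uIcc β δ, f x = 0 ∧ ∀ d ∈ uIcc β x, 0 ≤ f d := by
  rcases le_total β δ with h | h
  · obtain ⟨x, hx, a, b⟩ := first_root' hf h h1 h2
    refine ⟨x, by rwa [uIcc_of_le h], a, ?_⟩
    rwa [uIcc_of_le hx.1]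
  · obtain ⟨x, hx, a, b⟩ := first_root' (f := fun t => f (-t)) (hf.comp continuous_neg) (neg_le_neg h)
      (by simpa using h1) (by simpa using h2)
    refine ⟨-x, ?_, a, fun d hd => ?_⟩
    · rw [uIcc_of_ge h]; constructor <;> linarith [hx.1, hx.2]
    · rw [uIcc_of_ge (by linarith [hx.1])] at hd
      simpa using b (-d) ⟨by linarith [hd.2], by linarith [hd.1]⟩

section
variable {m : ℕ} {A B : ℕ → ℝ} {H : ℕ → ℝ → ℝ} {k G G' : ℝ → ℝ} {L M : ℝ} {s : ℕ → ℝ} {θ ε P C μ : ℝ}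
  {q : ℝ → ℝ}

theorem exist (D : Dat m A B H k G G' L M) (g : Good m A B H k G G' s θ ε P C μ) (Q : Qw m A B H k μ q)
    (e : ℕ → Prop) (he : ∃ i < m, e i) : ∃ u v, DS m A B G q u v ∧ 0 < v (A 0) ∧
      ∀ i < m, (e i → |v (B i) - s i| ≤ θ) ∧ (¬ e i → v (B i) ≤ θ) := by
  have hlt : A 0 < B m := (D.AB 0 (by omega)).trans_le (D.Bm' (by omega))
  have ex := fun d => exists_sol hlt.le Q.int D.N.lip 0 d
  choose U V S U0 V0 using ex
  have cont : ∀ t ∈ Icc (A 0) (B m), Continuous (fun d => U d t) ∧ Continuous (fun d => V d t) := by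
    intro t ht
    have key : ∀ d d', |U d t - U d' t| ≤ Sol.Bd (B m - A 0) (∫ s in A 0..(B m), L * |q s|) * |d - d'| ∧
        |V d t - V d' t| ≤ Sol.Bd (B m - A 0) (∫ s in A 0..(B m), L * |q s|) * |d - d'| := by
      intro d d'
      have := (S d).dep D.N.lip (S d') Q.int le_rfl ht
      simpa only [U0, V0, sub_self, abs_zero, zero_add] using this
    exact ⟨(LipschitzWith.of_dist_le' fun d d' => (key d d').1).continuous,
      (LipschitzWith.of_dist_le' fun d d' => (key d d').2).continuous⟩
  have qi : ∀ {x y}, x ∈ Icc (A 0) (B m) → y ∈ Icc (A 0) (B m) → IntervalIntegrable q volume x y :=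
    fun hx hy => ii_sub Q.int hx hy
  have mA0 : A 0 ∈ Icc (A 0) (B m) := left_mem_Icc.2 hlt.le
  have nnB : ∀ {i}, i ≤ m → ∀ {d}, 0 ≤ U d (B i) → ∀ t ∈ Icc (A 0) (B i), 0 ≤ U d t := by
    intro i hi d h t ht
    exact ((S d).sub le_rfl (D.memB hi).1 (D.memB hi).2).nonneg_of_end D.N (qi mA0 (D.memB hi)) (U0 d).ge h ht
  have hz : ∀ t ∈ Icc (A 0) (B m), U 0 t = 0 ∧ V 0 t = 0 := by
    intro t ht
    have := (S 0).lin_neg D.N Q.int (U0 0) (V0 0).le ht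
    simpa [V0] using this
  have hvn : ∀ {i}, i ≤ m → ∀ {d}, 0 ≤ d → U d (B i) = 0 → V d (B i) ≤ 0 := by
    intro i hi d hd h
    rcases hd.eq_or_lt with h0 | h0
    · rw [← h0]; exact (hz _ (D.memB hi)).2.le
    · have hAB : A 0 < B i := (D.A0 hi).trans_lt (D.AB i hi)
      have S' := (S d).sub le_rfl (D.memB hi).1 (D.memB hi).2
      exact left_nonpos hAB (S'.deriv (right_mem_Icc.2 hAB.le)) h fun t ht =>
        S'.pos_int D.N (qi mA0 (D.memB hi)) (nnB hi h.ge) (by rw [V0]; exact h0.ne') ht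
  have key : ∀ j ≤ m, ∃ α β : ℝ, (∀ d ∈ uIcc α β, 0 ≤ d ∧ 0 ≤ U d (B j) ∧
      ∀ i < j, (e i → |V d (B i) - s i| ≤ θ) ∧ (¬ e i → V d (B i) ≤ θ)) ∧ U α (B j) = 0 ∧ P ≤ V β (B j) := by
    intro j
    induction j with
    | zero =>
      intro hj
      have hP : 0 ≤ P := g.C0.le.trans g.CP
      have hpos : ∀ d, ∀ᵐ t, t ∈ Icc (A 0) (B 0) → 0 ≤ μ * k t * G (U d t) := fun d => ae_of_all _ fun t _ =>
        mul_nonneg (mul_nonneg g.μ0 (D.k0 t)) (D.N.G0 _)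
      refine ⟨0, P, fun d hd => ⟨?_, ?_, fun i hi => by omega⟩, (hz _ (D.memB hj)).1, ?_⟩
      · rw [uIcc_of_le hP] at hd; exact hd.1
      · rw [uIcc_of_le hP] at hd
        have := ((S d).onN D Q hj).tan_conv (hpos d) (left_mem_Icc.2 (D.AB 0 hj).le) (right_mem_Icc.2 (D.AB 0 hj).le)
        rw [U0, V0] at this
        nlinarith [D.AB 0 hj, hd.1]
      · have := ((S P).onN D Q hj).vmono (hpos P) (left_mem_Icc.2 (D.AB 0 hj).le) (right_mem_Icc.2 (D.AB 0 hj).le) (D.AB 0 hj).le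
        rwa [V0] at this
    | succ j ih =>
      intro hj
      obtain ⟨α, β, hI, hα, hβ⟩ := ih (by omega)
      have hj' : j < m := hj
      have mB := D.memB hj'.le
      have mB' := D.memB hj
      have mA' := D.memA hj
      have hsm : ∀ d ∈ uIcc α β, V d (B j) ≤ P → U d (B j) ≤ ε := by
        intro d hd hp
        by_contra! h
        have h1 := g.loss j hj' _ _ ((S d).onN D Q hj'.le) h.le hp
        obtain ⟨d0, dB, -⟩ := hI d hd
        have nn := nnB hj'.le dB
        cases j with
        | zero => rw [V0] at h1; linarith [g.C0]
        | succ l =>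
          have hBA := D.BA (i := l) (by omega)
          have hAB := D.AB (l + 1) (by omega)
          have := g.vel l (by omega) _ _ ((S d).onP D Q (by omega))
            (nn _ ⟨(D.memB (i := l) (by omega)).1, by linarith⟩) (nn _ ⟨(D.memA (i := l + 1) (by omega)).1, hAB.le⟩) _ (right_mem_Icc.2 hBA.le)
          linarith [(abs_le.1 this).1]
      have hgain : ∀ d ∈ uIcc α β, θ ≤ V d (B j) → V d (B j) ≤ s j - θ → 0 ≤ U d (B (j + 1)) ∧ P ≤ V d (B (j + 1)) := by
        intro d hd h1 h2
        obtain ⟨d0, dB, -⟩ := hI d hd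
        have hP := g.sP j hj'
        have hP' := g.θ0
        have h3 := (g.b j hj' _ _ ((S d).onP D Q hj') dB (hsm d hd (by linarith))).1 h1 h2
        have h4 := g.vel j hj' _ _ ((S d).onP D Q hj') dB (g.ε0.le.trans h3) _ (right_mem_Icc.2 (D.BA hj').le)
        have h5 := g.gain j hj' _ _ ((S d).onN D Q hj) h3 (abs_le.1 h4).1
        exact ⟨h5.1 _ (right_mem_Icc.2 (D.AB _ hj).le), h5.2.le⟩
      -- finishing
      have fin : ∀ d₁ ∈ uIcc α β, ∀ d₂ ∈ uIcc α β, (∀ d ∈ uIcc d₁ d₂, (e j → |V d (B j) - s j| ≤ θ) ∧ (¬ e j → V d (B j) ≤ θ)) →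
          0 ≤ U d₁ (B (j + 1)) → P ≤ V d₁ (B (j + 1)) → U d₂ (B (j + 1)) ≤ 0 →
          ∃ α β : ℝ, (∀ d ∈ uIcc α β, 0 ≤ d ∧ 0 ≤ U d (B (j + 1)) ∧
          ∀ i < j + 1, (e i → |V d (B i) - s i| ≤ θ) ∧ (¬ e i → V d (B i) ≤ θ)) ∧ U α (B (j + 1)) = 0 ∧ P ≤ V β (B (j + 1)) := by
        intro d₁ m1 d₂ m2 hp a1 a2 a3
        obtain ⟨x, hx, x0, hxx⟩ := first_root (cont _ mB').1 a1 a3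
        refine ⟨x, d₁, fun d hd => ?_, x0, a2⟩
        rw [uIcc_comm] at hd
        have h12 : d ∈ uIcc d₁ d₂ := uIcc_subset_uIcc left_mem_uIcc hx hd
        obtain ⟨y1, y2, y3⟩ := hI d (uIcc_subset_uIcc m1 m2 h12)
        refine ⟨y1, hxx d hd, fun i hi => ?_⟩
        rcases Nat.lt_or_eq_of_le (Nat.le_of_lt_succ hi) with h | h
        · exact y3 i h
        · rw [h]; exact hp d h12
      have hα0 := (hI α left_mem_uIcc)
      have hVα : V α (B j) ≤ 0 := hvn hj'.le hα0.1 hα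
      have hθs := g.θs j hj'
      have hθ0 := g.θ0
      have hsP := g.sP j hj'
      by_cases hej : e j
      · obtain ⟨d2, m2, z2, f2⟩ := first_root (f := fun d => (s j + θ) - V d (B j)) (continuous_const.sub (cont _ mB).2)
          (β := α) (δ := β) (by linarith) (by linarith)
        obtain ⟨d1, m1, z1, f1⟩ := first_root (f := fun d => V d (B j) - (s j - θ)) ((cont _ mB).2.sub continuous_const)
          (β := d2) (δ := α) (by linarith) (by linarith)
        have m1' : d1 ∈ uIcc α β := uIcc_subset_uIcc m2 left_mem_uIcc m1
        obtain ⟨b1, b2⟩ := hgain d1 m1' (by linarith) (by linarith)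
        refine fin d1 m1' d2 m2 (fun d hd => ⟨fun _ => ?_, fun h => absurd hej h⟩) b1 b2 ?_
        · rw [uIcc_comm] at hd
          have y1 := f1 d hd
          rw [uIcc_comm] at m1
          have y2 := f2 d (uIcc_subset_uIcc right_mem_uIcc m1 hd)
          rw [abs_le]; constructor <;> linarith
        · by_contra! h
          have h6 := nnB hj h.le (A (j + 1)) ⟨mA'.1, (D.AB _ hj).le⟩
          have h7 := hI d2 m2
          have h8 := (g.b j hj' _ _ ((S d2).onP D Q hj') h7.2.1 (hsm d2 m2 (by linarith))).2 (by linarith) (by linarith)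
          linarith
      · obtain ⟨d1, m1, z1, f1⟩ := first_root (f := fun d => θ - V d (B j)) (continuous_const.sub (cont _ mB).2)
          (β := α) (δ := β) (by linarith) (by linarith)
        obtain ⟨b1, b2⟩ := hgain d1 m1 (by linarith) (by linarith)
        refine fin d1 m1 α left_mem_uIcc (fun d hd => ⟨fun h => absurd h hej, fun _ => ?_⟩) b1 b2 ?_
        · rw [uIcc_comm] at hd
          linarith [f1 d hd]
        · have hBB : B j ≤ B (j + 1) := (D.BA hj').le.trans (D.AB _ hj).le
          have := (((S α).sub mB.1 hBB mB'.2).lin_neg D.N (qi mB mB') hα hVα (right_mem_Icc.2 hBB)).1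
          rw [this]
          exact mul_nonpos_of_nonpos_of_nonneg hVα (by linarith)
  obtain ⟨α, β, hI, hα, -⟩ := key m le_rfl
  obtain ⟨h1, h2, h3⟩ := hI α left_mem_uIcc
  refine ⟨U α, V α, ⟨S α, U0 α, hα, nnB le_rfl h2⟩, ?_, h3⟩
  rw [V0]
  refine h1.lt_of_ne fun h => ?_
  obtain ⟨i, hi, hei⟩ := he
  have := (h3 i hi).1 hei
  rw [← h, (hz _ (D.memB hi.le)).2] at this
  linarith [(abs_le.1 this).1, g.θs i hi, g.θ0]
end


theorem trunc {g : ℝ → ℝ} (hg_C1 : ContDiffOn ℝ 1 g (Set.Ici 0)) (hg0 : g 0 = 0)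
    (hg_pos : ∀ s > 0, 0 < g s) (hg_ext : ∀ s ≤ (0 : ℝ), g s = 0) (hg_s : ∀ s > (0 : ℝ), g s / s < deriv g s)
    (hg_zero : deriv g 0 = 0 ∧ Tendsto (fun s => g s / s) (nhdsWithin 0 (Set.Ioi 0)) (nhds 0))
    {R : ℝ} (hR : 0 < R) : ∃ G G' : ℝ → ℝ, ∃ L, Nl G G' L ∧ (∀ x ≤ R, G x = g x) ∧
      ∀ x, 0 ≤ x → x ≤ R → G' x = deriv g x := by
  set γ := derivWithin g (Ici 0) with hγ
  have hγc : ContinuousOn γ (Ici 0) := hg_C1.continuousOn_derivWithin (uniqueDiffOn_Ici 0) le_rfl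
  have hγp : ∀ x > 0, HasDerivAt g (γ x) x := fun x hx =>
    ((hg_C1.differentiableOn (by norm_num) x hx.le).hasDerivWithinAt).hasDerivAt (Ici_mem_nhds hx)
  have hγd : ∀ x > 0, γ x = deriv g x := fun x hx => (hγp x hx).deriv.symm
  have hγ0 : γ 0 = 0 := by
    have h1 : HasDerivWithinAt g 0 (Ici 0) 0 := by
      rw [hasDerivWithinAt_iff_tendsto_slope, Ici_sdiff_left]
      refine hg_zero.2.congr fun s => ?_
      simp [slope, hg0, div_eq_inv_mul]
    exact h1.derivWithin (uniqueDiffOn_Ici (0 : ℝ) 0 self_mem_Ici)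
  have hγs : ∀ x > 0, g x < x * γ x := fun x hx => by
    rw [hγd x hx, mul_comm]; exact (div_lt_iff₀ hx).1 (hg_s x hx)
  have hγn : ∀ x ≥ 0, 0 ≤ γ x := fun x hx => by
    rcases hx.eq_or_lt with h | h
    · rw [← h, hγ0]
    · have := hγs x h; have := hg_pos x h; by_contra! h3; nlinarith
  set G' : ℝ → ℝ := (fun z : Icc 0 R => γ z) ∘ projIcc 0 R hR.le with hG'
  have huc : UniformContinuous G' := by
    refine (CompactSpace.uniformContinuous_of_continuous ?_).comp (LipschitzWith.projIcc hR.le).uniformContinuous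
    exact (hγc.mono Icc_subset_Ici_self).domRestrict
  have hc : Continuous G' := huc.continuous
  have hG'm : ∀ x ∈ Icc 0 R, G' x = γ x := fun x hx => by simp [hG', projIcc_of_mem hR.le hx]
  have hG'l : ∀ x ≤ 0, G' x = 0 := fun x hx => by simp [hG', projIcc_of_le_left hR.le hx, hγ0]
  have hG'r : ∀ x ≥ R, G' x = γ R := fun x hx => by simp [hG', projIcc_of_right_le hR.le hx]
  obtain ⟨L, hL⟩ : ∃ L, ∀ x ∈ Icc 0 R, γ x ≤ L := by
    obtain ⟨x, hx, h⟩ := isCompact_Icc.exists_isMaxOn (nonempty_Icc.2 hR.le) (hγc.mono (Icc_subset_Ici_self : Icc 0 R ⊆ Ici 0))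
    exact ⟨γ x, fun y hy => h hy⟩
  set G : ℝ → ℝ := fun x => ∫ s in (0 : ℝ)..x, G' s with hG
  have hGl : ∀ x ≤ 0, G x = 0 := fun x hx => by
    have : EqOn G' (fun _ => (0 : ℝ)) (uIcc 0 x) := fun t ht => by
      rw [uIcc_of_ge hx] at ht; exact hG'l t ht.2
    simp only [hG]
    rw [intervalIntegral.integral_congr this]; simp
  have hGm : ∀ x ∈ Icc 0 R, G x = g x := fun x hx => by
    have : EqOn G' γ (uIcc 0 x) := fun t ht => by
      rw [uIcc_of_le hx.1] at ht; exact hG'm t ⟨ht.1, ht.2.trans hx.2⟩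
    simp only [hG]
    rw [intervalIntegral.integral_congr this, intervalIntegral.integral_eq_sub_of_hasDerivAt_of_le hx.1
      (hg_C1.continuousOn.mono Icc_subset_Ici_self) (fun t ht => hγp t ht.1), hg0, sub_zero]
    apply ContinuousOn.intervalIntegrable
    rw [uIcc_of_le hx.1]; exact hγc.mono Icc_subset_Ici_self
  have hGr : ∀ x ≥ R, G x = g R + (x - R) * γ R := fun x hx => by
    have : EqOn G' (fun _ => γ R) (uIcc R x) := fun t ht => by
      rw [uIcc_of_le hx] at ht; exact hG'r t ht.1
    rw [← hGm R ⟨hR.le, le_rfl⟩]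
    simp only [hG]
    rw [← intervalIntegral.integral_add_adjacent_intervals (hc.intervalIntegrable 0 R) (hc.intervalIntegrable R x),
      intervalIntegral.integral_congr this]
    simp
  have hle : ∀ x ≤ R, G x = g x := fun x hx => by
    rcases le_total x 0 with h | h
    · rw [hGl x h, hg_ext x h]
    · exact hGm x ⟨h, hx⟩
  refine ⟨G, G', L, ⟨fun x => hc.integral_hasStrictDerivAt 0 x |>.hasDerivAt, huc,
    fun x => hγn _ (projIcc 0 R hR.le x).2.1, fun x => hL _ (projIcc 0 R hR.le x).2, hGl, hG'l, ?_, ?_⟩, hle, ?_⟩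
  · intro x hx
    rcases le_total x R with h | h
    · rw [hle x h]; exact hg_pos x hx
    · rw [hGr x h]; have := hγn R hR.le; have := hg_pos R hR; nlinarith
  · intro x hx
    rcases le_total x R with h | h
    · rw [hle x h, hG'm x ⟨hx.le, h⟩]; exact hγs x hx
    · rw [hGr x h, hG'r x h]; linarith [hγs R hR]
  · intro x h0 hx
    rw [hG'm x ⟨h0, hx⟩]
    rcases h0.eq_or_lt with h | h
    · rw [← h, hγ0, hg_zero.1]
    · exact hγd x h

theorem mk_wt {p : ℝ → ℝ} {σ τ : ℝ} (hlt : σ < τ) (hp : ∀ t, 0 ≤ p t) (hi : IntervalIntegrable p volume σ τ)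
    (hs : ∀ᵐ t, t ∈ Icc σ τ → p t = p (σ + τ - t)) (hm : MonotoneOn p (Icc σ ((σ + τ) / 2)))
    (hn : ¬ ∀ᵐ t, t ∈ Icc σ τ → p t = 0) :
    ∃ H : ℝ → ℝ, (∃ r η, Wt H σ τ r η) ∧ ∀ᵐ t, t ∈ Icc σ τ → p t = H t := by
  set H : ℝ → ℝ := fun t => p (min t (σ + τ - t)) with hH
  have hl : ∀ t ≤ (σ + τ) / 2, H t = p t := fun t ht => by
    simp only [hH]; rw [min_eq_left (by linarith)]
  have hr : ∀ t ≥ (σ + τ) / 2, H t = p (σ + τ - t) := fun t ht => by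
    simp only [hH]; rw [min_eq_right (by linarith)]
  have hae : ∀ᵐ t, t ∈ Icc σ τ → p t = H t := by
    filter_upwards [hs] with t ht h
    rcases le_total t ((σ + τ) / 2) with h1 | h1
    · rw [hl t h1]
    · rw [hr t h1, ht h]
  refine ⟨H, ?_, hae⟩
  obtain ⟨t₀, ht₀, hpt⟩ : ∃ t₀ ∈ Ioo σ ((σ + τ) / 2), 0 < p t₀ := by
    by_contra! h
    apply hn
    have n1 : ∀ᵐ t : ℝ, t ≠ σ := by simp [ae_iff]
    have n2 : ∀ᵐ t : ℝ, t ≠ τ := by simp [ae_iff]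
    have n3 : ∀ᵐ t : ℝ, t ≠ (σ + τ) / 2 := by simp [ae_iff]
    filter_upwards [hae, n1, n2, n3] with t ht h1 h2 h3 hI
    rw [ht hI]
    rcases h3.lt_or_gt with h4 | h4
    · rw [hl t h4.le]; exact le_antisymm (h t ⟨hI.1.lt_of_ne h1.symm, h4⟩) (hp _)
    · rw [hr t h4.le]
      exact le_antisymm (h _ ⟨by linarith [hI.2.lt_of_ne h2], by linarith⟩) (hp _)
  refine ⟨min ((σ + τ) / 2 - t₀) ((τ - σ) / 4), p t₀, hlt, ?_, fun t => hp _, fun t => ?_, ?_,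
    lt_min (by linarith [ht₀.2]) (by linarith), min_le_right _ _, hpt, ?_⟩
  · apply hi.congr_ae
    rw [EventuallyEq, ae_restrict_iff' measurableSet_uIoc]
    filter_upwards [hae] with t ht h
    rw [uIoc_of_le hlt.le] at h
    exact ht (Ioc_subset_Icc_self h)
  · simp only [hH]; rw [min_comm]; congr 2; ring
  · intro x hx y hy hxy
    rw [hl x hx.2, hl y hy.2]; exact hm hx hy hxy
  · intro t ht
    have h1 := min_le_left ((σ + τ) / 2 - t₀) ((τ - σ) / 4)
    have h2 : t₀ ∈ Icc σ ((σ + τ) / 2) := Ioo_subset_Icc_self ht₀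
    rcases le_total t ((σ + τ) / 2) with h3 | h3
    · rw [hl t h3]; exact hm h2 ⟨by linarith [ht.1, h2.1], h3⟩ (by linarith [ht.1])
    · rw [hr t h3]; exact hm h2 ⟨by linarith [ht.2, h2.1], by linarith⟩ (by linarith [ht.2])

theorem int_pos_of {k : ℝ → ℝ} {x y : ℝ} (hxy : x ≤ y) (hk : ∀ t, 0 ≤ k t) (hi : IntervalIntegrable k volume x y)
    (hn : ¬ ∀ᵐ t, t ∈ Icc x y → k t = 0) : 0 < ∫ s in x..y, k s := by
  refine (intervalIntegral.integral_nonneg hxy fun t _ => hk t).lt_of_ne fun h => hn ?_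
  have := (intervalIntegral.integral_eq_zero_iff_of_le_of_nonneg_ae hxy (ae_of_all _ hk) hi).1 h.symm
  rw [EventuallyEq, ae_restrict_iff' measurableSet_Ioc] at this
  have n1 : ∀ᵐ t : ℝ, t ≠ x := by simp [ae_iff]
  filter_upwards [this, n1] with t h1 h2 h3
  exact h1 ⟨h3.1.lt_of_ne h2.symm, h3.2⟩

theorem IsCaraSol.sol {a b : ℝ} (hab : a ≤ b) {F : ℝ → ℝ → ℝ} {u u' : ℝ → ℝ} (h : IsCaraSol a b F u u') :
    Sol a b (fun t => -(F t (u t))) u u' := by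
  obtain ⟨h1, h2, h3⟩ := h
  have hev : ∀ t ∈ Icc a b, u' t = u' a + ∫ s in a..t, -(F s (u s)) := fun t ht => by
    rw [intervalIntegral.integral_neg, ← sub_eq_add_neg]; exact h3 t ht
  have hc : ContinuousOn u' (Icc a b) := by
    have := intervalIntegral.continuousOn_primitive_interval' h2.neg left_mem_uIcc
    rw [uIcc_of_le hab] at this
    exact (continuousOn_const.add this).congr hev
  refine ⟨hab, h2.neg, fun t ht => ?_, hev⟩
  rw [intervalIntegral.integral_eq_sub_of_hasDerivAt (f := u)]
  · ring
  · intro x hx; rw [uIcc_of_le ht.1] at hx; exact h1 x ⟨hx.1, hx.2.trans ht.2⟩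
  · apply ContinuousOn.intervalIntegrable
    rw [uIcc_of_le ht.1]; exact hc.mono (Icc_subset_Icc_right ht.2)

theorem Sol.cara {a b : ℝ} {F : ℝ → ℝ → ℝ} {u v : ℝ → ℝ} (S : Sol a b (fun t => -(F t (u t))) u v) :
    ∃ U V, IsCaraSol a b F U V ∧ (∀ t ∈ Icc a b, U t = u t) ∧ ∀ t ∈ Icc a b, V t = v t := by
  set V := IccExtend S.le ((Icc a b).domRestrict v) with hV
  have hVc : Continuous V := (S.cv.domRestrict).Icc_extend'
  have hVe : ∀ t ∈ Icc a b, V t = v t := fun t ht => by rw [hV, IccExtend_of_mem _ _ ht]; rfl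
  have hUe : ∀ t ∈ Icc a b, u a + ∫ s in a..t, V s = u t := fun t ht => by
    rw [S.eu t ht]
    congr 1
    apply intervalIntegral.integral_congr
    intro x hx
    rw [uIcc_of_le ht.1] at hx
    exact hVe x ⟨hx.1, hx.2.trans ht.2⟩
  refine ⟨fun t => u a + ∫ s in a..t, V s, V, ⟨fun t _ => ?_, ?_, fun t ht => ?_⟩, hUe, hVe⟩
  · exact (hVc.integral_hasStrictDerivAt a t).hasDerivAt.const_add _
  · refine S.int.neg.congr fun t ht => ?_
    rw [uIoc_of_le S.le] at ht
    simp only [Pi.neg_apply, neg_neg]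
    rw [hUe t (Ioc_subset_Icc_self ht)]
  · rw [hVe t ht, hVe a (left_mem_Icc.2 S.le), S.ev t ht, intervalIntegral.integral_neg, ← sub_eq_add_neg]
    congr 1
    apply intervalIntegral.integral_congr
    intro x hx
    rw [uIcc_of_le ht.1] at hx
    simp only
    rw [hUe x ⟨hx.1, hx.2.trans ht.2⟩]

theorem cover {m : ℕ} {A B : ℕ → ℝ} {t : ℝ} (h0 : A 0 ≤ t) : ∀ j ≤ m, t ≤ B j →
    (∃ i ≤ m, t ∈ Icc (A i) (B i)) ∨ ∃ i < m, t ∈ Icc (B i) (A (i + 1)) := by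
  intro j
  induction j with
  | zero => exact fun hj h => Or.inl ⟨0, hj, h0, h⟩
  | succ n ih =>
    intro hj h
    rcases le_total t (B n) with h1 | h1
    · exact ih (by omega) h1
    · rcases le_total t (A (n + 1)) with h2 | h2
      · exact Or.inr ⟨n, hj, h1, h2⟩
      · exact Or.inl ⟨n + 1, hj, h2, h⟩

theorem bdd {m : ℕ} {A B : ℕ → ℝ} {H : ℕ → ℝ → ℝ} {k G G' Γ q u v : ℝ → ℝ} {L M μ : ℝ} (D : Dat m A B H k G G' L M)
    (Q : Qw m A B H k μ q) (hμ : 0 ≤ μ) (hΓ : ∀ x, 0 ≤ Γ x)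
    (hap : ∀ i < m, ∀ u v : ℝ → ℝ, Sol (B i) (A (i + 1)) (fun t => -(H i t * Γ (u t))) u v →
      0 ≤ u (B i) → 0 ≤ u (A (i + 1)) → ∀ t ∈ Icc (B i) (A (i + 1)), 0 ≤ u t ∧ u t ≤ M)
    (X : DS m A B Γ q u v) : ∀ t ∈ Icc (A 0) (B m), u t ≤ M := by
  have hP : ∀ i < m, ∀ t ∈ Icc (B i) (A (i + 1)), u t ≤ M := fun i hi t ht =>
    (hap i hi u v (X.S.onP D Q hi) (X.nn _ (D.memB hi.le)) (X.nn _ (D.memA (i := i + 1) hi)) t ht).2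
  intro t ht
  rcases cover (m := m) (A := A) (B := B) ht.1 m le_rfl ht.2 with ⟨i, hi, hI⟩ | ⟨i, hi, hI⟩
  · refine ((X.S.onN D Q hi).le_max (ae_of_all _ fun t _ => mul_nonneg (mul_nonneg hμ (D.k0 t)) (hΓ _)) hI).trans
      (max_le ?_ ?_)
    · cases i with
      | zero => rw [X.ua]; exact D.M0.le
      | succ j => exact hP j hi _ (right_mem_Icc.2 (D.BA hi).le)
    · rcases Nat.lt_or_eq_of_le hi with h | h
      · exact hP i h _ (left_mem_Icc.2 (D.BA h).le)
      · rw [h, X.ub]; exact D.M0.le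
  · exact hP i hi t hI

theorem posW_nn (h : ℝ → ℝ) (t : ℝ) : 0 ≤ posW h t := by
  unfold posW; linarith [neg_abs_le (h t)]

theorem negW_nn (h : ℝ → ℝ) (t : ℝ) : 0 ≤ negW h t := by
  unfold negW; linarith [le_abs_self (h t)]

/-- final abstract form -/
theorem final_abs {m : ℕ} {A B : ℕ → ℝ} {H : ℕ → ℝ → ℝ} {k G G' g q : ℝ → ℝ} {L M μ θ ε P C : ℝ} {s : ℕ → ℝ}
    (D : Dat m A B H k G G' L M) (gd : Good m A B H k G G' s θ ε P C μ) (Q : Qw m A B H k μ q)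
    (hg : ∀ x, 0 ≤ g x)
    (hap : ∀ i < m, ∀ u v : ℝ → ℝ, Sol (B i) (A (i + 1)) (fun t => -(H i t * g (u t))) u v →
      0 ≤ u (B i) → 0 ≤ u (A (i + 1)) → ∀ t ∈ Icc (B i) (A (i + 1)), 0 ≤ u t ∧ u t ≤ M)
    (hGg : ∀ x ≤ M, G x = g x) (hG' : ∀ x, 0 ≤ x → x ≤ M → G' x = deriv g x) :
    ∃ v v' : Fin (2 ^ m - 1) → ℝ → ℝ,
        (∀ i, IsCaraSol (A 0) (B m) (fun s x => q s * g x) (v i) (v' i) ∧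
          v i (A 0) = 0 ∧ v i (B m) = 0 ∧ (∀ t ∈ Set.Ioo (A 0) (B m), 0 < v i t) ∧
          ∀ w w₁ : ℝ → ℝ, IsCaraSol (A 0) (B m) (fun s x => q s * deriv g (v i s) * x) w w₁ →
            w (A 0) = 0 → w (B m) = 0 → ∀ t ∈ Set.Icc (A 0) (B m), w t = 0) ∧
        (∀ i j, i ≠ j → ∃ t ∈ Set.Icc (A 0) (B m), v i t ≠ v j t) ∧
        (∀ u u₁ : ℝ → ℝ, IsCaraSol (A 0) (B m) (fun s x => q s * g x) u u₁ →
          u (A 0) = 0 → u (B m) = 0 → (∀ t ∈ Set.Ioo (A 0) (B m), 0 < u t) →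
          ∃ i, Set.EqOn u (v i) (Set.Icc (A 0) (B m))) := by
  have hlt : A 0 < B m := (D.AB 0 (by omega)).trans_le (D.Bm' (by omega))
  have hl := left_mem_Icc.2 hlt.le
  have hr := right_mem_Icc.2 hlt.le
  -- patterns
  have hcard : Fintype.card {e : Fin m → Bool // e ≠ fun _ => false} = 2 ^ m - 1 := by
    rw [Fintype.card_subtype_compl]; simp
  let φ := (Fintype.equivFinOfCardEq hcard).symm
  let pt : Fin (2 ^ m - 1) → ℕ → Prop := fun i l => ∃ h : l < m, (φ i).1 ⟨l, h⟩ = true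
  have hpt : ∀ i, ∃ l < m, pt i l := by
    intro i
    by_contra! h
    apply (φ i).2
    funext l
    by_contra hl
    exact h l.1 l.2 ⟨l.2, by simpa using hl⟩
  choose u v X hv hp using fun i => exist D gd Q (pt i) (hpt i)
  have hM : ∀ i, ∀ t ∈ Icc (A 0) (B m), u i t ≤ M := fun i => bdd D Q gd.μ0 D.N.G0 D.ap (X i)
  have Sg : ∀ i, Sol (A 0) (B m) (fun t => -((fun s x => q s * g x) t (u i t))) (u i) (v i) := fun i =>
    (X i).S.congr (ae_of_all _ fun t ht => by simp only; rw [hGg _ (hM i t ht)])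
  choose U V hU hUu hVv using fun i => Sol.cara (F := fun s x => q s * g x) (Sg i)
  refine ⟨U, V, fun i => ⟨hU i, ?_, ?_, fun t ht => ?_, fun w w₁ hw w0 w1 => ?_⟩, fun i j hij => ?_, ?_⟩
  · rw [hUu i _ hl]; exact (X i).ua
  · rw [hUu i _ hr]; exact (X i).ub
  · rw [hUu i _ (Ioo_subset_Icc_self ht)]
    exact (X i).S.pos_int D.N Q.int (X i).nn (hv i).ne' ht
  · refine (X i).nondeg D gd Q (hv i) ((hw.sol hlt.le).congr (ae_of_all _ fun t ht => ?_)) w0 w1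
    rw [hUu i t ht, hG' _ ((X i).nn t ht) (hM i t ht), mul_assoc]
  · by_contra! h
    have hne : (φ i).1 ≠ (φ j).1 := fun h' => hij (φ.injective (Subtype.ext h'))
    obtain ⟨l, hl'⟩ := Function.ne_iff.1 hne
    have hmB := D.memB l.2.le
    have hd : v i (B l) = v j (B l) := by
      refine (uniqueDiffOn_Icc hlt _ hmB).eq_deriv _ ((X i).S.deriv hmB) (((X j).S.deriv hmB).congr (fun t ht => ?_) ?_)
      · rw [← hUu i t ht, ← hUu j t ht, h t ht]
      · rw [← hUu i _ hmB, ← hUu j _ hmB, h _ hmB]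
    have main : ∀ i j, v i (B l) = v j (B l) → (φ i).1 l = true → (φ j).1 l = true := by
      intro i j hd h1
      by_contra h2
      have y1 := (hp i l l.2).1 ⟨l.2, h1⟩
      have y2 := (hp j l l.2).2 (fun ⟨_, h⟩ => h2 h)
      linarith [(abs_le.1 y1).1, gd.θs l l.2]
    apply hl'
    rw [Bool.eq_iff_iff]
    exact ⟨main i j hd, main j i hd.symm⟩
  · intro y y₁ hy ya yb ypos
    have Sy := hy.sol hlt.le
    have ynn : ∀ t ∈ Icc (A 0) (B m), 0 ≤ y t := fun t ht => by
      rcases ht.1.eq_or_lt with h | h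
      · rw [← h, ya]
      · rcases ht.2.eq_or_lt with h' | h'
        · rw [h', yb]
        · exact (ypos t ⟨h, h'⟩).le
    have yM := bdd D Q gd.μ0 hg hap ⟨Sy, ya, yb, ynn⟩
    have Y : DS m A B G q y y₁ := ⟨Sy.congr (ae_of_all _ fun t ht => by rw [hGg _ (yM t ht)]), ya, yb, ynn⟩
    have hy1 : 0 < y₁ (A 0) := by
      by_contra! h
      have hmid : (A 0 + B m) / 2 ∈ Ioo (A 0) (B m) := ⟨by linarith, by linarith⟩
      have := (Y.S.lin_neg D.N Q.int ya h (Ioo_subset_Icc_self hmid)).1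
      have h2 := ypos _ hmid
      nlinarith [hmid.1]
    obtain ⟨c1, c2⟩ := Y.cls D gd Q hy1
    classical
    let e : Fin m → Bool := fun l => decide (|y₁ (B l) - s l| < θ)
    have he : e ≠ fun _ => false := by
      obtain ⟨l, hl, h⟩ := Y.nontriv D gd Q hy1
      intro h'
      have := congrFun h' ⟨l, hl⟩
      simp [e] at this
      linarith
    refine ⟨φ.symm ⟨e, he⟩, fun t ht => ?_⟩
    set i := φ.symm ⟨e, he⟩ with hi
    have hφ : (φ i).1 = e := by rw [hi, Equiv.apply_symm_apply]
    rw [hUu i t ht]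
    refine ((Y.uniq (X i) D gd Q c1 ((X i).cls D gd Q (hv i)).1 fun l hl => ?_).2 t ht).1
    by_cases hc : |y₁ (B l) - s l| < θ
    · refine Or.inr ⟨hc.le, (hp i l hl).1 ⟨hl, ?_⟩⟩
      rw [hφ]; simpa [e] using hc
    · refine Or.inl ⟨((c2 l hl).resolve_right hc).le, (hp i l hl).2 fun ⟨_, h⟩ => hc ?_⟩
      rw [hφ] at h; simpa [e] using h

/-- **Exact multiplicity.** Under `(g₊)`, `(g_s)`, `(g₀)`, `(g_∞)`
and `(h*)` with, on each positivity interval, `h⁺` of bounded variation,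
symmetric and non-decreasing on the first half, there exists `μ** > 0` such that
for every `μ > μ**` the problem `(D_μ)` has exactly `2^m - 1` positive solutions,
all non-degenerate. -/
theorem exact_multiplicity
    (a b : ℝ) (hab : a < b)
    (g : ℝ → ℝ)
    (hg_C1 : ContDiffOn ℝ 1 g (Set.Ici 0))
    (hg0 : g 0 = 0)
    (hg_pos : ∀ s > 0, 0 < g s)
    (hg_ext : ∀ s ≤ (0 : ℝ), g s = 0)
    (hg_s : ∀ s > (0 : ℝ), g s / s < deriv g s)
    (hg_zero : deriv g 0 = 0 ∧
      Tendsto (fun s => g s / s) (nhdsWithin 0 (Set.Ioi 0)) (nhds 0))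
    (hg_infty : Tendsto (fun s => g s / s) atTop atTop)
    (h : ℝ → ℝ)
    (hh_int : IntegrableOn h (Set.Icc a b))
    (m : ℕ) (hm : 1 ≤ m)
    (σ τ : ℕ → ℝ)
    (hτ0 : τ 0 = a) (hσlast : σ (m + 1) = b)
    (h0 : τ 0 ≤ σ 1) (hlast : τ m ≤ σ (m + 1))
    (hστ : ∀ i, 1 ≤ i → i ≤ m → σ i < τ i)
    (hτσ : ∀ i, 1 ≤ i → i < m → τ i < σ (i + 1))
    (hpos : ∀ i, 1 ≤ i → i ≤ m →
      (∀ᵐ t ∂(volume.restrict (Set.Icc (σ i) (τ i))), 0 ≤ h t) ∧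
      ¬ (∀ᵐ t ∂(volume.restrict (Set.Icc (σ i) (τ i))), h t = 0))
    (hneg : ∀ i, i ≤ m →
      (∀ᵐ t ∂(volume.restrict (Set.Icc (τ i) (σ (i + 1)))), h t ≤ 0) ∧
      (τ i < σ (i + 1) →
        ¬ (∀ᵐ t ∂(volume.restrict (Set.Icc (τ i) (σ (i + 1)))), h t = 0)))
    (hσleft : ∀ i, 1 ≤ i → i ≤ m → ∀ δ > (0 : ℝ),
      ¬ (∀ᵐ t ∂(volume.restrict (Set.Icc (σ i - δ) (σ i) ∩ Set.Icc a b)), h t = 0))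
    (hτright : ∀ i, 1 ≤ i → i ≤ m → ∀ δ > (0 : ℝ),
      ¬ (∀ᵐ t ∂(volume.restrict (Set.Icc (τ i) (τ i + δ) ∩ Set.Icc a b)), h t = 0))
    -- on each positivity interval, `h⁺` is BV, symmetric and non-decreasing on
    -- the first half `[σ i, ζ i]` with `ζ i = (σ i + τ i)/2`:
    (hBV : ∀ i, 1 ≤ i → i ≤ m → BoundedVariationOn (posW h) (Set.Icc (σ i) (τ i)))
    (hsymm : ∀ i, 1 ≤ i → i ≤ m →
      ∀ᵐ t ∂(volume.restrict (Set.Icc (σ i) (τ i))), posW h t = posW h (σ i + τ i - t))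
    (hmono : ∀ i, 1 ≤ i → i ≤ m →
      MonotoneOn (posW h) (Set.Icc (σ i) ((σ i + τ i) / 2))) :
    ∃ μss > (0 : ℝ), ∀ μ > μss,
      ∃ v v' : Fin (2 ^ m - 1) → ℝ → ℝ,
        (∀ i, IsCaraSol a b (fun s x => (posW h s - μ * negW h s) * g x) (v i) (v' i) ∧
          v i a = 0 ∧ v i b = 0 ∧ (∀ t ∈ Set.Ioo a b, 0 < v i t) ∧
          NonDegenerate a b h μ g (v i)) ∧
        (∀ i j, i ≠ j → ∃ t ∈ Set.Icc a b, v i t ≠ v j t) ∧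
        (∀ u u₁ : ℝ → ℝ,
          IsCaraSol a b (fun s x => (posW h s - μ * negW h s) * g x) u u₁ →
          u a = 0 → u b = 0 → (∀ t ∈ Set.Ioo a b, 0 < u t) →
          ∃ i, Set.EqOn u (v i) (Set.Icc a b)) := by
  -- geometry
  have hstrip : ∀ x : ℝ, ∀ s : Set ℝ, s ⊆ {x} → ∀ᵐ t ∂(volume.restrict s), h t = 0 := by
    intro x s hs
    have : volume s = 0 := measure_mono_null hs (by simp)
    rw [Measure.restrict_eq_zero.2 this]; simp
  have hσ1 : a < σ 1 := by
    rw [hτ0] at h0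
    refine h0.lt_of_ne fun he => hσleft 1 le_rfl hm 1 one_pos (hstrip a _ ?_)
    rintro t ⟨⟨_, h1⟩, h2, _⟩
    exact le_antisymm (he ▸ h1) h2
  have hτm : τ m < b := by
    rw [hσlast] at hlast
    refine hlast.lt_of_ne fun he => hτright m hm le_rfl 1 one_pos (hstrip b _ ?_)
    rintro t ⟨⟨h1, _⟩, _, h2⟩
    exact le_antisymm h2 (he ▸ h1)
  have AB : ∀ i ≤ m, τ i < σ (i + 1) := by
    intro i hi
    rcases Nat.eq_zero_or_pos i with rfl | h1
    · rw [hτ0]; exact hσ1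
    · rcases hi.lt_or_eq with h2 | rfl
      · exact hτσ i h1 h2
      · rw [hσlast]; exact hτm
  have mA : ∀ i ≤ m, a ≤ τ i := by
    intro i
    induction i with
    | zero => intro _; rw [hτ0]
    | succ i ih =>
      intro hi
      linarith [ih (by omega), AB i (by omega), hστ (i + 1) (by omega) hi]
  have mB : ∀ j i, i + j = m → σ (i + 1) ≤ b := by
    intro j
    induction j with
    | zero => intro i hi; rw [← hσlast]; simp at hi; rw [hi]
    | succ j ih =>
      intro i hi
      linarith [ih (i + 1) (by omega), AB (i + 1) (by omega), hστ (i + 1) (by omega) (by omega)]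
  have mB : ∀ i ≤ m, σ (i + 1) ≤ b := fun i hi => mB (m - i) i (by omega)
  -- integrability
  have hii : IntervalIntegrable h volume a b := (intervalIntegrable_iff_integrableOn_Icc_of_le hab.le).2 hh_int
  have pint : IntervalIntegrable (posW h) volume a b := (hii.abs.div_const 2).add (hii.div_const 2)
  have nint : IntervalIntegrable (negW h) volume a b := (hii.abs.div_const 2).sub (hii.div_const 2)
  have sub : ∀ {p : ℝ → ℝ}, IntervalIntegrable p volume a b → ∀ {x y}, a ≤ x → x ≤ y → y ≤ b →
      IntervalIntegrable p volume x y := fun hp x y h1 h2 h3 => hp.mono_set (by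
    rw [uIcc_of_le h2, uIcc_of_le hab.le]; exact Icc_subset_Icc h1 h3)
  have hp' : ∀ i < m, ∀ᵐ t, t ∈ Icc (σ (i + 1)) (τ (i + 1)) → 0 ≤ h t := fun i hi =>
    (ae_restrict_iff' measurableSet_Icc).1 (hpos (i + 1) (by omega) (by omega)).1
  have hn' : ∀ i ≤ m, ∀ᵐ t, t ∈ Icc (τ i) (σ (i + 1)) → h t ≤ 0 := fun i hi =>
    (ae_restrict_iff' measurableSet_Icc).1 (hneg i hi).1
  -- weights
  have hw : ∀ i, ∃ H : ℝ → ℝ, ∃ r η : ℝ, i < m → Wt H (σ (i + 1)) (τ (i + 1)) r η ∧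
      ∀ᵐ t, t ∈ Icc (σ (i + 1)) (τ (i + 1)) → posW h t = H t := by
    intro i
    by_cases hi : i < m
    · have hlt := hστ (i + 1) (by omega) hi
      obtain ⟨H, ⟨r, η, hW⟩, hH⟩ := mk_wt (p := posW h) hlt (posW_nn h)
        (sub pint ((mA i hi.le).trans (AB i hi.le).le) hlt.le ((AB (i + 1) hi).le.trans (mB (i + 1) hi)))
        ((ae_restrict_iff' measurableSet_Icc).1 (hsymm (i + 1) (by omega) hi))
        (hmono (i + 1) (by omega) hi) (fun hz => (hpos (i + 1) (by omega) hi).2 (by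
          rw [ae_restrict_iff' measurableSet_Icc]
          filter_upwards [hz, hp' i hi] with t h1 h2 ht
          have := h1 ht
          simp only [posW, abs_of_nonneg (h2 ht)] at this
          linarith))
      exact ⟨H, r, η, fun _ => ⟨hW, hH⟩⟩
    · exact ⟨0, 0, 0, fun h => absurd h hi⟩
  choose H r η hH using hw
  -- a priori constants
  obtain ⟨K, hK0, hK⟩ := fin_max (fun i => 16 / (r i * η i * (τ (i + 1) - σ (i + 1))) + 1) m
  have hK' : ∀ i < m, 16 < K * (r i * η i * (τ (i + 1) - σ (i + 1))) := by
    intro i hi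
    have W := (hH i hi).1
    have h1 : 0 < r i * η i * (τ (i + 1) - σ (i + 1)) := mul_pos (mul_pos W.r0 W.η0) (by linarith [W.lt])
    have h2 := hK i hi.le
    rw [← div_lt_iff₀ h1]; linarith
  obtain ⟨s0, hs0⟩ := eventually_atTop.1 (hg_infty.eventually_ge_atTop K)
  set sK := max s0 1 with hsK
  have sK0 : 0 < sK := lt_of_lt_of_le one_pos (le_max_right _ _)
  have hgK : ∀ s ≥ sK, K * s ≤ g s := fun s hs => by
    have := hs0 s ((le_max_left _ _).trans hs)
    rwa [le_div_iff₀ (sK0.trans_le hs)] at this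
  have hgn : ∀ x, 0 ≤ g x := fun x => by
    rcases le_or_gt x 0 with h | h
    · rw [hg_ext x h]
    · exact (hg_pos x h).le
  obtain ⟨G, G', L, N, hGg, hG'⟩ := trunc hg_C1 hg0 hg_pos hg_ext hg_s hg_zero (R := 4 * sK) (by linarith)
  have hGK : ∀ s ≥ sK, K * s ≤ G s := fun s hs => by
    have h1 := N.ratio sK0 hs
    have h2 := hgK sK le_rfl
    rw [hGg sK (by linarith)] at h1
    have h3 : K * s * sK ≤ G s * sK := by
      refine le_trans ?_ h1
      have := mul_le_mul_of_nonneg_right h2 (sK0.le.trans hs)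
      linarith
    exact le_of_mul_le_mul_right h3 sK0
  have null : ∀ x y, ∀ i ≤ m, τ i ≤ x → y ≤ σ (i + 1) → (∀ᵐ t, t ∈ Icc x y → negW h t = 0) →
      ∀ᵐ t, t ∈ Icc x y → h t = 0 := by
    intro x y i hi hx hy hz
    filter_upwards [hz, hn' i hi] with t h1 h2 ht
    have h3 := h1 ht
    simp only [negW, abs_of_nonpos (h2 ⟨hx.trans ht.1, ht.2.trans hy⟩)] at h3
    linarith
  have D : Dat m τ (fun i => σ (i + 1)) H (negW h) G G' L (4 * sK) := by
    refine ⟨N, by linarith, AB, fun i hi => ⟨_, _, (hH i hi).1⟩, fun i hi u v S h1 h2 =>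
      (hH i hi).1.apriori (hK' i hi) sK0 N.G0 hGK S h1 h2, ?_, negW_nn h, ?_, ?_⟩
    · simp only [hτ0, hσlast]; exact nint
    · intro i hi δ hδ hle
      have hle' : τ (i + 1) + δ ≤ σ (i + 1 + 1) := hle
      have b1 := mB (i + 1) hi
      have a1 := mA (i + 1) hi
      refine int_pos_of (by linarith) (negW_nn h) (sub nint a1 (by linarith) (by linarith)) fun hz => ?_
      apply hτright (i + 1) (by omega) hi δ hδ
      rw [inter_eq_left.2 (Icc_subset_Icc a1 (by linarith)), ae_restrict_iff' measurableSet_Icc]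
      exact null _ _ (i + 1) hi le_rfl hle' hz
    · intro i hi δ hδ hle
      have hle' : τ i ≤ σ (i + 1) - δ := hle
      have b1 := mB i hi.le
      have a1 := mA i hi.le
      refine int_pos_of (by linarith) (negW_nn h) (sub nint (by linarith) (by linarith) b1) fun hz => ?_
      apply hσleft (i + 1) (by omega) hi δ hδ
      rw [inter_eq_left.2 (Icc_subset_Icc (by linarith) b1), ae_restrict_iff' measurableSet_Icc]
      exact null _ _ i hi.le hle' le_rfl hz
  obtain ⟨s, θ, ε, P, C, hgood⟩ := D.consts
  obtain ⟨μ₀, hμ₀⟩ := eventually_atTop.1 hgood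
  refine ⟨max μ₀ 1, lt_of_lt_of_le one_pos (le_max_right _ _), fun μ hμ => ?_⟩
  have gd := hμ₀ μ ((le_max_left _ _).trans hμ.le)
  have Q : Qw m τ (fun i => σ (i + 1)) H (negW h) μ (fun t => posW h t - μ * negW h t) := by
    refine ⟨?_, fun i hi => ?_, fun i hi => ?_⟩
    · simp only [hτ0, hσlast]; exact pint.sub (nint.const_mul μ)
    · filter_upwards [(hH i hi).2, hp' i hi] with t h1 h2 ht
      rw [← h1 ht]
      simp only [negW, abs_of_nonneg (h2 ht)]
      ring
    · filter_upwards [hn' i hi] with t h2 ht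
      simp only [posW, negW, abs_of_nonpos (h2 ht)]
      ring
  have F := final_abs D gd Q hgn (fun i hi u v S h1 h2 =>
      (hH i hi).1.apriori (hK' i hi) sK0 hgn hgK S h1 h2) hGg hG'
  simp only [hτ0, hσlast] at F
  exact F
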